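/- Let B be the open unit ball in ℝ^n. For every N > 0, c̄ > 0, d̄ > 0, τ > 0, α ∈ (0,1) and M > 0 there exists C > 0 with the following property. Suppose f, g : B → ℝ are smooth convex functions with D²g(x) positive definite for all x ∈ B, satisfying tr((D²g)^{−1} D²f) + d·det(D²f)/det(D²g) = c on B, where 0 ≤ c ≤ c̄ and 0 ≤ d ≤ d̄ are constants; suppose inf_B g = g(0) = 0, sup_B |g| ≤ N, D²f(x) > τ·Id for all x ∈ B, and ‖f‖_{C^{3,α}(B)} ≤ M. Then sup over x in the ball of radius 1/2 of the entries |∂_i∂_j g(x)| is at most C. -/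

import Mathlib

/-- The Hessian matrix `D²f(x)` of `f : ℝⁿ → ℝ` at `x`, with entries `∂_i ∂_j f(x)`. -/
noncomputable def Hess (n : ℕ) (f : EuclideanSpace ℝ (Fin n) → ℝ)
    (x : EuclideanSpace ℝ (Fin n)) : Matrix (Fin n) (Fin n) ℝ :=
  Matrix.of fun i j =>
    iteratedFDeriv ℝ 2 f x ![EuclideanSpace.single i 1, EuclideanSpace.single j 1]

lemma abs_sum_fin_le {n : ℕ} (f : Fin n → ℝ) (B : ℝ) (h : ∀ i, |f i| ≤ B) :
    |∑ i, f i| ≤ n * B := by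
  calc |∑ i, f i| ≤ ∑ i, |f i| := Finset.abs_sum_le_sum_abs _ _
    _ ≤ ∑ _i : Fin n, B := Finset.sum_le_sum fun i _ => h i
    _ = n * B := by simp

open scoped MatrixOrder in
lemma exists_sqrt_matrix {n : ℕ} (H : Matrix (Fin n) (Fin n) ℝ) (hH : H.PosSemidef) :
    ∃ L : Matrix (Fin n) (Fin n) ℝ, L.transpose = L ∧ L * L = H := by
  refine ⟨CFC.sqrt H, ?_, CFC.sqrt_mul_sqrt_self H hH.nonneg⟩
  have := (Matrix.nonneg_iff_posSemidef.1 (CFC.sqrt_nonneg H)).isHermitian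
  rwa [Matrix.IsHermitian, Matrix.conjTranspose_eq_transpose_of_trivial] at this

/-- A quadratic form bound for `a ≥ τ`. -/
lemma quad_ge {n : ℕ} {τ : ℝ} {a : Matrix (Fin n) (Fin n) ℝ}
    (ha : (a - τ • (1 : Matrix (Fin n) (Fin n) ℝ)).PosSemidef) (x : Fin n → ℝ) :
    τ * ∑ i, x i ^ 2 ≤ ∑ i, ∑ j, a i j * x i * x j := by
  have h := ha.dotProduct_mulVec_nonneg x
  rw [Matrix.sub_mulVec, dotProduct_sub, Matrix.smul_mulVec, Matrix.one_mulVec] at h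
  simp only [dotProduct, Matrix.mulVec, star_trivial, Pi.smul_apply, smul_eq_mul,
    Finset.mul_sum] at h
  rw [Finset.mul_sum]
  have e1 : ∑ i, τ * x i ^ 2 = ∑ i, x i * (τ * x i) := by
    refine Finset.sum_congr rfl fun i _ => ?_; ring
  have e2 : ∑ i, ∑ j, a i j * x i * x j = ∑ i, ∑ j, x i * (a i j * x j) := by
    refine Finset.sum_congr rfl fun i _ => Finset.sum_congr rfl fun j _ => ?_; ring
  rw [e1, e2]; linarith

/-- Entries of the inverse of `a ≥ τ` are bounded by `1/τ`. -/
lemma inv_entry_le {n : ℕ} {τ : ℝ} (hτ : 0 < τ) {a : Matrix (Fin n) (Fin n) ℝ}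
    (ha : (a - τ • (1 : Matrix (Fin n) (Fin n) ℝ)).PosSemidef) (hu : IsUnit a.det) (i j : Fin n) :
    |a⁻¹ i j| ≤ 1 / τ := by
  have h := quad_ge ha (fun i => a⁻¹ i j)
  have h1 : ∑ i, ∑ k, a i k * a⁻¹ i j * a⁻¹ k j = a⁻¹ j j := by
    have : ∀ i, ∑ k, a i k * a⁻¹ i j * a⁻¹ k j = a⁻¹ i j * (if i = j then 1 else 0) := by
      intro i
      have h2 : (a * a⁻¹) i j = if i = j then 1 else 0 := by
        rw [Matrix.mul_nonsing_inv _ hu, Matrix.one_apply]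
      rw [← h2, Matrix.mul_apply, Finset.mul_sum]
      refine Finset.sum_congr rfl fun k _ => ?_; ring
    simp_rw [this]; simp
  rw [h1] at h
  have hs : ∀ i, a⁻¹ i j ^ 2 ≤ ∑ i, a⁻¹ i j ^ 2 := fun i =>
    Finset.single_le_sum (f := fun i => a⁻¹ i j ^ 2) (fun _ _ => sq_nonneg _) (Finset.mem_univ i)
  set s := Real.sqrt (∑ i, a⁻¹ i j ^ 2) with hsdef
  have hs0 : 0 ≤ ∑ i, a⁻¹ i j ^ 2 := Finset.sum_nonneg fun _ _ => sq_nonneg _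
  have hss : s ^ 2 = ∑ i, a⁻¹ i j ^ 2 := Real.sq_sqrt hs0
  have hab : ∀ i, |a⁻¹ i j| ≤ s := fun i => Real.abs_le_sqrt (hs i)
  have hsn : 0 ≤ s := Real.sqrt_nonneg _
  rw [← hss] at h
  have : τ * s ≤ 1 := by
    rcases hsn.eq_or_lt with h0 | h0
    · rw [← h0]; simp
    · have : τ * s ^ 2 ≤ s := h.trans ((le_abs_self _).trans (hab j))
      nlinarith
  refine (hab i).trans ?_
  rw [le_div_iff₀ hτ]; linarith

lemma trace_mul_nonneg' {n : ℕ} {H a : Matrix (Fin n) (Fin n) ℝ} (hH : H.PosSemidef)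
    (ha : a.PosSemidef) : 0 ≤ (H * a).trace := by
  obtain ⟨L, hL, rfl⟩ := exists_sqrt_matrix H hH
  rw [Matrix.mul_assoc, Matrix.trace_mul_comm]
  have := (ha.mul_mul_conjTranspose_same L).trace_nonneg
  rwa [Matrix.conjTranspose_eq_transpose_of_trivial, hL] at this

/-- Entries of PSD matrices are bounded by the trace. -/
lemma psd_entry_le_trace {n : ℕ} {H : Matrix (Fin n) (Fin n) ℝ} (hH : H.PosSemidef)
    (i j : Fin n) : |H i j| ≤ H.trace := by
  obtain ⟨L, hL, rfl⟩ := exists_sqrt_matrix H hH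
  have hsym : ∀ i j, L i j = L j i := fun i j => by
    conv_lhs => rw [← hL]
    rfl
  have hd : ∀ i, (L * L) i i = ∑ k, L i k ^ 2 := by
    intro i; rw [Matrix.mul_apply]
    refine Finset.sum_congr rfl fun k _ => ?_
    rw [hsym k i]; ring
  have htr : (L * L).trace = ∑ i, ∑ k, L i k ^ 2 := by
    rw [Matrix.trace]; exact Finset.sum_congr rfl fun i _ => hd i
  have hle : ∀ i, ∑ k, L i k ^ 2 ≤ (L * L).trace := fun i => by
    rw [htr]
    exact Finset.single_le_sum (f := fun i => ∑ k, L i k ^ 2)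
      (fun _ _ => Finset.sum_nonneg fun _ _ => sq_nonneg _) (Finset.mem_univ i)
  rw [Matrix.mul_apply]
  calc |∑ k, L i k * L k j| ≤ ∑ k, |L i k * L k j| := Finset.abs_sum_le_sum_abs _ _
    _ ≤ ∑ k, (L i k ^ 2 + L j k ^ 2) / 2 := by
        refine Finset.sum_le_sum fun k _ => ?_
        rw [hsym k j, abs_mul]
        nlinarith [sq_nonneg (|L i k| - |L j k|), sq_abs (L i k), sq_abs (L j k)]
    _ = (∑ k, L i k ^ 2 + ∑ k, L j k ^ 2) / 2 := by
        rw [← Finset.sum_div, Finset.sum_add_distrib]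
    _ ≤ _ := by linarith [hle i, hle j]

lemma sqrt_entry_le {n : ℕ} {L : Matrix (Fin n) (Fin n) ℝ} (hL : L.transpose = L) {Λ : ℝ}
    (hΛ : ∀ i j, |(L * L) i j| ≤ Λ) (i j : Fin n) : L i j ^ 2 ≤ Λ := by
  have hsym : ∀ i j, L i j = L j i := fun i j => by
    conv_lhs => rw [← hL]
    rfl
  have := (le_abs_self _).trans (hΛ i i)
  rw [Matrix.mul_apply] at this
  refine le_trans ?_ this
  have h : L i j ^ 2 = L i j * L j i := by rw [hsym j i]; ring
  rw [h]
  refine Finset.single_le_sum (f := fun k => L i k * L k i) (fun k _ => ?_) (Finset.mem_univ j)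
  show 0 ≤ L i k * L k i
  rw [hsym k i]; exact mul_self_nonneg (L i k)

lemma det_adj_bound (n : ℕ) (Λ : ℝ) : ∃ C > 0, ∀ H : Matrix (Fin n) (Fin n) ℝ,
    (∀ i j, |H i j| ≤ Λ) → |H.det| ≤ C ∧ ∀ i j, |H.adjugate i j| ≤ C := by
  have hK : IsCompact (Set.pi Set.univ fun _ : Fin n => Set.pi Set.univ fun _ : Fin n =>
      Set.Icc (-Λ) Λ : Set (Fin n → Fin n → ℝ)) :=
    isCompact_univ_pi fun _ => isCompact_univ_pi fun _ => isCompact_Icc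
  have hmem : ∀ H : Matrix (Fin n) (Fin n) ℝ, (∀ i j, |H i j| ≤ Λ) →
      H ∈ (Set.pi Set.univ fun _ : Fin n => Set.pi Set.univ fun _ : Fin n =>
      Set.Icc (-Λ) Λ : Set (Fin n → Fin n → ℝ)) := by
    intro H h i _ j _
    exact abs_le.1 (h i j)
  have c1 : Continuous fun H : Matrix (Fin n) (Fin n) ℝ => H.det := continuous_id.matrix_det
  have c2 : Continuous fun H : Matrix (Fin n) (Fin n) ℝ => H.adjugate :=
    continuous_id.matrix_adjugate
  obtain ⟨C1, h1⟩ := hK.exists_bound_of_continuousOn (f := fun H : Fin n → Fin n → ℝ =>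
    Matrix.det (Matrix.of H)) c1.continuousOn
  have h2 : ∀ i j : Fin n, ∃ C, ∀ H : Matrix (Fin n) (Fin n) ℝ, (∀ i j, |H i j| ≤ Λ) →
      |H.adjugate i j| ≤ C := by
    intro i j
    obtain ⟨C, h⟩ := hK.exists_bound_of_continuousOn (f := fun H : Fin n → Fin n → ℝ =>
      Matrix.adjugate (Matrix.of H) i j) (by
        have : Continuous fun H : Matrix (Fin n) (Fin n) ℝ => H.adjugate i j := c2.matrix_elem i j
        exact this.continuousOn)
    exact ⟨C, fun H hH => h H (hmem H hH)⟩
  choose C2 h2 using h2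
  refine ⟨|C1| + ∑ i, ∑ j, |C2 i j| + 1, by positivity, fun H hH => ⟨?_, fun i j => ?_⟩⟩
  · have := h1 H (hmem H hH)
    have h3 : 0 ≤ ∑ i, ∑ j, |C2 i j| := by positivity
    have : |H.det| ≤ C1 := this
    linarith [le_abs_self C1]
  · have := h2 i j H hH
    have h3 : |C2 i j| ≤ ∑ i, ∑ j, |C2 i j| := by
      refine le_trans ?_ (Finset.single_le_sum (f := fun i => ∑ j, |C2 i j|)
        (fun i _ => by positivity) (Finset.mem_univ i))
      exact Finset.single_le_sum (f := fun j => |C2 i j|) (fun i _ => by positivity)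
        (Finset.mem_univ j)
    linarith [le_abs_self (C2 i j), abs_nonneg C1]

lemma abs_sum_fin_le2 {n : ℕ} (f : Fin n → Fin n → ℝ) (B : ℝ) (h : ∀ i j, |f i j| ≤ B) :
    |∑ i, ∑ j, f i j| ≤ n * (n * B) :=
  abs_sum_fin_le _ _ fun i => abs_sum_fin_le _ _ fun j => h i j

set_option maxHeartbeats 2000000 in
/-- The main pointwise estimate (linear algebra at one point). -/
lemma pt_est (n : ℕ) (hn : 0 < n) (τ M Λ eb m₀ : ℝ) (hτ : 0 < τ) (hM : 0 < M) (hΛ : 0 < Λ)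
    (heb : 0 < eb) (hm₀ : 0 < m₀) :
    ∃ θ > 0, ∃ C > 0, ∀ (H J a : Matrix (Fin n) (Fin n) ℝ) (h : Fin n → Matrix (Fin n) (Fin n) ℝ)
      (t : Fin n → Fin n → Fin n → ℝ) (e : ℝ) (m T S w : Fin n → ℝ),
      H.PosDef → J = H⁻¹ → (∀ j, (h j).transpose = h j) →
      (a - τ • (1 : Matrix (Fin n) (Fin n) ℝ)).PosSemidef →
      (∀ i j, |H i j| ≤ Λ) → (∀ i j k, |t i j k| ≤ M) → (∀ k, |m k| ≤ m₀) →
      (∀ k, |T k| ≤ M) → (∀ k, |S k| ≤ M) → 0 ≤ e → e ≤ eb →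
      (∀ j, w j = ∑ p, ∑ q, J p q * h j p q) →
      θ * ∑ j, w j ^ 2 - C ≤
        ∑ i, ∑ j, a i j * (J * h i * J * h j).trace + ∑ j, ∑ p, ∑ q, t p q j * h j p q
          - ∑ j, S j * w j + ∑ q, w q * (e * ∑ k, J q k * w k + e * m q + T q) := by
  have hn' : (0 : ℝ) < n := by exact_mod_cast hn
  set C1 : ℝ := n * (n * (n * (M * (n * (n * Λ))))) + n * (M * n) + n * (n * (eb * m₀ + M)) with hC1
  have hC1pos : 0 < C1 := by positivity
  refine ⟨τ / (2 * n ^ 3), by positivity, C1 ^ 2 / (2 * τ), by positivity, ?_⟩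
  intro H J a h t e m T S w hH hJ hh ha hHb ht hm hT hS he0 heb1 hw
  obtain ⟨L, hL, hLH⟩ := exists_sqrt_matrix H hH.posSemidef
  have hHdet : IsUnit H.det := (Matrix.isUnit_iff_isUnit_det _).1 hH.isUnit
  have hLdet : IsUnit L.det := by
    rw [← hLH, Matrix.det_mul] at hHdet
    exact isUnit_of_mul_isUnit_left hHdet
  have hJL : J = L⁻¹ * L⁻¹ := by rw [hJ, ← hLH, Matrix.mul_inv_rev]
  have hLi : L⁻¹.transpose = L⁻¹ := by rw [Matrix.transpose_nonsing_inv, hL]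
  set ξ : Fin n → Matrix (Fin n) (Fin n) ℝ := fun j => L⁻¹ * h j * L⁻¹ with hξ
  have hξs : ∀ j, (ξ j).transpose = ξ j := by
    intro j
    simp only [hξ, Matrix.transpose_mul, hLi, hh, Matrix.mul_assoc]
  have hξs' : ∀ j α β, ξ j β α = ξ j α β := fun j α β => by
    conv_rhs => rw [← hξs j]
    rfl
  have hhξ : ∀ j, h j = L * ξ j * L := by
    intro j
    simp only [hξ]
    calc h j = (L * L⁻¹) * h j * (L⁻¹ * L) := by
          rw [Matrix.mul_nonsing_inv _ hLdet, Matrix.nonsing_inv_mul _ hLdet]; simp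
      _ = _ := by simp only [Matrix.mul_assoc]
  have hwξ : ∀ j, w j = ∑ α, ξ j α α := by
    intro j
    have h1 : w j = (J * h j).trace := by
      rw [hw, Matrix.trace]
      refine Finset.sum_congr rfl fun p _ => ?_
      rw [Matrix.diag_apply, Matrix.mul_apply]
      refine Finset.sum_congr rfl fun q _ => ?_
      congr 1
      conv_lhs => rw [← hh j]
      rfl
    rw [h1, hJL, Matrix.mul_assoc, Matrix.trace_mul_comm]
    rfl
  have hQ : ∑ i, ∑ j, a i j * (J * h i * J * h j).trace
      = ∑ α, ∑ β, ∑ i, ∑ j, a i j * ξ i α β * ξ j α β := by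
    have h1 : ∀ i j, (J * h i * J * h j).trace = ∑ α, ∑ β, ξ i α β * ξ j α β := by
      intro i j
      have : (J * h i * J * h j).trace = (ξ i * ξ j).trace := by
        rw [hJL]
        simp only [hξ]
        calc (L⁻¹ * L⁻¹ * h i * (L⁻¹ * L⁻¹) * h j).trace
            = (L⁻¹ * (L⁻¹ * h i * (L⁻¹ * L⁻¹) * h j)).trace := by simp only [Matrix.mul_assoc]
          _ = ((L⁻¹ * h i * (L⁻¹ * L⁻¹) * h j) * L⁻¹).trace := Matrix.trace_mul_comm _ _
          _ = _ := by simp only [Matrix.mul_assoc]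
      rw [this, Matrix.trace]
      refine Finset.sum_congr rfl fun α _ => ?_
      rw [Matrix.diag_apply, Matrix.mul_apply]
      refine Finset.sum_congr rfl fun β _ => ?_
      rw [hξs' j]
    simp_rw [h1, Finset.mul_sum]
    calc ∑ i, ∑ j, ∑ α, ∑ β, a i j * (ξ i α β * ξ j α β)
        = ∑ i, ∑ α, ∑ j, ∑ β, a i j * (ξ i α β * ξ j α β) :=
          Finset.sum_congr rfl fun i _ => Finset.sum_comm
      _ = ∑ α, ∑ i, ∑ j, ∑ β, a i j * (ξ i α β * ξ j α β) := Finset.sum_comm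
      _ = ∑ α, ∑ i, ∑ β, ∑ j, a i j * (ξ i α β * ξ j α β) :=
          Finset.sum_congr rfl fun i _ => Finset.sum_congr rfl fun i _ => Finset.sum_comm
      _ = ∑ α, ∑ β, ∑ i, ∑ j, a i j * (ξ i α β * ξ j α β) :=
          Finset.sum_congr rfl fun i _ => Finset.sum_comm
      _ = _ := by simp only [mul_assoc]
  have hQge : τ * ∑ α, ∑ β, ∑ j, ξ j α β ^ 2 ≤ ∑ i, ∑ j, a i j * (J * h i * J * h j).trace := by
    rw [hQ, Finset.mul_sum]
    refine Finset.sum_le_sum fun α _ => ?_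
    rw [Finset.mul_sum]
    exact Finset.sum_le_sum fun β _ => quad_ge ha _
  set s2 := ∑ α, ∑ β, ∑ j, ξ j α β ^ 2 with hs2
  have hs20 : 0 ≤ s2 := by positivity
  set s := Real.sqrt s2 with hs
  have hs0 : 0 ≤ s := Real.sqrt_nonneg _
  have hss : s ^ 2 = s2 := Real.sq_sqrt hs20
  have hξle : ∀ j α β, |ξ j α β| ≤ s := by
    intro j α β
    refine Real.abs_le_sqrt ?_
    calc ξ j α β ^ 2 ≤ ∑ j, ξ j α β ^ 2 :=
          Finset.single_le_sum (f := fun j => ξ j α β ^ 2) (fun _ _ => sq_nonneg _)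
            (Finset.mem_univ j)
      _ ≤ ∑ β, ∑ j, ξ j α β ^ 2 :=
          Finset.single_le_sum (f := fun β => ∑ j, ξ j α β ^ 2) (fun _ _ => by positivity)
            (Finset.mem_univ β)
      _ ≤ _ := Finset.single_le_sum (f := fun α => ∑ β, ∑ j, ξ j α β ^ 2)
            (fun _ _ => by positivity) (Finset.mem_univ α)
  have hwle : ∀ j, |w j| ≤ n * s := by
    intro j; rw [hwξ]; exact abs_sum_fin_le _ _ fun α => hξle j α α
  have hLb : ∀ i j, L i j ^ 2 ≤ Λ := sqrt_entry_le hL (by rw [hLH]; exact hHb)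
  have hLL : ∀ i j k l, |L i j| * |L k l| ≤ Λ := by
    intro i j k l
    nlinarith [sq_nonneg (|L i j| - |L k l|), sq_abs (L i j), sq_abs (L k l), hLb i j, hLb k l]
  have hhle : ∀ j p q, |h j p q| ≤ n * (n * (Λ * s)) := by
    intro j p q
    rw [hhξ j, Matrix.mul_apply]
    refine abs_sum_fin_le _ _ fun k => ?_
    rw [Matrix.mul_apply, Finset.sum_mul]
    refine abs_sum_fin_le _ _ fun l => ?_
    rw [abs_mul, abs_mul]
    calc |L p l| * |ξ j l k| * |L k q| = (|L p l| * |L k q|) * |ξ j l k| := by ring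
      _ ≤ Λ * s := mul_le_mul (hLL _ _ _ _) (hξle _ _ _) (abs_nonneg _) hΛ.le
  have b1 : |∑ j, ∑ p, ∑ q, t p q j * h j p q| ≤ n * (n * (n * (M * (n * (n * Λ))))) * s := by
    have : |∑ j, ∑ p, ∑ q, t p q j * h j p q| ≤ n * (n * (n * (M * (n * (n * (Λ * s)))))) := by
      refine abs_sum_fin_le _ _ fun j => abs_sum_fin_le _ _ fun p => abs_sum_fin_le _ _ fun q => ?_
      rw [abs_mul]
      exact mul_le_mul (ht _ _ _) (hhle _ _ _) (abs_nonneg _) hM.le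
    calc _ ≤ _ := this
      _ = _ := by ring
  have b2 : |∑ j, S j * w j| ≤ n * (M * n) * s := by
    have : |∑ j, S j * w j| ≤ n * (M * (n * s)) := by
      refine abs_sum_fin_le _ _ fun j => ?_
      rw [abs_mul]
      exact mul_le_mul (hS _) (hwle _) (abs_nonneg _) hM.le
    calc _ ≤ _ := this
      _ = _ := by ring
  have b3 : |∑ q, w q * (e * m q + T q)| ≤ n * (n * (eb * m₀ + M)) * s := by
    have : |∑ q, w q * (e * m q + T q)| ≤ n * ((n * s) * (eb * m₀ + M)) := by
      refine abs_sum_fin_le _ _ fun j => ?_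
      rw [abs_mul]
      refine mul_le_mul (hwle _) ?_ (abs_nonneg _) (by positivity)
      refine (abs_add_le _ _).trans (add_le_add ?_ (hT _))
      rw [abs_mul, abs_of_nonneg he0]
      exact mul_le_mul heb1 (hm _) (abs_nonneg _) heb.le
    calc _ ≤ _ := this
      _ = _ := by ring
  have b4 : 0 ≤ ∑ q, w q * (e * ∑ k, J q k * w k) := by
    have h1 := hH.inv.posSemidef.dotProduct_mulVec_nonneg w
    rw [← hJ] at h1
    simp only [dotProduct, Matrix.mulVec, star_trivial] at h1
    have : ∑ q, w q * (e * ∑ k, J q k * w k) = e * ∑ q, w q * ∑ k, J q k * w k := by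
      rw [Finset.mul_sum]; refine Finset.sum_congr rfl fun _ _ => ?_; ring
    rw [this]; exact mul_nonneg he0 h1
  have hsplit : ∑ q, w q * (e * ∑ k, J q k * w k + e * m q + T q)
      = ∑ q, w q * (e * ∑ k, J q k * w k) + ∑ q, w q * (e * m q + T q) := by
    rw [← Finset.sum_add_distrib]; refine Finset.sum_congr rfl fun _ _ => ?_; ring
  have hw2 : ∑ j, w j ^ 2 ≤ n ^ 3 * s ^ 2 := by
    have : ∑ j, w j ^ 2 ≤ ∑ _j : Fin n, (n * s) ^ 2 := Finset.sum_le_sum fun j _ => by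
      rw [← sq_abs]; exact pow_le_pow_left₀ (abs_nonneg _) (hwle j) 2
    refine this.trans (le_of_eq ?_)
    simp; ring
  have hth : τ / (2 * n ^ 3) * ∑ j, w j ^ 2 ≤ τ / 2 * s ^ 2 := by
    calc τ / (2 * n ^ 3) * ∑ j, w j ^ 2 ≤ τ / (2 * n ^ 3) * (n ^ 3 * s ^ 2) := by gcongr
      _ = _ := by field_simp
  have hyoung : C1 * s ≤ τ / 2 * s ^ 2 + C1 ^ 2 / (2 * τ) := by
    have : 0 ≤ (τ * s - C1) ^ 2 / (2 * τ) := by positivity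
    have e1 : (τ * s - C1) ^ 2 / (2 * τ) = τ / 2 * s ^ 2 - C1 * s + C1 ^ 2 / (2 * τ) := by
      field_simp; ring
    linarith
  rw [hsplit]
  rw [← hss] at hQge
  have hC1s : C1 * s = n * (n * (n * (M * (n * (n * Λ))))) * s + n * (M * n) * s
      + n * (n * (eb * m₀ + M)) * s := by rw [hC1]; ring
  linarith [abs_le.1 b1, abs_le.1 b2, abs_le.1 b3]

/-- Shorthand for Euclidean space. -/
abbrev Eu (n : ℕ) := EuclideanSpace ℝ (Fin n)

/-- Partial derivative. -/
noncomputable def pd {n : ℕ} (i : Fin n) (F : Eu n → ℝ) (y : Eu n) : ℝ :=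
  fderiv ℝ F y (EuclideanSpace.single i 1)

lemma pd_mul {n : ℕ} (i : Fin n) {F G : Eu n → ℝ} {y : Eu n} (hF : DifferentiableAt ℝ F y)
    (hG : DifferentiableAt ℝ G y) :
    pd i (fun y => F y * G y) y = pd i F y * G y + F y * pd i G y := by
  unfold pd
  rw [fderiv_fun_mul hF hG]
  simp; ring

lemma pd_sub {n : ℕ} (i : Fin n) {F G : Eu n → ℝ} {y : Eu n} (hF : DifferentiableAt ℝ F y)
    (hG : DifferentiableAt ℝ G y) :
    pd i (fun y => F y - G y) y = pd i F y - pd i G y := by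
  unfold pd
  rw [fderiv_fun_sub hF hG]
  simp

lemma pd_add {n : ℕ} (i : Fin n) {F G : Eu n → ℝ} {y : Eu n} (hF : DifferentiableAt ℝ F y)
    (hG : DifferentiableAt ℝ G y) :
    pd i (fun y => F y + G y) y = pd i F y + pd i G y := by
  unfold pd
  rw [fderiv_fun_add hF hG]
  simp

lemma pd_sum {n : ℕ} (i : Fin n) {ι : Type*} (s : Finset ι) {F : ι → Eu n → ℝ} {y : Eu n}
    (hF : ∀ k ∈ s, DifferentiableAt ℝ (F k) y) :
    pd i (fun y => ∑ k ∈ s, F k y) y = ∑ k ∈ s, pd i (F k) y := by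
  unfold pd
  rw [fderiv_fun_sum hF]
  simp

lemma pd_const {n : ℕ} (i : Fin n) (c : ℝ) (y : Eu n) : pd i (fun _ => c) y = 0 := by
  unfold pd; simp

lemma pd_congr {n : ℕ} (i : Fin n) {Ω : Set (Eu n)} (hΩ : IsOpen Ω) {F G : Eu n → ℝ}
    (h : ∀ y ∈ Ω, F y = G y) {y : Eu n} (hy : y ∈ Ω) : pd i F y = pd i G y := by
  unfold pd
  rw [Filter.EventuallyEq.fderiv_eq (Filter.eventually_of_mem (hΩ.mem_nhds hy) h)]

lemma smooth_diffAt {n : ℕ} {Ω : Set (Eu n)} (hΩ : IsOpen Ω) {F : Eu n → ℝ}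
    (h : ContDiffOn ℝ (⊤ : ℕ∞) F Ω) {y : Eu n} (hy : y ∈ Ω) : DifferentiableAt ℝ F y :=
  (h.contDiffAt (hΩ.mem_nhds hy)).differentiableAt (by simp)

lemma smooth_pd {n : ℕ} (i : Fin n) {Ω : Set (Eu n)} (hΩ : IsOpen Ω) {F : Eu n → ℝ}
    (h : ContDiffOn ℝ (⊤ : ℕ∞) F Ω) : ContDiffOn ℝ (⊤ : ℕ∞) (pd i F) Ω := by
  unfold pd
  exact (h.fderiv_of_isOpen hΩ (by simp)).clm_apply contDiffOn_const

lemma pd_comm {n : ℕ} (i j : Fin n) {Ω : Set (Eu n)} (hΩ : IsOpen Ω) {F : Eu n → ℝ}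
    (h : ContDiffOn ℝ (⊤ : ℕ∞) F Ω) {y : Eu n} (hy : y ∈ Ω) :
    pd i (pd j F) y = pd j (pd i F) y := by
  have hF := h.contDiffAt (hΩ.mem_nhds hy)
  have hs := hF.isSymmSndFDerivAt (by rw [minSmoothness_of_isRCLikeNormedField]; exact WithTop.coe_le_coe.2 (le_top : (2 : ℕ∞) ≤ ⊤))
  have hd : DifferentiableAt ℝ (fderiv ℝ F) y :=
    ((h.fderiv_of_isOpen hΩ (m := (⊤ : ℕ∞)) (by simp)).contDiffAt
      (hΩ.mem_nhds hy)).differentiableAt (by simp)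
  have key : ∀ i j : Fin n, pd i (pd j F) y =
      fderiv ℝ (fderiv ℝ F) y (EuclideanSpace.single i 1) (EuclideanSpace.single j 1) := by
    intro i j
    unfold pd
    rw [fderiv_clm_apply hd (differentiableAt_const _)]
    simp
  rw [key, key]
  exact hs _ _

/-- Jacobi's formula. -/
lemma pd_det {n : ℕ} (l : Fin n) {H : Fin n → Fin n → Eu n → ℝ} {y : Eu n}
    (hH : ∀ i j, DifferentiableAt ℝ (H i j) y) :
    DifferentiableAt ℝ (fun y => (Matrix.of fun i j => H i j y).det) y ∧
    pd l (fun y => (Matrix.of fun i j => H i j y).det) y =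
      ∑ i, ∑ j, (Matrix.of fun i j => H i j y).adjugate j i * pd l (H i j) y := by
  let D : ContinuousMultilinearMap ℝ (fun _ : Fin n => (Fin n → ℝ)) ℝ :=
    ⟨(Matrix.detRowAlternating (R := ℝ) (n := Fin n)).toMultilinearMap, by
      have : Continuous fun H : Matrix (Fin n) (Fin n) ℝ => H.det := continuous_id.matrix_det
      exact this⟩
  have hD : ∀ A : Fin n → Fin n → ℝ, D A = (Matrix.of A).det := fun A => rfl
  have h1 : HasFDerivAt (fun y => (fun i j => H i j y : Fin n → Fin n → ℝ))
      (ContinuousLinearMap.pi fun i => ContinuousLinearMap.pi fun j => fderiv ℝ (H i j) y) y := by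
    rw [hasFDerivAt_pi]
    intro i
    rw [hasFDerivAt_pi]
    intro j
    exact (hH i j).hasFDerivAt
  have h2 := (D.hasFDerivAt (fun i j => H i j y)).comp y h1
  have h3 : (fun y => (Matrix.of fun i j => H i j y).det) =
      (D : (Fin n → Fin n → ℝ) → ℝ) ∘ (fun y => (fun i j => H i j y : Fin n → Fin n → ℝ)) := rfl
  refine ⟨by rw [h3]; exact h2.differentiableAt, ?_⟩
  unfold pd
  rw [h3, h2.fderiv]
  rw [ContinuousLinearMap.comp_apply, ContinuousMultilinearMap.linearDeriv_apply]
  refine Finset.sum_congr rfl fun i _ => ?_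
  rw [hD]
  have h4 : (Matrix.of (Function.update (fun i j => H i j y) i
      ((ContinuousLinearMap.pi fun i => ContinuousLinearMap.pi fun j => fderiv ℝ (H i j) y)
        (EuclideanSpace.single l 1) i))).det
      = Matrix.cramer (Matrix.of fun i j => H i j y).transpose
        (fun j => fderiv ℝ (H i j) y (EuclideanSpace.single l 1)) i := by
    rw [Matrix.cramer_transpose_apply]
    rfl
  rw [h4, Matrix.cramer_eq_adjugate_mulVec, ← Matrix.adjugate_transpose]
  rfl

/-- Logarithmic derivative of the determinant. -/
lemma pd_log_det {n : ℕ} (l : Fin n) {H : Fin n → Fin n → Eu n → ℝ} {y : Eu n}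
    (hH : ∀ i j, DifferentiableAt ℝ (H i j) y)
    (hdet : (Matrix.of fun i j => H i j y).det ≠ 0) :
    pd l (fun y => (Matrix.of fun i j => H i j y).det) y =
      (Matrix.of fun i j => H i j y).det *
      ∑ i, ∑ j, (Matrix.of fun i j => H i j y)⁻¹ j i * pd l (H i j) y := by
  rw [(pd_det l hH).2, Finset.mul_sum]
  refine Finset.sum_congr rfl fun i _ => ?_
  rw [Finset.mul_sum]
  refine Finset.sum_congr rfl fun j _ => ?_
  rw [Matrix.inv_def, Matrix.smul_apply, Ring.inverse_eq_inv', smul_eq_mul]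
  field_simp

lemma div_alg {n : ℕ} (a J H : Matrix (Fin n) (Fin n) ℝ) (h : Fin n → Matrix (Fin n) (Fin n) ℝ)
    (h2 : Fin n → Fin n → Fin n → Fin n → ℝ) (t : Fin n → Fin n → Fin n → ℝ)
    (da dJ : Fin n → Fin n → Fin n → ℝ) (w g : Fin n → ℝ)
    (hHJ : ∀ i j, ∑ k, H i k * J k j = if i = j then 1 else 0)
    (hs1 : ∀ i p q, h i p q = h i q p) (hs2 : ∀ i p q, h i p q = h q p i)
    (hh2 : ∀ i j p q, h2 i j p q = h2 p q i j)
    (hda : ∀ l i j, da l i j = ∑ k, t i j k * H k l)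
    (hdJ : ∀ l i j, dJ l i j = -(J * h l * J) i j)
    (hw : ∀ j, w j = ∑ p, ∑ q, J p q * h j p q) :
    ∑ i, (∑ j, (da i i j * w j + a i j * (∑ p, ∑ q, (dJ i p q * h j p q + J p q * h2 i j p q)))
      - ∑ m, (dJ i i m * g m + J i m * ∑ p, ∑ q, (da i p q * h m p q + a p q * h2 i m p q)))
    = ∑ j, (∑ i, da i i j) * w j - ∑ i, ∑ j, a i j * (J * h i * J * h j).trace
      + ∑ q, w q * ∑ m, J q m * g m - ∑ j, ∑ p, ∑ q, t p q j * h j p q := by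
  have hA : ∀ i j, ∑ p, ∑ q, dJ i p q * h j p q = - (J * h i * J * h j).trace := by
    intro i j
    rw [Matrix.trace, ← Finset.sum_neg_distrib]
    refine Finset.sum_congr rfl fun p _ => ?_
    rw [Matrix.diag_apply, Matrix.mul_apply, ← Finset.sum_neg_distrib]
    refine Finset.sum_congr rfl fun q _ => ?_
    rw [hdJ, hs1 j q p]; ring
  have hB : ∑ i, ∑ j, a i j * (∑ p, ∑ q, J p q * h2 i j p q) =
      ∑ i, ∑ m, J i m * ∑ p, ∑ q, a p q * h2 i m p q := by
    simp only [Finset.mul_sum]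
    calc ∑ i, ∑ j, ∑ p, ∑ q, a i j * (J p q * h2 i j p q)
        = ∑ i, ∑ p, ∑ j, ∑ q, a i j * (J p q * h2 i j p q) := by
          refine Finset.sum_congr rfl fun i _ => ?_
          rw [Finset.sum_comm]
      _ = ∑ p, ∑ i, ∑ j, ∑ q, a i j * (J p q * h2 i j p q) := Finset.sum_comm
      _ = ∑ p, ∑ i, ∑ q, ∑ j, a i j * (J p q * h2 i j p q) := by
          refine Finset.sum_congr rfl fun i _ => Finset.sum_congr rfl fun j _ => ?_
          rw [Finset.sum_comm]
      _ = ∑ p, ∑ q, ∑ i, ∑ j, a i j * (J p q * h2 i j p q) := by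
          refine Finset.sum_congr rfl fun i _ => ?_
          rw [Finset.sum_comm]
      _ = _ := by
          refine Finset.sum_congr rfl fun p _ => Finset.sum_congr rfl fun q _ =>
            Finset.sum_congr rfl fun i _ => Finset.sum_congr rfl fun j _ => ?_
          rw [hh2 i j p q]; ring
  have hC : ∑ i, ∑ m, dJ i i m * g m = - ∑ q, w q * ∑ m, J q m * g m := by
    have h1 : ∀ m, ∑ i, dJ i i m = - ∑ q, w q * J q m := by
      intro m
      simp only [hdJ, Finset.sum_neg_distrib]
      congr 1
      simp only [Matrix.mul_apply, hw, Finset.sum_mul]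
      rw [Finset.sum_comm]
      refine Finset.sum_congr rfl fun q _ => Finset.sum_congr rfl fun i _ =>
        Finset.sum_congr rfl fun p _ => ?_
      rw [hs2 i p q, hs1 q p i]
    rw [Finset.sum_comm]
    simp only [← Finset.sum_mul, h1]
    simp only [neg_mul, Finset.sum_neg_distrib, Finset.sum_mul, Finset.mul_sum]
    rw [Finset.sum_comm]
    congr 1
    refine Finset.sum_congr rfl fun q _ => Finset.sum_congr rfl fun i _ => ?_
    ring
  have hD : ∑ i, ∑ m, J i m * ∑ p, ∑ q, da i p q * h m p q =
      ∑ j, ∑ p, ∑ q, t p q j * h j p q := by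
    have h1 : ∀ p q m, ∑ i, J i m * da i p q = t p q m := by
      intro p q m
      simp only [hda, Finset.mul_sum]
      rw [Finset.sum_comm]
      calc ∑ k, ∑ i, J i m * (t p q k * H k i) = ∑ k, t p q k * ∑ i, H k i * J i m := by
            refine Finset.sum_congr rfl fun q _ => ?_
            rw [Finset.mul_sum]
            refine Finset.sum_congr rfl fun i _ => ?_
            ring
        _ = t p q m := by simp [hHJ]
    rw [Finset.sum_comm]
    refine Finset.sum_congr rfl fun m _ => ?_
    simp only [Finset.mul_sum]
    rw [Finset.sum_comm]
    refine Finset.sum_congr rfl fun p _ => ?_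
    rw [Finset.sum_comm]
    refine Finset.sum_congr rfl fun q _ => ?_
    rw [← h1, Finset.sum_mul]
    refine Finset.sum_congr rfl fun i _ => ?_
    ring
  have hE : ∑ i, ∑ j, da i i j * w j = ∑ j, (∑ i, da i i j) * w j := by
    rw [Finset.sum_comm]
    simp only [Finset.sum_mul]
  simp only [Finset.sum_sub_distrib, Finset.sum_add_distrib, mul_add, hA, hB, hC, hD, hE]
  simp only [mul_neg, Finset.sum_neg_distrib]
  ring

/-- The system of relations on the Legendre side. -/
structure YSys (n : ℕ) (Ω : Set (Eu n)) (H a : Fin n → Fin n → Eu n → ℝ)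
    (t : Fin n → Fin n → Fin n → Eu n → ℝ) (τ M Λ c d : ℝ) : Prop where
  op : IsOpen Ω
  smH : ∀ i j, ContDiffOn ℝ (⊤ : ℕ∞) (H i j) Ω
  sma : ∀ i j, ContDiffOn ℝ (⊤ : ℕ∞) (a i j) Ω
  pos : ∀ y ∈ Ω, (Matrix.of fun i j => H i j y).PosDef
  dsym : ∀ y ∈ Ω, ∀ i j k, pd k (H i j) y = pd j (H i k) y
  elip : ∀ y ∈ Ω, ((Matrix.of fun i j => a i j y) - τ • (1 : Matrix (Fin n) (Fin n) ℝ)).PosSemidef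
  apos : ∀ y ∈ Ω, (Matrix.of fun i j => a i j y).PosDef
  abd : ∀ y ∈ Ω, ∀ i j, |a i j y| ≤ M
  tbd : ∀ y ∈ Ω, ∀ i j k, |t i j k y| ≤ M
  da : ∀ y ∈ Ω, ∀ l i j, pd l (a i j) y = ∑ k, t i j k y * H k l y
  Hbd : ∀ y ∈ Ω, ∀ i j, |H i j y| ≤ Λ
  eq : ∀ y ∈ Ω, ∑ i, ∑ j, a i j y * H i j y +
    d * ((Matrix.of fun i j => a i j y).det * (Matrix.of fun i j => H i j y).det) = c

lemma contDiffOn_det {n : ℕ} {Ω : Set (Eu n)} {H : Fin n → Fin n → Eu n → ℝ}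
    (h : ∀ i j, ContDiffOn ℝ (⊤ : ℕ∞) (H i j) Ω) :
    ContDiffOn ℝ (⊤ : ℕ∞) (fun y => (Matrix.of fun i j => H i j y).det) Ω := by
  simp only [Matrix.det_apply]
  refine ContDiffOn.sum fun σ _ => ?_
  refine ContDiffOn.const_smul _ ?_
  exact contDiffOn_prod fun i _ => h _ _

lemma contDiffOn_matinv {n : ℕ} {Ω : Set (Eu n)} {H : Fin n → Fin n → Eu n → ℝ}
    (h : ∀ i j, ContDiffOn ℝ (⊤ : ℕ∞) (H i j) Ω)
    (hd : ∀ y ∈ Ω, (Matrix.of fun i j => H i j y).det ≠ 0) (i j : Fin n) :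
    ContDiffOn ℝ (⊤ : ℕ∞) (fun y => (Matrix.of fun i j => H i j y)⁻¹ i j) Ω := by
  simp only [Matrix.inv_def, Matrix.smul_apply, Ring.inverse_eq_inv', smul_eq_mul,
    Matrix.adjugate_apply]
  refine ((contDiffOn_det h).inv hd).mul ?_
  have : (fun y => ((Matrix.of fun i j => H i j y).updateRow j (Pi.single i 1)).det) =
      fun y => (Matrix.of fun p q => (fun p q => if p = j then
        (fun _ => (Pi.single i 1 : Fin n → ℝ) q) else H p q : Fin n → Fin n → Eu n → ℝ) p q y).det := by
    funext y
    congr 1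
    ext p q
    by_cases hp : p = j
    · subst hp; simp
    · simp [hp, Matrix.updateRow_ne]
  rw [this]
  refine contDiffOn_det fun p q => ?_
  by_cases hp : p = j
  · simp only [hp, if_true]; exact contDiffOn_const
  · simp only [hp, if_false]; exact h p q

lemma pd_inv {n : ℕ} {Ω : Set (Eu n)} (hΩ : IsOpen Ω) {H : Fin n → Fin n → Eu n → ℝ}
    (h : ∀ i j, ContDiffOn ℝ (⊤ : ℕ∞) (H i j) Ω)
    (hd : ∀ y ∈ Ω, (Matrix.of fun i j => H i j y).det ≠ 0) (l i j : Fin n) {y : Eu n} (hy : y ∈ Ω) :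
    pd l (fun y => (Matrix.of fun i j => H i j y)⁻¹ i j) y =
      -((Matrix.of fun i j => H i j y)⁻¹ * (Matrix.of fun i j => pd l (H i j) y) *
        (Matrix.of fun i j => H i j y)⁻¹) i j := by
  set J : Fin n → Fin n → Eu n → ℝ := fun i j y => (Matrix.of fun i j => H i j y)⁻¹ i j with hJ
  have hJd : ∀ i j, DifferentiableAt ℝ (J i j) y := fun i j =>
    smooth_diffAt hΩ (contDiffOn_matinv h hd i j) hy
  have hHd : ∀ i j, DifferentiableAt ℝ (H i j) y := fun i j => smooth_diffAt hΩ (h i j) hy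
  have hu : IsUnit (Matrix.of fun i j => H i j y).det := (hd y hy).isUnit
  have h1 : (Matrix.of fun i j => pd l (H i j) y) * (Matrix.of fun i j => J i j y) +
      (Matrix.of fun i j => H i j y) * (Matrix.of fun i j => pd l (J i j) y) = 0 := by
    ext i j
    have h2 : pd l (fun y => ∑ k, H i k y * J k j y) y = 0 := by
      rw [pd_congr l hΩ (G := fun _ => (1 : Matrix (Fin n) (Fin n) ℝ) i j) _ hy, pd_const]
      intro z hz
      have := Matrix.mul_nonsing_inv (Matrix.of fun i j => H i j z) (hd z hz).isUnit
      rw [← this, Matrix.mul_apply]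
      rfl
    rw [pd_sum l _ (fun k _ => (hHd i k).fun_mul (hJd k j))] at h2
    simp only [Matrix.add_apply, Matrix.mul_apply, Matrix.of_apply, Matrix.zero_apply]
    rw [← Finset.sum_add_distrib, ← h2]
    refine Finset.sum_congr rfl fun k _ => ?_
    rw [pd_mul l (hHd i k) (hJd k j)]
  have hJm : (Matrix.of fun i j => J i j y) = (Matrix.of fun i j => H i j y)⁻¹ := by
    ext i j; rfl
  have h3 : (Matrix.of fun i j => pd l (J i j) y) = -((Matrix.of fun i j => H i j y)⁻¹ *
      (Matrix.of fun i j => pd l (H i j) y) * (Matrix.of fun i j => H i j y)⁻¹) := by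
    rw [hJm] at h1
    have h4 := congrArg (fun X => (Matrix.of fun i j => H i j y)⁻¹ * X) h1
    simp only [mul_add, mul_zero] at h4
    rw [← mul_assoc, ← mul_assoc, Matrix.nonsing_inv_mul _ hu, one_mul] at h4
    exact eq_neg_of_add_eq_zero_right h4
  have := congrFun (congrFun h3 i) j
  simpa using this

/-- logarithm of the determinant, with a sign. -/
noncomputable def nld {n : ℕ} (H : Fin n → Fin n → Eu n → ℝ) (y : Eu n) : ℝ :=
  - Real.log (Matrix.of fun i j => H i j y).det

lemma YSys.smooth_nld {n : ℕ} {Ω : Set (Eu n)} {H a : Fin n → Fin n → Eu n → ℝ}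
    {t : Fin n → Fin n → Fin n → Eu n → ℝ} {τ M Λ c d : ℝ} (S : YSys n Ω H a t τ M Λ c d) :
    ContDiffOn ℝ (⊤ : ℕ∞) (nld H) Ω := by
  unfold nld
  exact ((contDiffOn_det S.smH).log fun y hy => (S.pos y hy).det_pos.ne').neg

lemma YSys.pd_nld {n : ℕ} {Ω : Set (Eu n)} {H a : Fin n → Fin n → Eu n → ℝ}
    {t : Fin n → Fin n → Fin n → Eu n → ℝ} {τ M Λ c d : ℝ} (S : YSys n Ω H a t τ M Λ c d)
    {y : Eu n} (hy : y ∈ Ω) (l : Fin n) :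
    pd l (nld H) y = - ∑ p, ∑ q, (Matrix.of fun i j => H i j y)⁻¹ p q * pd l (H p q) y := by
  have hd := (S.pos y hy).det_pos.ne'
  have hH : ∀ i j, DifferentiableAt ℝ (H i j) y := fun i j => smooth_diffAt S.op (S.smH i j) hy
  have h1 := pd_log_det l hH hd
  have h2 := (pd_det l hH).1
  have hsym : ∀ i j, (Matrix.of fun i j => H i j y)⁻¹ i j = (Matrix.of fun i j => H i j y)⁻¹ j i := by
    intro i j
    have := (S.pos y hy).inv.isHermitian
    have := this.apply j i
    simpa using this
  have h3 : pd l (nld H) y = - ((Matrix.of fun i j => H i j y).det)⁻¹ *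
      pd l (fun y => (Matrix.of fun i j => H i j y).det) y := by
    have h4 := (h2.hasFDerivAt.log hd).neg
    have h5 : nld H = -fun y => Real.log (Matrix.of fun i j => H i j y).det := by
      funext z; simp [nld]
    unfold pd
    rw [h5, h4.fderiv]
    simp
  rw [h3, h1, neg_mul, ← mul_assoc, inv_mul_cancel₀ hd, one_mul]
  congr 1
  refine Finset.sum_congr rfl fun p _ => Finset.sum_congr rfl fun q _ => ?_
  rw [hsym]

/-- Differentiated equation. -/
lemma YSys.diff_eq {n : ℕ} {Ω : Set (Eu n)} {H a : Fin n → Fin n → Eu n → ℝ}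
    {t : Fin n → Fin n → Fin n → Eu n → ℝ} {τ M Λ c d : ℝ} (S : YSys n Ω H a t τ M Λ c d)
    {y : Eu n} (hy : y ∈ Ω) (m : Fin n) :
    ∑ p, ∑ q, a p q y * pd m (H p q) y =
      - (d * ((Matrix.of fun i j => a i j y).det * (Matrix.of fun i j => H i j y).det)) *
        ((∑ p, ∑ q, (Matrix.of fun i j => H i j y)⁻¹ p q * pd m (H p q) y) +
          ∑ k, (∑ i, ∑ j, (Matrix.of fun i j => a i j y)⁻¹ j i * t i j k y) * H k m y) -
      ∑ k, (∑ i, ∑ j, t i j k y * H i j y) * H k m y := by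
  have hHd : ∀ i j, DifferentiableAt ℝ (H i j) y := fun i j => smooth_diffAt S.op (S.smH i j) hy
  have had : ∀ i j, DifferentiableAt ℝ (a i j) y := fun i j => smooth_diffAt S.op (S.sma i j) hy
  have hd := (S.pos y hy).det_pos.ne'
  have hda := (S.apos y hy).det_pos.ne'
  have h1 := pd_log_det m hHd hd
  have h2 := pd_log_det m had hda
  have hDH := (pd_det m hHd).1
  have hDa := (pd_det m had).1
  have hsym : ∀ i j, (Matrix.of fun i j => H i j y)⁻¹ i j = (Matrix.of fun i j => H i j y)⁻¹ j i := by
    intro i j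
    have := (S.pos y hy).inv.isHermitian
    have := this.apply j i
    simpa using this
  have h0 : pd m (fun y => ∑ i, ∑ j, a i j y * H i j y +
    d * ((Matrix.of fun i j => a i j y).det * (Matrix.of fun i j => H i j y).det)) y = 0 := by
    rw [pd_congr m S.op (G := fun _ => c) (fun z hz => S.eq z hz) hy, pd_const]
  have hmul : ∀ i j, DifferentiableAt ℝ (fun y => a i j y * H i j y) y :=
    fun i j => (had i j).fun_mul (hHd i j)
  rw [pd_add m (DifferentiableAt.fun_sum fun i _ => DifferentiableAt.fun_sum fun j _ => hmul i j)
    ((hDa.fun_mul hDH).const_mul d), pd_sum m _ (fun i _ => DifferentiableAt.fun_sum fun j _ => hmul i j),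
    pd_mul m (differentiableAt_const d) (hDa.fun_mul hDH), pd_const] at h0
  have e1 : ∀ i, pd m (fun y => ∑ j, a i j y * H i j y) y =
      ∑ j, (pd m (a i j) y * H i j y + a i j y * pd m (H i j) y) := by
    intro i
    rw [pd_sum m _ (fun j _ => hmul i j)]
    exact Finset.sum_congr rfl fun j _ => pd_mul m (had i j) (hHd i j)
  have e2 : pd m ((fun y => (Matrix.of fun i j => a i j y).det) *
      (fun y => (Matrix.of fun i j => H i j y).det)) y = _ := pd_mul m hDa hDH
  change _ + (_ + d * pd m ((fun y => (Matrix.of fun i j => a i j y).det) *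
      (fun y => (Matrix.of fun i j => H i j y).det)) y) = 0 at h0
  rw [e2, h1, h2] at h0
  simp only [e1, Finset.sum_add_distrib, S.da y hy] at h0
  have e3 : ∑ i, ∑ j, (∑ k, t i j k y * H k m y) * H i j y =
      ∑ k, (∑ i, ∑ j, t i j k y * H i j y) * H k m y := by
    simp only [Finset.sum_mul]
    rw [Finset.sum_comm' (t' := Finset.univ) (s' := fun _ => Finset.univ) (by simp)]
    have : ∀ j : Fin n, ∑ i, ∑ k, t i j k y * H k m y * H i j y =
        ∑ k, ∑ i, t i j k y * H i j y * H k m y := by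
      intro j
      rw [Finset.sum_comm]
      refine Finset.sum_congr rfl fun _ _ => Finset.sum_congr rfl fun _ _ => by ring
    simp only [this]
    rw [Finset.sum_comm]
    refine Finset.sum_congr rfl fun _ _ => ?_
    rw [Finset.sum_comm]
  have e4 : ∑ i, ∑ j, (Matrix.of fun i j => a i j y)⁻¹ j i * (∑ k, t i j k y * H k m y) =
      ∑ k, (∑ i, ∑ j, (Matrix.of fun i j => a i j y)⁻¹ j i * t i j k y) * H k m y := by
    simp only [Finset.sum_mul, Finset.mul_sum]
    rw [Finset.sum_comm]
    have : ∀ j : Fin n, ∑ i, ∑ k, (Matrix.of fun i j => a i j y)⁻¹ j i * (t i j k y * H k m y) =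
        ∑ k, ∑ i, (Matrix.of fun i j => a i j y)⁻¹ j i * t i j k y * H k m y := by
      intro j
      rw [Finset.sum_comm]
      refine Finset.sum_congr rfl fun _ _ => Finset.sum_congr rfl fun _ _ => by ring
    simp only [this]
    rw [Finset.sum_comm]
    refine Finset.sum_congr rfl fun _ _ => ?_
    rw [Finset.sum_comm]
  have e5 : ∑ p, ∑ q, (Matrix.of fun i j => H i j y)⁻¹ q p * pd m (H p q) y =
     ∑ p, ∑ q, (Matrix.of fun i j => H i j y)⁻¹ p q * pd m (H p q) y :=
    Finset.sum_congr rfl fun p _ => Finset.sum_congr rfl fun q _ => by rw [hsym]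
  rw [e3, e4, e5] at h0
  linarith

set_option maxHeartbeats 1000000 in
lemma ysys_out (n : ℕ) (hn : 0 < n) (τ M Λ cbar dbar : ℝ) (hτ : 0 < τ) (hM : 0 < M) (hΛ : 0 < Λ)
    (hcb : 0 < cbar) (hdb : 0 < dbar) :
    ∃ θ > 0, ∃ C > 0, ∃ Λ' > 0, ∃ β > 0, ∀ (Ω : Set (Eu n)) (H a : Fin n → Fin n → Eu n → ℝ)
      (t : Fin n → Fin n → Fin n → Eu n → ℝ) (c d : ℝ), c ≤ cbar → 0 ≤ d → d ≤ dbar →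
      YSys n Ω H a t τ M Λ c d → ∃ V : Fin n → Eu n → ℝ,
        (∀ i, ContDiffOn ℝ (⊤ : ℕ∞) (V i) Ω) ∧ ∀ y ∈ Ω,
          θ * ∑ j, (pd j (nld H) y) ^ 2 - C ≤ ∑ i, pd i (V i) y ∧
          (∀ i, |V i y| ≤ Λ' * ∑ j, |pd j (nld H) y| + β) ∧
          τ * ∑ j, (pd j (nld H) y) ^ 2 - β * ∑ j, |pd j (nld H) y| ≤
            ∑ i, V i y * pd i (nld H) y := by
  have hn' : (0 : ℝ) < n := by exact_mod_cast hn
  set m₀ : ℝ := n * (n * (1 / τ * M)) with hm₀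
  have hm₀p : 0 < m₀ := by positivity
  set MΛ : ℝ := n * (n * (M * Λ)) with hMΛ
  have hMΛp : 0 < MΛ := by positivity
  obtain ⟨θ, hθ, C, hC, hpt⟩ := pt_est n hn τ (M + MΛ) Λ cbar m₀ hτ (by positivity) hΛ hcb hm₀p
  obtain ⟨C1, hC1, hb1⟩ := det_adj_bound n M
  obtain ⟨C2, hC2, hb2⟩ := det_adj_bound n Λ
  refine ⟨θ, hθ, C, hC, M + dbar * C1 * C2, by positivity, cbar * m₀ + MΛ, by positivity, ?_⟩
  intro Ω H a t c d hc hd0 hd1 S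
  have hdet : ∀ y ∈ Ω, (Matrix.of fun i j => H i j y).det ≠ 0 := fun y hy =>
    (S.pos y hy).det_pos.ne'
  set J : Fin n → Fin n → Eu n → ℝ := fun i j y => (Matrix.of fun i j => H i j y)⁻¹ i j with hJ
  have smJ : ∀ i j, ContDiffOn ℝ (⊤ : ℕ∞) (J i j) Ω := fun i j => contDiffOn_matinv S.smH hdet i j
  set w : Fin n → Eu n → ℝ := fun j y => ∑ p, ∑ q, J p q y * pd j (H p q) y with hw
  set g : Fin n → Eu n → ℝ := fun m y => ∑ p, ∑ q, a p q y * pd m (H p q) y with hg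
  have smw : ∀ j, ContDiffOn ℝ (⊤ : ℕ∞) (w j) Ω := fun j =>
    ContDiffOn.sum fun p _ => ContDiffOn.sum fun q _ => (smJ p q).mul (smooth_pd j S.op (S.smH p q))
  have smg : ∀ j, ContDiffOn ℝ (⊤ : ℕ∞) (g j) Ω := fun j =>
    ContDiffOn.sum fun p _ => ContDiffOn.sum fun q _ => (S.sma p q).mul (smooth_pd j S.op (S.smH p q))
  set V : Fin n → Eu n → ℝ := fun i y => ∑ m, J i m y * g m y - ∑ j, a i j y * w j y with hV
  have smV : ∀ j, ContDiffOn ℝ (⊤ : ℕ∞) (V j) Ω := fun i =>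
    (ContDiffOn.sum fun m _ => (smJ i m).mul (smg m)).sub
      (ContDiffOn.sum fun m _ => (S.sma i m).mul (smw m))
  refine ⟨V, smV, fun y hy => ?_⟩
  have dH : ∀ i j, DifferentiableAt ℝ (H i j) y := fun i j => smooth_diffAt S.op (S.smH i j) hy
  have dpH : ∀ l i j, DifferentiableAt ℝ (pd l (H i j)) y := fun l i j =>
    smooth_diffAt S.op (smooth_pd l S.op (S.smH i j)) hy
  have dJ : ∀ i j, DifferentiableAt ℝ (J i j) y := fun i j => smooth_diffAt S.op (smJ i j) hy
  have dda : ∀ i j, DifferentiableAt ℝ (a i j) y := fun i j => smooth_diffAt S.op (S.sma i j) hy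
  have dw : ∀ i, DifferentiableAt ℝ (w i) y := fun i => smooth_diffAt S.op (smw i) hy
  have dg : ∀ i, DifferentiableAt ℝ (g i) y := fun i => smooth_diffAt S.op (smg i) hy
  set Hm : Matrix (Fin n) (Fin n) ℝ := Matrix.of fun i j => H i j y with hHm
  set am : Matrix (Fin n) (Fin n) ℝ := Matrix.of fun i j => a i j y with ham
  set h : Fin n → Matrix (Fin n) (Fin n) ℝ := fun l => Matrix.of fun i j => pd l (H i j) y with hh
  have hHpos : Hm.PosDef := S.pos y hy
  have hapos : am.PosDef := S.apos y hy
  have hHu : IsUnit Hm.det := hHpos.det_pos.ne'.isUnit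
  have hHsym : ∀ z ∈ Ω, ∀ i j, H i j z = H j i z := by
    intro z hz i j
    have := (S.pos z hz).isHermitian.apply j i
    simpa using this
  have hJsym : ∀ i j, Hm⁻¹ i j = Hm⁻¹ j i := by
    intro i j
    have := hHpos.inv.isHermitian.apply j i
    simpa using this
  have hs1 : ∀ i p q, h i p q = h i q p := by
    intro i p q
    simp only [hh, Matrix.of_apply]
    exact pd_congr i S.op (fun z hz => hHsym z hz p q) hy
  have hs2 : ∀ i p q, h i p q = h q p i := fun i p q => S.dsym y hy p q i
  have hh2 : ∀ i j p q, pd i (pd j (H p q)) y = pd p (pd q (H i j)) y := by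
    intro i j p q
    rw [pd_congr i S.op (fun z hz => S.dsym z hz p q j) hy, pd_comm i q S.op (S.smH p j) hy,
      pd_comm p q S.op (S.smH i j) hy]
    refine pd_congr q S.op (fun z hz => ?_) hy
    rw [pd_congr i S.op (fun z hz => hHsym z hz p j) hz, S.dsym z hz j p i]
    exact pd_congr p S.op (fun z hz => hHsym z hz j i) hz
  have hHJ : ∀ i j, ∑ k, Hm i k * Hm⁻¹ k j = if i = j then 1 else 0 := by
    intro i j
    rw [← Matrix.mul_apply, Matrix.mul_nonsing_inv _ hHu, Matrix.one_apply]
  have hwpd : ∀ j, pd j (nld H) y = - w j y := fun j => S.pd_nld hy j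
  -- divergence
  have pdw : ∀ i j, pd i (w j) y =
      ∑ p, ∑ q, (pd i (J p q) y * h j p q + Hm⁻¹ p q * pd i (pd j (H p q)) y) := by
    intro i j
    have hm : ∀ p q, DifferentiableAt ℝ (fun y => J p q y * pd j (H p q) y) y :=
      fun p q => (dJ p q).fun_mul (dpH j p q)
    rw [hw]
    simp only []
    rw [pd_sum i _ (fun p _ => DifferentiableAt.fun_sum fun q _ => hm p q)]
    refine Finset.sum_congr rfl fun p _ => ?_
    rw [pd_sum i _ (fun q _ => hm p q)]
    refine Finset.sum_congr rfl fun q _ => ?_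
    rw [pd_mul i (dJ p q) (dpH j p q)]
    rfl
  have pdg : ∀ i j, pd i (g j) y =
      ∑ p, ∑ q, (pd i (a p q) y * h j p q + am p q * pd i (pd j (H p q)) y) := by
    intro i j
    have hm : ∀ p q, DifferentiableAt ℝ (fun y => a p q y * pd j (H p q) y) y :=
      fun p q => (dda p q).fun_mul (dpH j p q)
    rw [hg]
    simp only []
    rw [pd_sum i _ (fun p _ => DifferentiableAt.fun_sum fun q _ => hm p q)]
    refine Finset.sum_congr rfl fun p _ => ?_
    rw [pd_sum i _ (fun q _ => hm p q)]
    refine Finset.sum_congr rfl fun q _ => ?_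
    rw [pd_mul i (dda p q) (dpH j p q)]
    rfl
  have pdV : ∀ i, pd i (V i) y = ∑ m, (pd i (J i m) y * g m y + Hm⁻¹ i m * pd i (g m) y) -
      ∑ j, (pd i (a i j) y * w j y + am i j * pd i (w j) y) := by
    intro i
    rw [hV]
    simp only []
    rw [pd_sub i (DifferentiableAt.fun_sum fun m _ => (dJ i m).fun_mul (dg m))
      (DifferentiableAt.fun_sum fun m _ => (dda i m).fun_mul (dw m)),
      pd_sum i _ (fun m _ => (dJ i m).fun_mul (dg m)),
      pd_sum i _ (fun m _ => (dda i m).fun_mul (dw m))]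
    congr 1
    · refine Finset.sum_congr rfl fun m _ => ?_
      rw [pd_mul i (dJ i m) (dg m)]
    · refine Finset.sum_congr rfl fun m _ => ?_
      rw [pd_mul i (dda i m) (dw m)]; rfl
  have hdiv := div_alg am Hm⁻¹ Hm h (fun i j p q => pd i (pd j (H p q)) y) (fun i j k => t i j k y)
    (fun l i j => pd l (a i j) y) (fun l i j => pd l (J i j) y) (fun j => w j y) (fun m => g m y)
    hHJ hs1 hs2 hh2 (fun l i j => S.da y hy l i j)
    (fun l i j => pd_inv S.op S.smH hdet l i j hy) (fun j => rfl)
  -- the equation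
  set e : ℝ := d * (am.det * Hm.det) with he
  set m : Fin n → ℝ := fun k => ∑ i, ∑ j, am⁻¹ j i * t i j k y with hm
  set T : Fin n → ℝ := fun k => ∑ i, ∑ j, t i j k y * H i j y with hT
  have hgm : ∀ k, g k y = - e * (w k y + ∑ l, m l * H l k y) - ∑ l, T l * H l k y :=
    fun k => S.diff_eq hy k
  have hJg : ∀ q, ∑ k, Hm⁻¹ q k * g k y = -(e * ∑ k, Hm⁻¹ q k * w k y + e * m q + T q) := by
    intro q
    have hX : ∀ X : Fin n → ℝ, ∑ k, Hm⁻¹ q k * ∑ l, X l * H l k y = X q := by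
      intro X
      simp only [Finset.mul_sum]
      rw [Finset.sum_comm]
      have : ∀ l, ∑ k, Hm⁻¹ q k * (X l * H l k y) = X l * if l = q then 1 else 0 := by
        intro l
        rw [← hHJ, Finset.mul_sum]
        refine Finset.sum_congr rfl fun k _ => ?_
        rw [hJsym q k, hHm, Matrix.of_apply]; ring
      simp [this]
    have : ∀ k, Hm⁻¹ q k * g k y = -e * (Hm⁻¹ q k * w k y) - e * (Hm⁻¹ q k * ∑ l, m l * H l k y)
        - Hm⁻¹ q k * ∑ l, T l * H l k y := by
      intro k; rw [hgm]; ring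
    simp only [this, Finset.sum_sub_distrib, ← Finset.mul_sum, hX]
    ring
  have he0 : 0 ≤ e := by
    have := hHpos.det_pos
    have := hapos.det_pos
    positivity
  have htr : 0 ≤ ∑ i, ∑ j, a i j y * H i j y := by
    have := trace_mul_nonneg' hapos.posSemidef hHpos.posSemidef
    refine this.trans_eq ?_
    rw [Matrix.trace]
    refine Finset.sum_congr rfl fun i _ => ?_
    rw [Matrix.diag_apply, Matrix.mul_apply]
    refine Finset.sum_congr rfl fun j _ => ?_
    rw [ham, hHm, Matrix.of_apply, Matrix.of_apply, hHsym y hy]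
  have he1 : e ≤ cbar := by
    have := S.eq y hy
    rw [← ham, ← hHm, ← he] at this
    linarith
  have hainv : ∀ i j, |am⁻¹ i j| ≤ 1 / τ := fun i j =>
    inv_entry_le hτ (S.elip y hy) hapos.det_pos.ne'.isUnit i j
  have hmb : ∀ k, |m k| ≤ m₀ := fun k => abs_sum_fin_le2 _ _ fun i j => by
    rw [abs_mul]
    exact mul_le_mul (hainv j i) (S.tbd y hy i j k) (abs_nonneg _) (by positivity)
  have hTb : ∀ k, |T k| ≤ MΛ := fun k => abs_sum_fin_le2 _ _ fun i j => by
    rw [abs_mul]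
    exact mul_le_mul (S.tbd y hy i j k) (S.Hbd y hy i j) (abs_nonneg _) hM.le
  have hSb : ∀ j, |∑ i, pd i (a i j) y| ≤ MΛ := by
    intro j
    simp only [S.da y hy]
    refine abs_sum_fin_le2 _ _ fun i k => ?_
    rw [abs_mul]
    exact mul_le_mul (S.tbd y hy i j k) (S.Hbd y hy k i) (abs_nonneg _) hM.le
  have hest := hpt Hm Hm⁻¹ am h (fun i j k => t i j k y) e m T (fun j => ∑ i, pd i (a i j) y)
    (fun j => w j y) hHpos rfl (fun j => by ext p q; exact hs1 j q p) (S.elip y hy) (S.Hbd y hy)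
    (fun i j k => (S.tbd y hy i j k).trans (by linarith)) hmb
    (fun k => (hTb k).trans (by linarith)) (fun k => (hSb k).trans (by linarith)) he0 he1
    (fun j => rfl)
  have hVe : ∀ i, V i y = ∑ j, (am i j + e * Hm⁻¹ i j) * (pd j (nld H) y) - (e * m i + T i) := by
    intro i
    have : V i y = ∑ k, Hm⁻¹ i k * g k y - ∑ j, am i j * w j y := rfl
    rw [this, hJg]
    simp only [hwpd, add_mul, Finset.sum_add_distrib, mul_neg, Finset.sum_neg_distrib,
      Finset.mul_sum, mul_assoc]
    ring
  have hemT : ∀ i, |e * m i + T i| ≤ cbar * m₀ + MΛ := by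
    intro i
    refine (abs_add_le _ _).trans (add_le_add ?_ (hTb i))
    rw [abs_mul, abs_of_nonneg he0]
    exact mul_le_mul he1 (hmb i) (abs_nonneg _) hcb.le
  refine ⟨?_, ?_, ?_⟩
  · have h1 : ∑ i, pd i (V i) y = -(∑ i, (∑ j, (pd i (a i j) y * w j y + am i j *
        (∑ p, ∑ q, (pd i (J p q) y * h j p q + Hm⁻¹ p q * pd i (pd j (H p q)) y)))
      - ∑ m, (pd i (J i m) y * g m y + Hm⁻¹ i m * ∑ p, ∑ q,
        (pd i (a p q) y * h m p q + am p q * pd i (pd m (H p q)) y)))) := by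
      rw [← Finset.sum_neg_distrib]
      refine Finset.sum_congr rfl fun i _ => ?_
      rw [pdV]
      simp only [pdw, pdg]
      ring
    rw [h1, hdiv]
    simp only [hJg, hwpd, neg_sq, mul_neg, Finset.sum_neg_distrib]
    linarith
  · intro i
    rw [hVe]
    refine (abs_sub _ _).trans (add_le_add ?_ (hemT i))
    refine (Finset.abs_sum_le_sum_abs _ _).trans ?_
    rw [Finset.mul_sum]
    refine Finset.sum_le_sum fun j _ => ?_
    rw [abs_mul]
    refine mul_le_mul_of_nonneg_right ?_ (abs_nonneg _)
    refine (abs_add_le _ _).trans (add_le_add (S.abd y hy i j) ?_)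
    have h2 : e * Hm⁻¹ i j = d * am.det * Hm.adjugate i j := by
      rw [Matrix.inv_def, Matrix.smul_apply, Ring.inverse_eq_inv', smul_eq_mul, he]
      have := hHpos.det_pos.ne'
      field_simp
    rw [h2, abs_mul, abs_mul, abs_of_nonneg hd0]
    have h3 := (hb1 am (S.abd y hy)).1
    have h4 := (hb2 Hm (S.Hbd y hy)).2 i j
    gcongr
  · have h1 := quad_ge (S.elip y hy) (fun j => pd j (nld H) y)
    have h2 := quad_ge (τ := 0) (a := Hm⁻¹) (by simpa using hHpos.inv.posSemidef)
      (fun j => pd j (nld H) y)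
    have h3 : ∑ i, V i y * pd i (nld H) y =
        ∑ i, ∑ j, am i j * pd i (nld H) y * pd j (nld H) y +
        e * ∑ i, ∑ j, Hm⁻¹ i j * pd i (nld H) y * pd j (nld H) y
        - ∑ i, (e * m i + T i) * pd i (nld H) y := by
      rw [Finset.mul_sum, ← Finset.sum_add_distrib, ← Finset.sum_sub_distrib]
      refine Finset.sum_congr rfl fun i _ => ?_
      rw [hVe, sub_mul, Finset.sum_mul]
      congr 1
      rw [Finset.mul_sum, ← Finset.sum_add_distrib]
      refine Finset.sum_congr rfl fun j _ => ?_
      ring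
    have h4 : ∑ i, (e * m i + T i) * pd i (nld H) y ≤ (cbar * m₀ + MΛ) * ∑ j, |pd j (nld H) y| := by
      rw [Finset.mul_sum]
      refine Finset.sum_le_sum fun i _ => ?_
      refine (le_abs_self _).trans ?_
      rw [abs_mul]
      exact mul_le_mul_of_nonneg_right (hemT i) (abs_nonneg _)
    rw [zero_mul] at h2
    have h5 := mul_nonneg he0 h2
    rw [h3]
    linarith

open MeasureTheory

lemma cont_cut {n : ℕ} {Ω : Set (Eu n)} (hΩ : IsOpen Ω) {η G : Eu n → ℝ} (hη : Continuous η)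
    (hs : tsupport η ⊆ Ω) (hG : ContinuousOn G Ω) : Continuous fun y => η y * G y := by
  refine continuous_of_tsupport fun x hx => ?_
  have hx' : x ∈ tsupport η := closure_mono (fun y hy => left_ne_zero_of_mul hy) hx
  exact hη.continuousAt.mul (hG.continuousAt (hΩ.mem_nhds (hs hx')))

lemma int_cut {n : ℕ} {Ω : Set (Eu n)} (hΩ : IsOpen Ω) {η G : Eu n → ℝ} (hη : Continuous η)
    (hc : HasCompactSupport η)
    (hs : tsupport η ⊆ Ω) (hG : ContinuousOn G Ω) : Integrable fun y => η y * G y :=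
  (cont_cut hΩ hη hs hG).integrable_of_hasCompactSupport hc.mul_right

lemma smooth_cut {n : ℕ} {Ω : Set (Eu n)} (hΩ : IsOpen Ω) {η G : Eu n → ℝ}
    (hη : ContDiff ℝ (⊤ : ℕ∞) η)
    (hs : tsupport η ⊆ Ω) (hG : ContDiffOn ℝ (⊤ : ℕ∞) G Ω) :
    ContDiff ℝ (⊤ : ℕ∞) fun y => η y * G y := by
  rw [contDiff_iff_contDiffAt]
  intro x
  by_cases hx : x ∈ tsupport η
  · exact hη.contDiffAt.mul (hG.contDiffAt (hΩ.mem_nhds (hs hx)))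
  · have h0 : (fun y => η y * G y) =ᶠ[nhds x] fun _ => 0 := by
      filter_upwards [(isClosed_tsupport η).isOpen_compl.mem_nhds hx] with y hy
      rw [image_eq_zero_of_notMem_tsupport hy, zero_mul]
    exact contDiffAt_const.congr_of_eventuallyEq h0

lemma pd_cont {n : ℕ} {F : Eu n → ℝ} (hF : ContDiff ℝ (⊤ : ℕ∞) F) (i : Fin n) :
    Continuous (pd i F) := by
  unfold pd
  exact (hF.continuous_fderiv (by simp)).clm_apply continuous_const

lemma pd_tsupport {n : ℕ} {F : Eu n → ℝ} (i : Fin n) : tsupport (pd i F) ⊆ tsupport F := by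
  refine (closure_mono ?_).trans (tsupport_fderiv_subset ℝ (f := F))
  intro y hy h
  exact hy (by unfold pd; rw [h]; simp)

lemma pd_zero_off {n : ℕ} {F : Eu n → ℝ} (i : Fin n) {y : Eu n} (hy : y ∉ tsupport F) :
    pd i F y = 0 := image_eq_zero_of_notMem_tsupport fun h => hy (pd_tsupport i h)

lemma int_pd_zero {n : ℕ} {F : Eu n → ℝ} (hF : ContDiff ℝ (⊤ : ℕ∞) F) (hc : HasCompactSupport F)
    (i : Fin n) : Integrable (pd i F) ∧ ∫ y, pd i F y = 0 := by
  have hi : Integrable (pd i F) := (pd_cont hF i).integrable_of_hasCompactSupport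
    (hc.mono' ((subset_tsupport _).trans (pd_tsupport i)))
  refine ⟨hi, ?_⟩
  have := integral_mul_fderiv_eq_neg_fderiv_mul_of_integrable (μ := (volume : Measure (Eu n)))
    (f := fun _ : Eu n => (1 : ℝ)) (g := F) (v := EuclideanSpace.single i 1) (by simp)
    (by simp only [one_mul]; exact hi) (by simpa using hF.continuous.integrable_of_hasCompactSupport hc)
    (fun x _ => differentiableAt_const _) (fun x _ => hF.differentiable (by simp) x)
  simpa [pd] using this

/-- A cutoff function. -/
structure Cut (n : ℕ) (W : Set (Eu n)) (L : ℝ) (η : Eu n → ℝ) : Prop where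
  sm : ContDiff ℝ (⊤ : ℕ∞) η
  cpt : HasCompactSupport η
  supp : tsupport η ⊆ W
  nn : ∀ y, 0 ≤ η y
  le1 : ∀ y, η y ≤ 1
  grad : ∀ y, ∑ i, |pd i η y| ≤ L

/-- The differential inequality. -/
structure USys (n : ℕ) (Ω : Set (Eu n)) (u : Eu n → ℝ) (V : Fin n → Eu n → ℝ)
    (θ C Λ β τ : ℝ) : Prop where
  op : IsOpen Ω
  smu : ContDiffOn ℝ (⊤ : ℕ∞) u Ω
  smV : ∀ i, ContDiffOn ℝ (⊤ : ℕ∞) (V i) Ω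
  one : ∀ y ∈ Ω, 1 ≤ u y
  div : ∀ y ∈ Ω, θ * ∑ j, (pd j u y) ^ 2 - C ≤ ∑ i, pd i (V i) y
  bd : ∀ y ∈ Ω, ∀ i, |V i y| ≤ Λ * ∑ j, |pd j u y| + β
  el : ∀ y ∈ Ω, τ * ∑ j, (pd j u y) ^ 2 - β * ∑ j, |pd j u y| ≤ ∑ i, V i y * pd i u y

lemma cauchy_fin {n : ℕ} (x : Fin n → ℝ) : (∑ i, |x i|) ^ 2 ≤ n * ∑ i, x i ^ 2 := by
  have h := Finset.sum_mul_sq_le_sq_mul_sq Finset.univ (fun _ : Fin n => (1:ℝ)) (fun i => |x i|)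
  simpa using h

set_option maxHeartbeats 1000000 in
lemma energy (n : ℕ) (hn : 0 < n) (θ C Λ β τ : ℝ) (hθ : 0 < θ) (hC : 0 < C) (hΛ : 0 < Λ)
    (hβ : 0 < β) (hτ : 0 < τ) :
    ∃ E > 0, ∀ (Ω : Set (Eu n)) (u : Eu n → ℝ) (V : Fin n → Eu n → ℝ),
      USys n Ω u V θ C Λ β τ → ∀ (L : ℝ) (η : Eu n → ℝ), Cut n Ω L η → ∀ p : ℝ, 0 ≤ p →
      ∫ y, η y * (η y * (u y ^ p * ∑ j, (pd j u y) ^ 2)) ≤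
        E * (1 + p) * ∫ y, (η y ^ 2 + (∑ i, |pd i η y|) ^ 2) * u y ^ p := by
  have hn' : (0 : ℝ) < n := by exact_mod_cast hn
  set C2 : ℝ := C + n * β ^ 2 / (4 * τ) + 2 * n * Λ ^ 2 / θ + β ^ 2 + 1 with hC2
  have hC2p : 0 < C2 := by positivity
  refine ⟨C2 * (2 / θ), by positivity, ?_⟩
  intro Ω u V S L η hη p hp
  have hup : ContDiffOn ℝ (⊤ : ℕ∞) (fun y => u y ^ p) Ω :=
    S.smu.rpow_const_of_ne fun y hy => (zero_lt_one.trans_le (S.one y hy)).ne'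
  set F : Fin n → Eu n → ℝ := fun i y => η y * (η y * (u y ^ p * V i y)) with hF
  have hFs : ∀ i, ContDiff ℝ (⊤ : ℕ∞) (F i) := fun i =>
    smooth_cut S.op hη.sm hη.supp (hη.sm.contDiffOn.mul (hup.mul (S.smV i)))
  have hFc : ∀ i, HasCompactSupport (F i) := fun i => hη.cpt.mul_right
  have hhInt := fun i => int_pd_zero (hFs i) (hFc i) i
  set s : Eu n → ℝ := fun y => ∑ i, |pd i η y| with hs
  have hsc : Continuous s := continuous_finsetSum _ fun i _ => (pd_cont hη.sm i).abs
  have hss : tsupport s ⊆ tsupport η := by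
    refine closure_minimal ?_ (isClosed_tsupport η)
    intro y hy
    by_contra hny
    exact hy (by simp [hs, pd_zero_off _ hny])
  have hηc := hη.sm.continuous
  have hpt : ∀ y, θ / 2 * (η y * (η y * (u y ^ p * ∑ j, (pd j u y) ^ 2))) -
      C2 * (1 + p) * ((η y ^ 2 + s y ^ 2) * u y ^ p) ≤ ∑ i, pd i (F i) y := by
    intro y
    by_cases hy : y ∈ tsupport η
    swap
    · have h1 : ∀ i, pd i (F i) y = 0 := fun i => by
        refine pd_zero_off i fun h => hy ?_
        exact closure_mono (fun y hy => left_ne_zero_of_mul hy) h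
      have h2 : s y = 0 := image_eq_zero_of_notMem_tsupport fun h => hy (hss h)
      simp [h1, h2, image_eq_zero_of_notMem_tsupport hy]
    have hyΩ := hη.supp hy
    have hu1 := S.one y hyΩ
    have hu0 : 0 < u y := zero_lt_one.trans_le hu1
    have dη : DifferentiableAt ℝ η y := hη.sm.differentiable (by simp) y
    have du : DifferentiableAt ℝ u y := smooth_diffAt S.op S.smu hyΩ
    have dup : DifferentiableAt ℝ (fun y => u y ^ p) y := smooth_diffAt S.op hup hyΩ
    have dV : ∀ i, DifferentiableAt ℝ (V i) y := fun i => smooth_diffAt S.op (S.smV i) hyΩ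
    have pdup : ∀ i, pd i (fun y => u y ^ p) y = p * u y ^ (p - 1) * pd i u y := by
      intro i
      unfold pd
      rw [(du.hasFDerivAt.rpow_const (Or.inl hu0.ne')).fderiv]
      simp
    have hpd : ∀ i, pd i (F i) y = 2 * η y * pd i η y * (u y ^ p * V i y) +
        η y ^ 2 * (p * u y ^ (p - 1) * (V i y * pd i u y)) + η y ^ 2 * u y ^ p * pd i (V i) y := by
      intro i
      have hF' : F i = fun y => η y * (η y * (u y ^ p * V i y)) := rfl
      rw [hF', pd_mul i dη (dη.fun_mul (dup.fun_mul (dV i))), pd_mul i dη (dup.fun_mul (dV i)),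
        pd_mul i dup (dV i), pdup]
      ring
    simp only [hpd, Finset.sum_add_distrib, ← Finset.mul_sum]
    set g2 : ℝ := ∑ j, (pd j u y) ^ 2 with hg2
    set r : ℝ := ∑ j, |pd j u y| with hr
    have hr0 : 0 ≤ r := Finset.sum_nonneg fun i _ => abs_nonneg _
    have hs0 : 0 ≤ s y := Finset.sum_nonneg fun i _ => abs_nonneg _
    have hrg : r ^ 2 ≤ n * g2 := cauchy_fin _
    have hη0 := hη.nn y
    have hP : 0 < u y ^ p := Real.rpow_pos_of_pos hu0 p
    have hP1 : 0 ≤ u y ^ (p - 1) := (Real.rpow_pos_of_pos hu0 _).le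
    have hPP : u y ^ (p - 1) ≤ u y ^ p := Real.rpow_le_rpow_of_exponent_le hu1 (by linarith)
    have hdiv := S.div y hyΩ
    have hel := S.el y hyΩ
    have hcross : -(2 * η y * s y * (Λ * r + β)) * u y ^ p ≤
        ∑ i, 2 * η y * pd i η y * (u y ^ p * V i y) := by
      have : ∀ i, -(2 * η y * |pd i η y| * (Λ * r + β) * u y ^ p) ≤
          2 * η y * pd i η y * (u y ^ p * V i y) := by
        intro i
        refine neg_le_of_abs_le ?_
        rw [abs_mul, abs_mul, abs_mul, abs_mul, abs_of_nonneg hη0, abs_of_pos hP, abs_two]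
        have := S.bd y hyΩ i
        have h3 : 0 ≤ 2 * η y * |pd i η y| * u y ^ p := by positivity
        nlinarith [mul_le_mul_of_nonneg_left this h3]
      refine le_trans (le_of_eq ?_) (Finset.sum_le_sum fun i _ => this i)
      rw [Finset.sum_neg_distrib, ← Finset.sum_mul, ← Finset.sum_mul, ← Finset.mul_sum]
      ring
    have hel2 : -(n * β ^ 2 / (4 * τ)) ≤ ∑ i, V i y * pd i u y := by
      refine le_trans ?_ hel
      have h4 : τ * r ^ 2 ≤ τ * (n * g2) := mul_le_mul_of_nonneg_left hrg hτ.le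
      have h5 : 0 ≤ τ * (r - n * β / (2 * τ)) ^ 2 := by positivity
      have h6 : τ * (r - n * β / (2 * τ)) ^ 2 = τ * r ^ 2 - n * β * r + n * (n * β ^ 2 / (4 * τ)) := by
        field_simp; ring
      have : 0 ≤ n * (τ * g2 - β * r + n * β ^ 2 / (4 * τ)) := by nlinarith
      have := nonneg_of_mul_nonneg_right this hn'
      linarith
    have hmid : -(η y ^ 2 * (p * u y ^ p * (n * β ^ 2 / (4 * τ)))) ≤
        η y ^ 2 * (p * u y ^ (p - 1) * ∑ i, V i y * pd i u y) := by
      have h7 : -(p * u y ^ p * (n * β ^ 2 / (4 * τ))) ≤ p * u y ^ (p - 1) * ∑ i, V i y * pd i u y := by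
        have h8 : p * u y ^ (p - 1) * (-(n * β ^ 2 / (4 * τ))) ≤
          p * u y ^ (p - 1) * ∑ i, V i y * pd i u y :=
          mul_le_mul_of_nonneg_left hel2 (by positivity)
        have h9 : p * u y ^ (p - 1) * (n * β ^ 2 / (4 * τ)) ≤ p * u y ^ p * (n * β ^ 2 / (4 * τ)) := by
          gcongr
        linarith
      have := mul_le_mul_of_nonneg_left h7 (sq_nonneg (η y))
      linarith
    have hlast : η y ^ 2 * u y ^ p * (θ * g2 - C) ≤ η y ^ 2 * u y ^ p * ∑ i, pd i (V i) y :=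
      mul_le_mul_of_nonneg_left hdiv (by positivity)
    have hyoung : 2 * η y * s y * (Λ * r + β) ≤ θ / 2 * η y ^ 2 * g2 +
        (2 * n * Λ ^ 2 / θ + β ^ 2 + 1) * (η y ^ 2 + s y ^ 2) := by
      have y1 : 2 * η y * s y * (Λ * r) ≤ θ / 2 * η y ^ 2 * g2 + 2 * n * Λ ^ 2 / θ * s y ^ 2 := by
        have h10 : 0 ≤ θ / (2 * n) * (η y * r - 2 * n * Λ / θ * s y) ^ 2 := by positivity
        have h11 : θ / (2 * n) * (η y * r - 2 * n * Λ / θ * s y) ^ 2 =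
          θ / (2 * n) * η y ^ 2 * r ^ 2 - 2 * η y * s y * (Λ * r) + 2 * n * Λ ^ 2 / θ * s y ^ 2 := by
          field_simp; ring
        have h12 : θ / (2 * n) * η y ^ 2 * r ^ 2 ≤ θ / (2 * n) * η y ^ 2 * (n * g2) :=
          mul_le_mul_of_nonneg_left hrg (by positivity)
        have h13 : θ / (2 * n) * η y ^ 2 * (n * g2) = θ / 2 * η y ^ 2 * g2 := by field_simp
        linarith
      have y2 : 2 * η y * s y * β ≤ β ^ 2 * η y ^ 2 + s y ^ 2 := by
        nlinarith [sq_nonneg (η y * β - s y)]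
      have y3 : 0 ≤ 2 * n * Λ ^ 2 / θ * η y ^ 2 := by positivity
      have y4 : 0 ≤ β ^ 2 * s y ^ 2 := by positivity
      nlinarith [sq_nonneg (η y)]
    have hyP := mul_le_mul_of_nonneg_right hyoung hP.le
    have hCs : 0 ≤ (C + n * β ^ 2 / (4 * τ)) * s y ^ 2 * u y ^ p := by positivity
    have hnb : 0 ≤ n * β ^ 2 / (4 * τ) := by positivity
    have hE1 : C2 * (1 + p) * ((η y ^ 2 + s y ^ 2) * u y ^ p) ≥
        (C * η y ^ 2 + p * (n * β ^ 2 / (4 * τ)) * η y ^ 2 +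
          (2 * n * Λ ^ 2 / θ + β ^ 2 + 1) * (η y ^ 2 + s y ^ 2)) * u y ^ p := by
      rw [← mul_assoc]
      refine mul_le_mul_of_nonneg_right ?_ hP.le
      set A := n * β ^ 2 / (4 * τ)
      have hB0 : 0 ≤ 2 * n * Λ ^ 2 / θ + β ^ 2 + 1 := by positivity
      set B := 2 * n * Λ ^ 2 / θ + β ^ 2 + 1
      have hCB : C2 = C + A + B := by rw [hC2]; ring
      rw [hCB]
      have q1 : 0 ≤ C * p * η y ^ 2 := by positivity
      have q2 : 0 ≤ C * (1 + p) * s y ^ 2 := by positivity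
      have q3 : 0 ≤ A * η y ^ 2 := by positivity
      have q4 : 0 ≤ A * (1 + p) * s y ^ 2 := by positivity
      have q5 : 0 ≤ B * p * (η y ^ 2 + s y ^ 2) := by positivity
      have q6 : (C + A + B) * (1 + p) * (η y ^ 2 + s y ^ 2) = (C * η y ^ 2 + p * A * η y ^ 2 +
          B * (η y ^ 2 + s y ^ 2)) + (C * p * η y ^ 2 + C * (1 + p) * s y ^ 2 + A * η y ^ 2 +
          A * (1 + p) * s y ^ 2 + B * p * (η y ^ 2 + s y ^ 2)) := by ring
      linarith
    linarith
  have i1 : Integrable fun y => η y * (η y * (u y ^ p * ∑ j, (pd j u y) ^ 2)) := by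
    refine int_cut S.op hηc hη.cpt hη.supp (hηc.continuousOn.mul (hup.continuousOn.mul ?_))
    exact continuousOn_finsetSum _ fun j _ => ((smooth_pd j S.op S.smu).continuousOn).pow 2
  have i2 : Integrable fun y => (η y ^ 2 + s y ^ 2) * u y ^ p := by
    have a1 := int_cut S.op hηc hη.cpt hη.supp (hηc.continuousOn.mul hup.continuousOn)
    have a2 := int_cut S.op hsc (hη.cpt.mono' ((subset_tsupport _).trans hss))
      (hss.trans hη.supp) (hsc.continuousOn.mul hup.continuousOn)
    refine (a1.add a2).congr (Filter.Eventually.of_forall fun y => ?_)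
    simp only [Pi.add_apply, Pi.mul_apply]
    ring
  have hI := integral_mono ((i1.const_mul (θ / 2)).sub (i2.const_mul (C2 * (1 + p))))
    (integrable_finsetSum _ fun i _ => (hhInt i).1) hpt
  rw [integral_finsetSum _ (fun i _ => (hhInt i).1)] at hI
  simp only [(hhInt _).2, Finset.sum_const_zero] at hI
  simp only [Pi.sub_apply] at hI
  rw [integral_sub (i1.const_mul _) (i2.const_mul _), integral_const_mul, integral_const_mul] at hI
  have : C2 * (2 / θ) * (1 + p) * ∫ y, (η y ^ 2 + s y ^ 2) * u y ^ p =
    (2 / θ) * (C2 * (1 + p) * ∫ y, (η y ^ 2 + s y ^ 2) * u y ^ p) := by ring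
  rw [this, ← div_le_iff₀' (by positivity)]
  have : (∫ y, η y * (η y * (u y ^ p * ∑ j, (pd j u y) ^ 2))) / (2 / θ) =
    θ / 2 * ∫ y, η y * (η y * (u y ^ p * ∑ j, (pd j u y) ^ 2)) := by field_simp
  linarith

open MeasureTheory

lemma norm_fderiv_le {n : ℕ} (ψ : Eu n → ℝ) (y : Eu n) : ‖fderiv ℝ ψ y‖ ≤ ∑ i, |pd i ψ y| := by
  refine ContinuousLinearMap.opNorm_le_bound _ (Finset.sum_nonneg fun i _ => abs_nonneg _) ?_
  intro v
  have hv : v = ∑ i, v i • EuclideanSpace.single i (1 : ℝ) := by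
    have := (EuclideanSpace.basisFun (Fin n) ℝ).sum_repr v
    simpa using this.symm
  have : fderiv ℝ ψ y v = ∑ i, v i * pd i ψ y := by
    conv_lhs => rw [hv]
    simp [pd]
  rw [this, Finset.sum_mul]
  refine (norm_sum_le _ _).trans (Finset.sum_le_sum fun i _ => ?_)
  rw [norm_mul, mul_comm]
  exact mul_le_mul_of_nonneg_left (PiLp.norm_apply_le v i) (abs_nonneg _)

lemma sobolev_real (n : ℕ) (χ : ℝ) (hχ : Real.HolderConjugate (n : ℝ) χ) :
    ∃ CS > 0, ∀ ψ : Eu n → ℝ, ContDiff ℝ (⊤ : ℕ∞) ψ → HasCompactSupport ψ →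
      ∫ y, |ψ y| ^ χ ≤ CS * (∫ y, ∑ i, |pd i ψ y|) ^ χ := by
  have hfr : Module.finrank ℝ (Eu n) = n := finrank_euclideanSpace_fin
  have hχ0 : 0 < χ := hχ.symm.pos
  set c := lintegralPowLePowLIntegralFDerivConst (volume : Measure (Eu n)) χ with hc
  refine ⟨c + 1, by positivity, ?_⟩
  intro ψ hψ hcs
  have hS := lintegral_pow_le_pow_lintegral_fderiv (volume : Measure (Eu n)) (u := ψ)
    (hψ.of_le (by simp)) hcs (p := χ) (by rw [hfr]; exact hχ)
  rw [← hc] at hS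
  have hDi : Integrable fun y => ∑ i, |pd i ψ y| :=
    integrable_finsetSum _ fun i _ => (int_pd_zero hψ hcs i).1.abs
  have hLi : Integrable fun y => |ψ y| ^ χ := by
    refine Continuous.integrable_of_hasCompactSupport
      (hψ.continuous.abs.rpow_const fun _ => Or.inr hχ0.le) ?_
    refine hcs.mono fun y hy h => hy ?_
    simp only [h, abs_zero]
    exact Real.zero_rpow hχ0.ne'
  have h1 : ∫⁻ y, ‖ψ y‖ₑ ^ χ = ENNReal.ofReal (∫ y, |ψ y| ^ χ) := by
    rw [ofReal_integral_eq_lintegral_ofReal hLi (Filter.Eventually.of_forall fun y => by positivity)]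
    refine lintegral_congr fun y => ?_
    rw [← ENNReal.ofReal_rpow_of_nonneg (abs_nonneg _) hχ0.le, ← Real.norm_eq_abs, ofReal_norm]
  have hD0 : 0 ≤ ∫ y, ∑ i, |pd i ψ y| :=
    integral_nonneg fun y => Finset.sum_nonneg fun i _ => abs_nonneg _
  have h2 : ∫⁻ y, ‖fderiv ℝ ψ y‖ₑ ≤ ENNReal.ofReal (∫ y, ∑ i, |pd i ψ y|) := by
    rw [ofReal_integral_eq_lintegral_ofReal hDi
      (Filter.Eventually.of_forall fun y => Finset.sum_nonneg fun i _ => abs_nonneg _)]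
    refine lintegral_mono fun y => ?_
    rw [← ofReal_norm]
    exact ENNReal.ofReal_le_ofReal (norm_fderiv_le ψ y)
  have h3 : ENNReal.ofReal (∫ y, |ψ y| ^ χ) ≤
      ENNReal.ofReal (c * (∫ y, ∑ i, |pd i ψ y|) ^ χ) := by
    rw [← h1, ENNReal.ofReal_mul c.coe_nonneg, ENNReal.ofReal_coe_nnreal,
      ← ENNReal.ofReal_rpow_of_nonneg hD0 hχ0.le]
    refine hS.trans ?_
    gcongr
  rw [ENNReal.ofReal_le_ofReal_iff (by positivity)] at h3
  refine h3.trans ?_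
  gcongr
  linarith

set_option maxHeartbeats 1000000 in
lemma moser_step (n : ℕ) (hn : 2 ≤ n) (χ : ℝ) (hχ : Real.HolderConjugate (n : ℝ) χ)
    (θ C Λ β τ : ℝ) (hθ : 0 < θ) (hC : 0 < C) (hΛ : 0 < Λ)
    (hβ : 0 < β) (hτ : 0 < τ) :
    ∃ K > 0, ∀ (Ω : Set (Eu n)) (u : Eu n → ℝ) (V : Fin n → Eu n → ℝ),
      USys n Ω u V θ C Λ β τ → ∀ (L : ℝ) (η : Eu n → ℝ) (W W' : Set (Eu n)), 0 ≤ L →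
      MeasurableSet W → MeasurableSet W' → W ⊆ Ω → W' ⊆ Ω → Cut n W L η → (∀ y ∈ W', η y = 1) →
      (∀ p : ℝ, IntegrableOn (fun y => u y ^ p) W) → ∀ p : ℝ, 1 ≤ p →
      ∫ y in W', u y ^ (p * χ) ≤ (K * ((1 + p) ^ 2 * (1 + L ^ 2)) * ∫ y in W, u y ^ p) ^ χ := by
  obtain ⟨E, hE, hen⟩ := energy n (by omega) θ C Λ β τ hθ hC hΛ hβ hτ
  obtain ⟨CS, hCS, hsob⟩ := sobolev_real n χ hχ
  have hχ0 : 0 < χ := hχ.symm.pos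
  have hn0 : (0 : ℝ) < n := by exact_mod_cast (by omega : 0 < n)
  refine ⟨CS ^ χ⁻¹ * (1 + n + E), by positivity, ?_⟩
  intro Ω u V S L η W W' hL hWm hWm' hWΩ hWΩ' hη hη1 hhInt p hp
  have hηΩ : Cut n Ω L η := ⟨hη.sm, hη.cpt, hη.supp.trans hWΩ, hη.nn, hη.le1, hη.grad⟩
  have hE1 := hen Ω u V S L η hηΩ p (by linarith)
  have hup : ContDiffOn ℝ (⊤ : ℕ∞) (fun y => u y ^ p) Ω :=
    S.smu.rpow_const_of_ne fun y hy => (zero_lt_one.trans_le (S.one y hy)).ne'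
  have hηc := hη.sm.continuous
  set s : Eu n → ℝ := fun y => ∑ i, |pd i η y| with hs
  have hsc : Continuous s := continuous_finsetSum _ fun i _ => (pd_cont hη.sm i).abs
  have hss : tsupport s ⊆ tsupport η := by
    refine closure_minimal ?_ (isClosed_tsupport η)
    intro y hy
    by_contra hny
    exact hy (by simp [hs, pd_zero_off _ hny])
  set ψ : Eu n → ℝ := fun y => η y * (η y * u y ^ p) with hψ
  have hψs : ContDiff ℝ (⊤ : ℕ∞) ψ :=
    smooth_cut S.op hη.sm hηΩ.supp (hη.sm.contDiffOn.mul hup)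
  have hψc : HasCompactSupport ψ := hη.cpt.mul_right
  have i1 : Integrable fun y => η y * (η y * (u y ^ p * ∑ j, (pd j u y) ^ 2)) := by
    refine int_cut S.op hηc hη.cpt hηΩ.supp (hηc.continuousOn.mul (hup.continuousOn.mul ?_))
    exact continuousOn_finsetSum _ fun j _ => ((smooth_pd j S.op S.smu).continuousOn).pow 2
  have i2 : Integrable fun y => (η y ^ 2 + s y ^ 2) * u y ^ p := by
    have a1 := int_cut S.op hηc hη.cpt hηΩ.supp (hηc.continuousOn.mul hup.continuousOn)
    have a2 := int_cut S.op hsc (hη.cpt.mono' ((subset_tsupport _).trans hss))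
      (hss.trans hηΩ.supp) (hsc.continuousOn.mul hup.continuousOn)
    refine (a1.add a2).congr (Filter.Eventually.of_forall fun y => ?_)
    simp only [Pi.add_apply, Pi.mul_apply]
    ring
  have i3 : Integrable fun y => ∑ i, |pd i ψ y| :=
    integrable_finsetSum _ fun i _ => (int_pd_zero hψs hψc i).1.abs
  have hpt : ∀ y, ∑ i, |pd i ψ y| ≤ (1 + n * p) * ((η y ^ 2 + s y ^ 2) * u y ^ p) +
      p * (η y * (η y * (u y ^ p * ∑ j, (pd j u y) ^ 2))) := by
    intro y
    by_cases hy : y ∈ tsupport η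
    swap
    · have h1 : ∀ i, pd i ψ y = 0 := fun i => by
        refine pd_zero_off i fun h => hy ?_
        exact closure_mono (fun y hy => left_ne_zero_of_mul hy) h
      have h2 : s y = 0 := image_eq_zero_of_notMem_tsupport fun h => hy (hss h)
      simp [h1, h2, image_eq_zero_of_notMem_tsupport hy]
    have hyΩ := hηΩ.supp hy
    have hu1 := S.one y hyΩ
    have hu0 : 0 < u y := zero_lt_one.trans_le hu1
    have dη : DifferentiableAt ℝ η y := hη.sm.differentiable (by simp) y
    have du : DifferentiableAt ℝ u y := smooth_diffAt S.op S.smu hyΩ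
    have dup : DifferentiableAt ℝ (fun y => u y ^ p) y := smooth_diffAt S.op hup hyΩ
    have pdup : ∀ i, pd i (fun y => u y ^ p) y = p * u y ^ (p - 1) * pd i u y := by
      intro i
      unfold pd
      rw [(du.hasFDerivAt.rpow_const (Or.inl hu0.ne')).fderiv]
      simp
    have hη0 := hη.nn y
    have hP : 0 < u y ^ p := Real.rpow_pos_of_pos hu0 p
    have hP1 : 0 ≤ u y ^ (p - 1) := (Real.rpow_pos_of_pos hu0 _).le
    have hPP : u y ^ (p - 1) ≤ u y ^ p := Real.rpow_le_rpow_of_exponent_le hu1 (by linarith)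
    have hs0 : 0 ≤ s y := Finset.sum_nonneg fun i _ => abs_nonneg _
    have hpd : ∀ i, |pd i ψ y| ≤ 2 * η y * u y ^ p * |pd i η y| +
        p * (η y ^ 2 * u y ^ p) * (1 + (pd i u y) ^ 2) := by
      intro i
      have hF' : ψ = fun y => η y * (η y * u y ^ p) := rfl
      have h1 : pd i ψ y = 2 * η y * u y ^ p * pd i η y +
          p * (η y ^ 2 * u y ^ (p - 1)) * pd i u y := by
        rw [hF', pd_mul i dη (dη.fun_mul dup), pd_mul i dη dup, pdup]
        ring
      rw [h1]
      refine (abs_add_le _ _).trans ?_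
      rw [abs_mul, abs_mul (p * _), abs_of_nonneg (by positivity : 0 ≤ 2 * η y * u y ^ p),
        abs_of_nonneg (by positivity : 0 ≤ p * (η y ^ 2 * u y ^ (p - 1)))]
      have h2 : |pd i u y| ≤ 1 + (pd i u y) ^ 2 := by
        rw [← sq_abs]; nlinarith [sq_nonneg (|pd i u y| - 1), abs_nonneg (pd i u y)]
      gcongr
    refine (Finset.sum_le_sum fun i _ => hpd i).trans ?_
    rw [Finset.sum_add_distrib, ← Finset.mul_sum, ← Finset.mul_sum, Finset.sum_add_distrib]
    have h3 : ∑ i, |pd i η y| = s y := rfl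
    rw [h3]
    simp only [Finset.sum_const, Finset.card_univ, Fintype.card_fin, nsmul_eq_mul, mul_one]
    have h4 : 2 * η y * u y ^ p * s y ≤ (η y ^ 2 + s y ^ 2) * u y ^ p := by
      nlinarith [mul_nonneg (sq_nonneg (η y - s y)) hP.le]
    have h5 : 0 ≤ n * p * s y ^ 2 * u y ^ p := by positivity
    linarith
  have hR : ∫ y, (η y ^ 2 + s y ^ 2) * u y ^ p ≤ (1 + L ^ 2) * ∫ y in W, u y ^ p := by
    have h1 : ∫ y, (η y ^ 2 + s y ^ 2) * u y ^ p = ∫ y in W, (η y ^ 2 + s y ^ 2) * u y ^ p := by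
      rw [setIntegral_eq_integral_of_forall_compl_eq_zero]
      intro y hy
      have hy' : y ∉ tsupport η := fun h => hy (hη.supp h)
      have h2 : s y = 0 := image_eq_zero_of_notMem_tsupport fun h => hy' (hss h)
      simp [h2, image_eq_zero_of_notMem_tsupport hy']
    rw [h1, ← integral_const_mul]
    refine setIntegral_mono_on i2.integrableOn ((hhInt p).const_mul _) hWm ?_
    intro y hy
    have hu0 : 0 < u y := zero_lt_one.trans_le (S.one y (hWΩ hy))
    have hs0 : 0 ≤ s y := Finset.sum_nonneg fun i _ => abs_nonneg _
    have := hη.nn y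
    have := hη.le1 y
    have hsl : s y ≤ L := hη.grad y
    have : η y ^ 2 ≤ 1 := by nlinarith
    have : s y ^ 2 ≤ L ^ 2 := by nlinarith
    exact mul_le_mul_of_nonneg_right (by linarith) (Real.rpow_pos_of_pos hu0 p).le
  have hI := integral_mono i3 ((i2.const_mul (1 + n * p)).add (i1.const_mul p)) hpt
  simp only [Pi.add_apply] at hI
  rw [integral_add (i2.const_mul _) (i1.const_mul _), integral_const_mul, integral_const_mul] at hI
  set R := ∫ y, (η y ^ 2 + s y ^ 2) * u y ^ p with hRdef
  have hR0 : 0 ≤ R := integral_nonneg fun y => by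
    change 0 ≤ _
    by_cases hy : y ∈ tsupport η
    · have hu0 : 0 < u y := zero_lt_one.trans_le (S.one y (hηΩ.supp hy))
      positivity
    · have h2 : s y = 0 := image_eq_zero_of_notMem_tsupport fun h => hy (hss h)
      simp [h2, image_eq_zero_of_notMem_tsupport hy]
  have hI2 : ∫ y, ∑ i, |pd i ψ y| ≤ (1 + n + E) * (1 + p) ^ 2 * R := by
    have h1 : p * ∫ y, η y * (η y * (u y ^ p * ∑ j, (pd j u y) ^ 2)) ≤ p * (E * (1 + p) * R) :=
      mul_le_mul_of_nonneg_left hE1 (by linarith)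
    have hc : (1 + n * p) + p * (E * (1 + p)) ≤ (1 + n + E) * (1 + p) ^ 2 := by
      have hp0 : 0 ≤ p := by linarith
      have q1 : 0 ≤ E * (1 + p) := by positivity
      have q2 : 0 ≤ 2 * p + p ^ 2 + n * (1 + p + p ^ 2) := by positivity
      nlinarith
    have := mul_le_mul_of_nonneg_right hc hR0
    linarith
  have hW0 : 0 ≤ ∫ y in W, u y ^ p := setIntegral_nonneg hWm fun y hy => by
    have hu0 : 0 < u y := zero_lt_one.trans_le (S.one y (hWΩ hy))
    positivity
  have hfin := hsob ψ hψs hψc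
  have hl : ∫ y in W', u y ^ (p * χ) ≤ ∫ y, |ψ y| ^ χ := by
    have hLi : Integrable fun y => |ψ y| ^ χ := by
      refine Continuous.integrable_of_hasCompactSupport
        (hψs.continuous.abs.rpow_const fun _ => Or.inr hχ0.le) ?_
      refine hψc.mono fun y hy h => hy ?_
      simp only [h, abs_zero]
      exact Real.zero_rpow hχ0.ne'
    have h1 : ∫ y in W', u y ^ (p * χ) = ∫ y in W', |ψ y| ^ χ := by
      refine setIntegral_congr_fun hWm' fun y hy => ?_
      have hu0 : 0 < u y := zero_lt_one.trans_le (S.one y (hWΩ' hy))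
      simp only [hψ, hη1 y hy, one_mul]
      rw [abs_of_pos (Real.rpow_pos_of_pos hu0 p), Real.rpow_mul hu0.le]
    rw [h1]
    exact setIntegral_le_integral hLi (Filter.Eventually.of_forall fun y => by positivity)
  refine hl.trans (hfin.trans ?_)
  have hCSχ : CS = (CS ^ χ⁻¹) ^ χ := by rw [← Real.rpow_mul hCS.le, inv_mul_cancel₀ hχ0.ne', Real.rpow_one]
  have hD0 : 0 ≤ ∫ y, ∑ i, |pd i ψ y| :=
    integral_nonneg fun y => Finset.sum_nonneg fun i _ => abs_nonneg _
  calc CS * (∫ y, ∑ i, |pd i ψ y|) ^ χ = (CS ^ χ⁻¹ * ∫ y, ∑ i, |pd i ψ y|) ^ χ := by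
        rw [Real.mul_rpow (by positivity) hD0, ← hCSχ]
    _ ≤ (CS ^ χ⁻¹ * ((1 + n + E) * (1 + p) ^ 2 * ((1 + L ^ 2) * ∫ y in W, u y ^ p))) ^ χ := by
        gcongr
        exact hI2.trans (by gcongr)
    _ = _ := by ring_nf

open MeasureTheory

lemma iter_real (χ C D A0 : ℝ) (hχ : 1 < χ) (hC : 0 < C) (hD : 1 ≤ D) (hA : 0 < A0) :
    ∃ X Z : ℝ, ∀ I : ℕ → ℝ, (∀ k, 0 ≤ I k) → I 0 ≤ A0 →
      (∀ k, I (k + 1) ≤ (C * D ^ k * I k) ^ χ) → ∀ k : ℕ, I k ≤ Real.exp (χ ^ k * X + Z) := by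
  set Y : ℝ := χ * Real.log D / (χ - 1) with hY
  set Z : ℝ := (χ * Real.log C + Y) / (χ - 1) with hZ
  have hχ1 : 0 < χ - 1 := by linarith
  have hY0 : 0 ≤ Y := div_nonneg (mul_nonneg (by linarith) (Real.log_nonneg hD)) hχ1.le
  refine ⟨Z + Real.log A0, -Z, ?_⟩
  intro I hI0 hIA hstep k
  have key : ∀ k : ℕ, I k ≤ Real.exp (χ ^ k * (Z + Real.log A0) - Y * k - Z) := by
    intro k
    induction k with
    | zero => simpa [Real.exp_log hA] using hIA
    | succ k ih =>
      refine (hstep k).trans ?_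
      have hD0 : 0 < D := by linarith
      calc (C * D ^ k * I k) ^ χ ≤
          (C * D ^ k * Real.exp (χ ^ k * (Z + Real.log A0) - Y * k - Z)) ^ χ := by
            have := hI0 k
            gcongr
        _ = Real.exp (χ * (Real.log C + k * Real.log D +
            (χ ^ k * (Z + Real.log A0) - Y * k - Z))) := by
            rw [mul_comm χ, Real.exp_mul, Real.exp_add, Real.exp_add, Real.exp_log hC,
              Real.exp_nat_mul, Real.exp_log hD0]
        _ = _ := by
            congr 1
            have h1 : (χ - 1) * Y = χ * Real.log D := by rw [hY]; field_simp
            have h2 : (χ - 1) * Z = χ * Real.log C + Y := by rw [hZ]; field_simp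
            push_cast
            rw [pow_succ]
            linear_combination (-(k : ℝ)) * h1 - h2
  refine (key k).trans (Real.exp_le_exp.2 ?_)
  have : 0 ≤ Y * k := by positivity
  linarith

lemma moser_iter (n : ℕ) (hn : 2 ≤ n) (θ C Λ β τ L0 A0 : ℝ) (hθ : 0 < θ) (hC : 0 < C) (hΛ : 0 < Λ)
    (hβ : 0 < β) (hτ : 0 < τ) (hL0 : 0 ≤ L0) (hA0 : 0 < A0) :
    ∃ X : ℝ, ∀ (Ω : Set (Eu n)) (u : Eu n → ℝ) (V : Fin n → Eu n → ℝ),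
      USys n Ω u V θ C Λ β τ → ∀ (W : ℕ → Set (Eu n)) (η : ℕ → Eu n → ℝ) (U : Set (Eu n)),
      (∀ k, MeasurableSet (W k)) → (∀ k, W k ⊆ Ω) → (∀ k, Cut n (W k) (L0 * 4 ^ k) (η k)) →
      (∀ k, ∀ y ∈ W (k + 1), η k y = 1) → (∀ k, ∀ p : ℝ, IntegrableOn (fun y => u y ^ p) (W k)) →
      IsOpen U → (∀ k, U ⊆ W k) → (∀ k, volume (W k) ≠ ⊤) →
      ∫ y in W 0, u y ≤ A0 → ∀ y ∈ U, u y ≤ X := by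
  have hn1 : (1 : ℝ) < n := by exact_mod_cast (by omega : 1 < n)
  have hn2 : (2 : ℝ) ≤ n := by exact_mod_cast hn
  set χ : ℝ := Real.conjExponent n with hχd
  have hχ : Real.HolderConjugate (n : ℝ) χ := Real.HolderConjugate.conjExponent hn1
  have hχ1 : 1 < χ := hχ.symm.lt
  have hχ2 : χ ≤ 2 := by
    rw [hχd, Real.conjExponent, div_le_iff₀ (by linarith)]; linarith
  obtain ⟨K, hK, hstep⟩ := moser_step n hn χ hχ θ C Λ β τ hθ hC hΛ hβ hτ
  obtain ⟨X, Z, hXZ⟩ := iter_real χ (K * (4 * (1 + L0 ^ 2))) 64 A0 hχ1 (by positivity) (by norm_num) hA0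
  refine ⟨Real.exp (X + 1), ?_⟩
  intro Ω u V S W η U hWm hWΩ hcut hη1 hhInt hU hUW hvol hA y hy
  set I : ℕ → ℝ := fun k => ∫ y in W k, u y ^ (χ ^ k) with hI
  have hpos : ∀ k, ∀ y ∈ W k, 0 < u y := fun k y hy => zero_lt_one.trans_le (S.one y (hWΩ k hy))
  have hI0 : ∀ k, 0 ≤ I k := fun k => setIntegral_nonneg (hWm k) fun y hy =>
    (Real.rpow_pos_of_pos (hpos k y hy) _).le
  have hb := hXZ I hI0 (by simpa [hI] using hA) (by
    intro k
    have h1 := hstep Ω u V S (L0 * 4 ^ k) (η k) (W k) (W (k + 1)) (by positivity) (hWm k)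
      (hWm (k + 1)) (hWΩ k) (hWΩ (k + 1)) (hcut k) (hη1 k) (hhInt k) (χ ^ k) (one_le_pow₀ hχ1.le)
    rw [← pow_succ] at h1
    refine h1.trans ?_
    have hIk := hI0 k
    have hχ0 : 0 ≤ χ := by linarith
    refine Real.rpow_le_rpow (by positivity) ?_ hχ0
    refine mul_le_mul_of_nonneg_right ?_ (hI0 k)
    rw [mul_assoc]
    refine mul_le_mul_of_nonneg_left ?_ hK.le
    have e1 : (64 : ℝ) ^ k = (2 ^ k) ^ 2 * (4 ^ k) ^ 2 := by
      rw [← pow_mul, ← pow_mul, mul_comm k 2, pow_mul, pow_mul, ← mul_pow]; norm_num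
    rw [e1]
    have h2 : χ ^ k ≤ 2 ^ k := by gcongr
    have h3 : (1 : ℝ) ≤ 2 ^ k := one_le_pow₀ (by norm_num)
    have h4 : (1 : ℝ) ≤ 4 ^ k := one_le_pow₀ (by norm_num)
    have h5 : (1 + χ ^ k) ^ 2 ≤ (2 * 2 ^ k) ^ 2 := by
      have : 0 ≤ χ ^ k := by positivity
      gcongr; linarith
    have h6 : 1 + (L0 * 4 ^ k) ^ 2 ≤ (1 + L0 ^ 2) * (4 ^ k) ^ 2 := by nlinarith
    calc (1 + χ ^ k) ^ 2 * (1 + (L0 * 4 ^ k) ^ 2) ≤ (2 * 2 ^ k) ^ 2 * ((1 + L0 ^ 2) * (4 ^ k) ^ 2) := by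
          gcongr
      _ = _ := by ring)
  by_contra hlt
  push Not at hlt
  have hyΩ : y ∈ Ω := hWΩ 0 (hUW 0 hy)
  have hcont : ContinuousAt u y := S.smu.continuousOn.continuousAt (S.op.mem_nhds hyΩ)
  obtain ⟨r, hr, hball⟩ := Metric.mem_nhds_iff.1
    (Filter.inter_mem (hU.mem_nhds hy) (hcont.eventually (lt_mem_nhds hlt)))
  set m : ℝ := volume.real (Metric.ball y r) with hm
  have hm0 : 0 < m := ENNReal.toReal_pos (Metric.measure_ball_pos _ _ hr).ne' measure_ball_lt_top.ne
  have hlow : ∀ k : ℕ, m * Real.exp (χ ^ k * (X + 1)) ≤ Real.exp (χ ^ k * X + Z) := by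
    intro k
    refine le_trans ?_ (hb k)
    have hsub : Metric.ball y r ⊆ W k := fun z hz => hUW k (hball hz).1
    calc m * Real.exp (χ ^ k * (X + 1)) = ∫ z in Metric.ball y r, Real.exp (χ ^ k * (X + 1)) := by
          simp [hm]
      _ ≤ ∫ z in Metric.ball y r, u z ^ (χ ^ k) := by
          refine setIntegral_mono_on (by simp [measure_ball_lt_top]) ((hhInt k _).mono_set hsub)
            Metric.isOpen_ball.measurableSet ?_
          intro z hz
          rw [mul_comm, Real.exp_mul]
          exact Real.rpow_le_rpow (Real.exp_pos _).le (hball hz).2.le (by positivity)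
      _ ≤ I k := by
          refine setIntegral_mono_set (hhInt k _) ?_ hsub.eventuallyLE
          refine (ae_restrict_iff' (hWm k)).2 (Filter.Eventually.of_forall fun z hz => ?_)
          exact (Real.rpow_pos_of_pos (hpos k z hz) _).le
  have hbd : ∀ k : ℕ, χ ^ k ≤ Z - Real.log m := by
    intro k
    have h1 := hlow k
    rw [← Real.exp_log hm0, ← Real.exp_add, Real.exp_le_exp] at h1
    linarith
  obtain ⟨k, hk⟩ := pow_unbounded_of_one_lt (Z - Real.log m) hχ1
  exact absurd (hbd k) (not_le.2 hk)

open MeasureTheory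

lemma fderiv_eq_sum {n : ℕ} (F : Eu n → ℝ) (y v : Eu n) :
    fderiv ℝ F y v = ∑ i, v i * pd i F y := by
  have h : v = ∑ i, v i • EuclideanSpace.single i (1:ℝ) := by
    ext j
    simp [Finset.sum_apply, Pi.single_apply]
  conv_lhs => rw [h]
  rw [map_sum]
  simp [pd]

lemma hasDerivAt_line {n : ℕ} {F : Eu n → ℝ} {z v : Eu n} {t : ℝ}
    (hF : DifferentiableAt ℝ F (z + t • v)) :
    HasDerivAt (fun s : ℝ => F (z + s • v)) (∑ i, v i * pd i F (z + t • v)) t := by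
  have h1 : HasDerivAt (fun s : ℝ => z + s • v) v t := by
    have := ((hasDerivAt_id t).smul_const v).const_add z
    simpa using this
  have h2 := hF.hasFDerivAt.comp_hasDerivAt t h1
  rw [fderiv_eq_sum] at h2
  exact h2

/-- the gradient map -/
noncomputable def Gam {n : ℕ} (g : Eu n → ℝ) (x : Eu n) : Eu n :=
  WithLp.toLp 2 (fun i => pd i g x)

@[simp] lemma Gam_apply {n : ℕ} (g : Eu n → ℝ) (x : Eu n) (i : Fin n) : Gam g x i = pd i g x := rfl

lemma line_mem {n : ℕ} {z x : Eu n} (hz : z ∈ Metric.ball (0:Eu n) 1)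
    (hx : x ∈ Metric.ball (0:Eu n) 1) {t : ℝ} (ht : t ∈ Set.Icc (0:ℝ) 1) :
    z + t • (x - z) ∈ Metric.ball (0:Eu n) 1 :=
  (convex_ball (0:Eu n) 1).add_smul_sub_mem hz hx ht

structure SC (n : ℕ) (g : Eu n → ℝ) (κ : ℝ) : Prop where
  sm : ContDiffOn ℝ (⊤ : ℕ∞) g (Metric.ball 0 1)
  low : ∀ x ∈ Metric.ball (0:Eu n) 1, ∀ v : Eu n,
    κ * ‖v‖ ^ 2 ≤ ∑ i, v i * ∑ j, v j * pd j (pd i g) x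

lemma SC.mono_aux {n : ℕ} {g : Eu n → ℝ} {κ : ℝ} (S : SC n g κ) {x z : Eu n}
    (hx : x ∈ Metric.ball (0:Eu n) 1) (hz : z ∈ Metric.ball (0:Eu n) 1) {t : ℝ}
    (ht : t ∈ Set.Icc (0:ℝ) 1) :
    κ * ‖x - z‖ ^ 2 * t + ∑ i, (x i - z i) * pd i g z ≤
      ∑ i, (x i - z i) * pd i g (z + t • (x - z)) := by
  have hd : ∀ s ∈ Set.Icc (0:ℝ) 1, HasDerivAt (fun s : ℝ =>
      ∑ i, (x i - z i) * pd i g (z + s • (x - z)) - κ * ‖x - z‖ ^ 2 * s)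
      (∑ i, (x - z) i * ∑ j, (x - z) j * pd j (pd i g) (z + s • (x - z))
        - κ * ‖x - z‖ ^ 2) s := by
    intro s hs
    have hm := line_mem hz hx hs
    refine HasDerivAt.sub ?_ (by simpa using (hasDerivAt_id s).const_mul (κ * ‖x - z‖ ^ 2))
    refine HasDerivAt.fun_sum fun i _ => ?_
    exact (hasDerivAt_line (smooth_diffAt Metric.isOpen_ball
      (smooth_pd i Metric.isOpen_ball S.sm) hm)).const_mul _
  have hmono : MonotoneOn (fun s : ℝ =>
      ∑ i, (x i - z i) * pd i g (z + s • (x - z)) - κ * ‖x - z‖ ^ 2 * s) (Set.Icc 0 1) := by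
    refine monotoneOn_of_deriv_nonneg (convex_Icc 0 1)
      (fun s hs => (hd s hs).continuousAt.continuousWithinAt)
      (fun s hs => (hd s (interior_subset hs)).differentiableAt.differentiableWithinAt) ?_
    intro s hs
    rw [(hd s (interior_subset hs)).deriv]
    have := S.low _ (line_mem hz hx (interior_subset hs)) (x - z)
    linarith
  have := hmono ⟨le_rfl, zero_le_one⟩ ht ht.1
  simp at this
  linarith

lemma SC.mono {n : ℕ} {g : Eu n → ℝ} {κ : ℝ} (S : SC n g κ) {x z : Eu n}
    (hx : x ∈ Metric.ball (0:Eu n) 1) (hz : z ∈ Metric.ball (0:Eu n) 1) :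
    κ * ‖x - z‖ ^ 2 ≤ inner ℝ (x - z) (Gam g x - Gam g z) := by
  have h := S.mono_aux hx hz (t := 1) ⟨zero_le_one, le_rfl⟩
  simp at h
  have e : inner ℝ (x - z) (Gam g x - Gam g z) =
      ∑ i, (x i - z i) * pd i g x - ∑ i, (x i - z i) * pd i g z := by
    rw [PiLp.inner_apply, ← Finset.sum_sub_distrib]
    refine Finset.sum_congr rfl fun i _ => ?_
    simp
    ring
  rw [e]
  linarith

lemma inner_gam {n : ℕ} (g : Eu n → ℝ) (v z : Eu n) :
    inner ℝ v (Gam g z) = ∑ i, v i * pd i g z := by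
  rw [PiLp.inner_apply]
  refine Finset.sum_congr rfl fun i _ => ?_
  simp [mul_comm]

lemma SC.conv {n : ℕ} {g : Eu n → ℝ} {κ : ℝ} (S : SC n g κ) {x z : Eu n}
    (hx : x ∈ Metric.ball (0:Eu n) 1) (hz : z ∈ Metric.ball (0:Eu n) 1) :
    g z + inner ℝ (x - z) (Gam g z) + κ / 2 * ‖x - z‖ ^ 2 ≤ g x := by
  rw [inner_gam]
  set A := ∑ i, (x - z) i * pd i g z with hA
  have hd : ∀ s ∈ Set.Icc (0:ℝ) 1, HasDerivAt (fun s : ℝ =>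
      g (z + s • (x - z)) - A * s - κ / 2 * ‖x - z‖ ^ 2 * s ^ 2)
      (∑ i, (x - z) i * pd i g (z + s • (x - z)) - A
        - κ / 2 * ‖x - z‖ ^ 2 * (2 * s)) s := by
    intro s hs
    have hm := line_mem hz hx hs
    refine HasDerivAt.sub (HasDerivAt.sub ?_ (by simpa using (hasDerivAt_id s).const_mul A)) 
      (by simpa using (hasDerivAt_pow 2 s).const_mul (κ / 2 * ‖x - z‖ ^ 2))
    exact hasDerivAt_line (smooth_diffAt Metric.isOpen_ball S.sm hm)
  have hmono : MonotoneOn (fun s : ℝ =>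
      g (z + s • (x - z)) - A * s - κ / 2 * ‖x - z‖ ^ 2 * s ^ 2) (Set.Icc 0 1) := by
    refine monotoneOn_of_deriv_nonneg (convex_Icc 0 1)
      (fun s hs => (hd s hs).continuousAt.continuousWithinAt)
      (fun s hs => (hd s (interior_subset hs)).differentiableAt.differentiableWithinAt) ?_
    intro s hs
    rw [(hd s (interior_subset hs)).deriv]
    have := S.mono_aux hx hz (interior_subset hs)
    simp only [hA, PiLp.sub_apply] at *
    linarith
  have := hmono ⟨le_rfl, zero_le_one⟩ ⟨zero_le_one, le_rfl⟩ zero_le_one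
  simp at this
  linarith

lemma SC.dist_le {n : ℕ} {g : Eu n → ℝ} {κ : ℝ} (hκ : 0 < κ) (S : SC n g κ) {x z : Eu n}
    (hx : x ∈ Metric.ball (0:Eu n) 1) (hz : z ∈ Metric.ball (0:Eu n) 1) :
    κ * ‖x - z‖ ≤ ‖Gam g x - Gam g z‖ := by
  have h1 := S.mono hx hz
  have h2 := real_inner_le_norm (x - z) (Gam g x - Gam g z)
  rcases (norm_nonneg (x - z)).eq_or_lt with h | h
  · rw [← h]; simp
  · have : (κ * ‖x - z‖) * ‖x - z‖ ≤ ‖Gam g x - Gam g z‖ * ‖x - z‖ := by nlinarith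
    exact le_of_mul_le_mul_right this h

lemma SC.inj {n : ℕ} {g : Eu n → ℝ} {κ : ℝ} (hκ : 0 < κ) (S : SC n g κ) :
    Set.InjOn (Gam g) (Metric.ball (0:Eu n) 1) := by
  intro x hx z hz h
  have := S.dist_le hκ hx hz
  rw [h, sub_self, norm_zero] at this
  have h0 : ‖x - z‖ ≤ 0 := by
    by_contra hc
    push Not at hc
    have := mul_pos hκ hc
    linarith
  exact sub_eq_zero.1 (norm_le_zero_iff.1 h0)

lemma SC.norm_le {n : ℕ} {g : Eu n → ℝ} {κ N : ℝ} (hκ : 0 < κ) (S : SC n g κ)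
    (h0 : ∀ x ∈ Metric.ball (0:Eu n) 1, 0 ≤ g x) (hN : ∀ x ∈ Metric.ball (0:Eu n) 1, g x ≤ N)
    {x : Eu n} (hx : ‖x‖ ≤ 3 / 4) : ‖Gam g x‖ ≤ 8 * N := by
  have hx1 : x ∈ Metric.ball (0:Eu n) 1 := by simp; linarith
  have hN0 : 0 ≤ N := (h0 x hx1).trans (hN x hx1)
  by_cases hg : ‖Gam g x‖ = 0
  · rw [hg]; positivity
  set v : Eu n := (1 / (8 * ‖Gam g x‖)) • Gam g x with hv
  have hvn : ‖v‖ = 1 / 8 := by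
    rw [hv, norm_smul, Real.norm_of_nonneg (by positivity)]
    field_simp
  have hxv : x + v ∈ Metric.ball (0:Eu n) 1 := by
    have := norm_add_le x v
    simp; linarith
  have h := S.conv hxv hx1
  rw [add_sub_cancel_left, hv, real_inner_smul_left, real_inner_self_eq_norm_sq] at h
  have e : 1 / (8 * ‖Gam g x‖) * ‖Gam g x‖ ^ 2 = ‖Gam g x‖ / 8 := by field_simp
  rw [e] at h
  have := h0 x hx1
  have := hN _ hxv
  have : 0 ≤ κ / 2 * ‖(1 / (8 * ‖Gam g x‖)) • Gam g x‖ ^ 2 := by positivity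
  linarith

/-- The segment property. -/
lemma SC.hull {n : ℕ} {g : Eu n → ℝ} {κ N ρ : ℝ} (hκ : 0 < κ) (S : SC n g κ)
    (h0 : ∀ x ∈ Metric.ball (0:Eu n) 1, 0 ≤ g x) (hN : ∀ x ∈ Metric.ball (0:Eu n) 1, g x ≤ N)
    (hρ : ρ ≤ 1 / 16) (hρN : 16 * N * ρ < κ / 512)
    {x0 : Eu n} (hx0 : ‖x0‖ ≤ 1 / 2) {x1 x2 : Eu n} (h1 : x1 ∈ Metric.ball x0 ρ)
    (h2 : x2 ∈ Metric.ball x0 ρ) {s : ℝ} (hs : s ∈ Set.Icc (0:ℝ) 1) :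
    (1 - s) • Gam g x1 + s • Gam g x2 ∈ Gam g '' Metric.ball x0 (1 / 8) := by
  set y := (1 - s) • Gam g x1 + s • Gam g x2 with hy
  have hB : Metric.closedBall x0 (1/8) ⊆ Metric.ball (0:Eu n) 1 := by
    intro x hx
    rw [mem_closedBall_iff_norm] at hx
    have := norm_add_le (x - x0) x0
    simp at this ⊢
    linarith
  have hx0B : x0 ∈ Metric.ball (0:Eu n) 1 := by simp; linarith
  have hN0 : 0 ≤ N := (h0 x0 hx0B).trans (hN x0 hx0B)
  set q : Eu n → ℝ := fun x => g x - inner ℝ x y with hq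
  have hqc : ContinuousOn q (Metric.closedBall x0 (1/8)) := by
    refine (S.sm.continuousOn.mono hB).sub ?_
    fun_prop
  obtain ⟨x, hx, hmin⟩ := (isCompact_closedBall x0 (1/8)).exists_isMinOn
    ⟨x0, by simp⟩ hqc
  have hxB := hB hx
  have key : ∀ w ∈ Metric.ball x0 ρ, ‖x - x0‖ = 1/8 →
      g x0 + inner ℝ (x - x0) (Gam g w) < g x := by
    intro w hw hxx
    rw [mem_ball_iff_norm] at hw
    have hwB : w ∈ Metric.ball (0:Eu n) 1 := hB (by rw [mem_closedBall_iff_norm]; linarith)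
    have hw34 : ‖w‖ ≤ 3/4 := by
      have := norm_add_le (w - x0) x0
      simp at this
      linarith
    have e1 := S.conv hxB hwB
    have e2 := S.conv hwB hx0B
    have e3 := S.norm_le hκ h0 hN hw34
    have e4 := S.norm_le hκ h0 hN (x := x0) (by linarith)
    have e5 : |inner ℝ (w - x0) (Gam g x0 - Gam g w)| ≤ ρ * (16 * N) := by
      refine (abs_real_inner_le_norm _ _).trans ?_
      refine mul_le_mul hw.le ((norm_sub_le _ _).trans (by linarith)) (norm_nonneg _)
        ((norm_nonneg _).trans hw.le)
    have e6 : 1/16 ≤ ‖x - w‖ := by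
      have := norm_add_le (x - w) (w - x0)
      simp at this
      linarith
    have e7 : (1/16)^2 ≤ ‖x - w‖^2 := by gcongr
    have e8 : inner ℝ (x - w) (Gam g w) = inner ℝ (x - x0) (Gam g w) - inner ℝ (w - x0) (Gam g w) := by
      rw [← inner_sub_left]; congr 1; abel
    rw [inner_sub_right] at e5
    have e9 := (abs_le.1 e5).1
    have e10 : 0 ≤ κ/2 * ‖w - x0‖^2 := by positivity
    have e11 : κ/2 * (1/16)^2 ≤ κ/2 * ‖x - w‖^2 := by gcongr
    rw [e8] at e1
    linarith
  have hxint : x ∈ Metric.ball x0 (1/8) := by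
    rw [mem_closedBall_iff_norm] at hx
    rw [mem_ball_iff_norm]
    refine lt_of_le_of_ne hx fun hxx => ?_
    have k1 := key x1 h1 hxx
    have k2 := key x2 h2 hxx
    have hm : q x ≤ q x0 := hmin (Metric.mem_closedBall_self (by norm_num))
    simp only [hq] at hm
    have e : inner ℝ x y - inner ℝ x0 y = (1 - s) * inner ℝ (x - x0) (Gam g x1) +
        s * inner ℝ (x - x0) (Gam g x2) := by
      rw [← inner_sub_left, hy, inner_add_right, inner_smul_right, inner_smul_right]
    rcases hs.1.eq_or_lt with hs0 | hs0
    · subst hs0; linarith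
    · have := hs.2
      nlinarith
  refine ⟨x, hxint, ?_⟩
  have hloc : IsLocalMin q x :=
    (hmin.isLocalMin (Metric.closedBall_mem_nhds_of_mem hxint))
  have hd : HasFDerivAt q (fderiv ℝ g x - innerSL ℝ y) x := by
    refine (smooth_diffAt Metric.isOpen_ball S.sm hxB).hasFDerivAt.sub ?_
    have := (innerSL ℝ y).hasFDerivAt (x := x)
    refine this.congr_of_eventuallyEq (Filter.Eventually.of_forall fun z => ?_)
    simp [real_inner_comm]
  have hz := hloc.hasFDerivAt_eq_zero hd
  ext i
  have := congrArg (fun L => L (EuclideanSpace.single i (1:ℝ))) hz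
  simp [EuclideanSpace.inner_single_right] at this
  simp only [Gam_apply, pd]
  linarith

open MeasureTheory

lemma pd_comp {n : ℕ} (j : Fin n) {F : Eu n → ℝ} {φ : Eu n → Eu n} {y : Eu n}
    (hF : DifferentiableAt ℝ F (φ y)) (hφ : DifferentiableAt ℝ φ y) :
    pd j (fun y => F (φ y)) y = ∑ k, pd j (fun y => φ y k) y * pd k F (φ y) := by
  have h1 : pd j (fun y => F (φ y)) y =
      fderiv ℝ F (φ y) (fderiv ℝ φ y (EuclideanSpace.single j 1)) := by
    unfold pd
    have := fderiv_comp y hF hφ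
    rw [show (fun y => F (φ y)) = F ∘ φ from rfl, this]
    rfl
  rw [h1, fderiv_eq_sum]
  refine Finset.sum_congr rfl fun k _ => ?_
  congr 1
  unfold pd
  have h2 : HasFDerivAt (fun y => φ y k)
      ((EuclideanSpace.proj k : Eu n →L[ℝ] ℝ).comp (fderiv ℝ φ y)) y :=
    (EuclideanSpace.proj k : Eu n →L[ℝ] ℝ).hasFDerivAt.comp y hφ.hasFDerivAt
  rw [h2.fderiv]
  rfl

lemma hess_pd {n : ℕ} {g : Eu n → ℝ} {Ω : Set (Eu n)} (hΩ : IsOpen Ω)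
    (hg : ContDiffOn ℝ (⊤ : ℕ∞) g Ω) {x : Eu n} (hx : x ∈ Ω) (i j : Fin n) :
    Hess n g x i j = pd i (pd j g) x := by
  have hd : DifferentiableAt ℝ (fderiv ℝ g) x :=
    ((hg.fderiv_of_isOpen hΩ (m := (⊤ : ℕ∞)) (by simp)).contDiffAt (hΩ.mem_nhds hx)).differentiableAt
      (by simp)
  simp only [Hess, Matrix.of_apply, iteratedFDeriv_two_apply]
  have h2 := (hd.hasFDerivAt.clm_apply (hasFDerivAt_const (EuclideanSpace.single j (1:ℝ)) x)).fderiv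
  have : pd i (pd j g) x = fderiv ℝ (fun y => fderiv ℝ g y (EuclideanSpace.single j 1)) x
    (EuclideanSpace.single i 1) := rfl
  rw [this, h2]
  simp

structure Leg (n : ℕ) (g : Eu n → ℝ) (Ω : Set (Eu n)) (φ : Eu n → Eu n) : Prop where
  op : IsOpen Ω
  img : Gam g '' Metric.ball 0 1 = Ω
  inv : ∀ x ∈ Metric.ball (0:Eu n) 1, φ (Gam g x) = x
  sm : ContDiffOn ℝ (⊤ : ℕ∞) φ Ω
  der : ∀ y ∈ Ω, (Matrix.of fun i j => pd j (fun y => φ y i) y) = (Hess n g (φ y))⁻¹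
  cont : ContinuousOn (Gam g) (Metric.ball 0 1)

lemma SC.leg {n : ℕ} {g : Eu n → ℝ} {κ : ℝ} (hκ : 0 < κ) (S : SC n g κ) :
    ∃ Ω φ, Leg n g Ω φ := by
  classical
  set B := Metric.ball (0:Eu n) 1 with hB
  have hBo : IsOpen B := Metric.isOpen_ball
  set φ : Eu n → Eu n := Function.invFunOn (Gam g) B with hφ
  have hinv : ∀ x ∈ B, φ (Gam g x) = x := (S.inj hκ).leftInvOn_invFunOn
  have hsm : ContDiffOn ℝ (⊤ : ℕ∞) (Gam g) B := by
    rw [contDiffOn_euclidean]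
    exact fun i => smooth_pd i hBo S.sm
  have hloc : ∀ x ∈ B, (∀ᶠ y in nhds (Gam g x), y ∈ Gam g '' B) ∧
      ContDiffAt ℝ (⊤ : ℕ∞) φ (Gam g x) := by
    intro x hx
    have hc : ContDiffAt ℝ (⊤ : ℕ∞) (Gam g) x := hsm.contDiffAt (hBo.mem_nhds hx)
    have hd : DifferentiableAt ℝ (Gam g) x := hc.differentiableAt (by simp)
    have hcomp : ∀ v i, (fderiv ℝ (Gam g) x v) i = ∑ j, v j * pd j (pd i g) x := by
      intro v i
      have h2 : HasFDerivAt (fun y => Gam g y i)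
        ((EuclideanSpace.proj i : Eu n →L[ℝ] ℝ).comp (fderiv ℝ (Gam g) x)) x :=
        (EuclideanSpace.proj i : Eu n →L[ℝ] ℝ).hasFDerivAt.comp x hd.hasFDerivAt
      rw [← fderiv_eq_sum]
      have h3 : fderiv ℝ (pd i g) x = _ := h2.fderiv
      rw [h3]
      rfl
    have hinj : Function.Injective (fderiv ℝ (Gam g) x) := by
      rw [injective_iff_map_eq_zero]
      intro v hv
      have := S.low x hx v
      simp_rw [← hcomp, hv] at this
      simp at this
      by_contra hne
      have h4 : 0 < ‖v‖ := norm_pos_iff.2 hne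
      have : 0 < κ * ‖v‖ ^ 2 := by positivity
      linarith
    set e : Eu n ≃L[ℝ] Eu n :=
      (LinearEquiv.ofInjectiveEndo (fderiv ℝ (Gam g) x : Eu n →ₗ[ℝ] Eu n) hinj).toContinuousLinearEquiv
      with he
    have hde : HasFDerivAt (Gam g) (e : Eu n →L[ℝ] Eu n) x := by
      have : (e : Eu n →L[ℝ] Eu n) = fderiv ℝ (Gam g) x := by
        ext v : 1
        rfl
      rw [this]; exact hd.hasFDerivAt
    have hst : HasStrictFDerivAt (Gam g) (e : Eu n →L[ℝ] Eu n) x := hc.hasStrictFDerivAt' hde (by simp)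
    have hr := hst.eventually_right_inverse
    have ht : Filter.Tendsto (hst.localInverse (Gam g) e x) (nhds (Gam g x)) (nhds x) :=
      hst.localInverse_tendsto
    have hmem := ht.eventually (hBo.mem_nhds hx)
    refine ⟨?_, ?_⟩
    · filter_upwards [hr, hmem] with y h1 h2
      exact ⟨_, h2, h1⟩
    · have hl := hc.to_localInverse hde (by simp)
      refine hl.congr_of_eventuallyEq ?_
      filter_upwards [hr, hmem] with y h1 h2
      have h3 := hinv _ h2
      rw [h1] at h3
      exact h3
  have hop : IsOpen (Gam g '' B) := by
    rw [isOpen_iff_mem_nhds]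
    rintro _ ⟨x, hx, rfl⟩
    exact (hloc x hx).1
  have hsmφ : ContDiffOn ℝ (⊤ : ℕ∞) φ (Gam g '' B) := by
    rintro _ ⟨x, hx, rfl⟩
    exact (hloc x hx).2.contDiffWithinAt
  refine ⟨Gam g '' B, φ, hop, rfl, hinv, hsmφ, ?_, hsm.continuousOn⟩
  rintro y ⟨x, hx, rfl⟩
  symm
  apply Matrix.inv_eq_right_inv
  have hyx : φ (Gam g x) = x := hinv x hx
  have hdφ : DifferentiableAt ℝ φ (Gam g x) := (hloc x hx).2.differentiableAt (by simp)
  ext i j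
  rw [Matrix.mul_apply]
  have h1 : pd j (fun y => pd i g (φ y)) (Gam g x) = pd j (fun y : Eu n => y i) (Gam g x) := by
    refine pd_congr j hop ?_ (Set.mem_image_of_mem _ hx)
    rintro _ ⟨z, hz, rfl⟩
    rw [hinv z hz]; rfl
  have h2 : pd j (fun y : Eu n => y i) (Gam g x) = if j = i then 1 else 0 := by
    unfold pd
    have : HasFDerivAt (fun y : Eu n => y i) (EuclideanSpace.proj i : Eu n →L[ℝ] ℝ) (Gam g x) :=
      (EuclideanSpace.proj i : Eu n →L[ℝ] ℝ).hasFDerivAt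
    rw [this.fderiv]
    simp [Pi.single_apply, eq_comm]
  rw [h2, pd_comp j (by rw [hyx]; exact smooth_diffAt hBo (smooth_pd i hBo S.sm) hx) hdφ, hyx] at h1
  rw [Matrix.one_apply, hyx]
  rw [show (if i = j then (1:ℝ) else 0) = if j = i then 1 else 0 by simp [eq_comm], ← h1]
  refine Finset.sum_congr rfl fun k _ => ?_
  rw [hess_pd hBo S.sm hx, Matrix.of_apply, pd_comm i k hBo S.sm hx, mul_comm]

open MeasureTheory

lemma st_deriv_bound : ∃ S > 0, ∀ x : ℝ, |deriv Real.smoothTransition x| ≤ S := by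
  have hc : Continuous (deriv Real.smoothTransition) :=
    (Real.smoothTransition.contDiff (n := 1)).continuous_deriv le_rfl
  obtain ⟨S, hS⟩ := (isCompact_Icc (a := (0:ℝ)) (b := 1)).exists_bound_of_continuousOn hc.continuousOn
  refine ⟨max S 1, by positivity, fun x => ?_⟩
  by_cases h0 : x < 0
  · have : Real.smoothTransition =ᶠ[nhds x] fun _ => (0:ℝ) :=
      Filter.eventually_of_mem (Iio_mem_nhds h0) fun z hz =>
        Real.smoothTransition.zero_of_nonpos (le_of_lt hz)
    rw [this.deriv_eq]; simp
  by_cases h1 : 1 < x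
  · have : Real.smoothTransition =ᶠ[nhds x] fun _ => (1:ℝ) :=
      Filter.eventually_of_mem (Ioi_mem_nhds h1) fun z hz =>
        Real.smoothTransition.one_of_one_le (le_of_lt hz)
    rw [this.deriv_eq]; simp
  · push Not at h0 h1
    have := hS x ⟨h0, h1⟩
    rw [Real.norm_eq_abs] at this
    exact this.trans (le_max_left _ _)

lemma st_neg {x : ℝ} (h0 : x < 0) : deriv Real.smoothTransition x = 0 := by
  have : Real.smoothTransition =ᶠ[nhds x] fun _ => (0:ℝ) :=
      Filter.eventually_of_mem (Iio_mem_nhds h0) fun z hz =>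
        Real.smoothTransition.zero_of_nonpos (le_of_lt hz)
  rw [this.deriv_eq]; simp

lemma psi_exists (n : ℕ) : ∃ S > 0, ∀ (x0 : Eu n) (r R : ℝ), 0 < r → r < R →
    ∃ ψ : Eu n → ℝ, ContDiff ℝ (⊤ : ℕ∞) ψ ∧ (∀ x, 0 ≤ ψ x) ∧ (∀ x, ψ x ≤ 1) ∧
      (∀ x, x ∉ Metric.closedBall x0 R → ψ x = 0) ∧ (∀ x ∈ Metric.ball x0 r, ψ x = 1) ∧
      ∀ k x, |pd k ψ x| ≤ S / (R - r) := by
  obtain ⟨S, hS0, hS⟩ := st_deriv_bound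
  refine ⟨2 * S, by positivity, fun x0 r R hr hrR => ?_⟩
  have hD : 0 < R ^ 2 - r ^ 2 := by nlinarith
  have hA : ContDiff ℝ (⊤ : ℕ∞) (fun x : Eu n => (R ^ 2 - ‖x - x0‖ ^ 2) / (R ^ 2 - r ^ 2)) := by
    refine ContDiff.div_const ?_ _
    exact contDiff_const.sub ((contDiff_id.sub contDiff_const).norm_sq ℝ)
  refine ⟨fun x => Real.smoothTransition ((R ^ 2 - ‖x - x0‖ ^ 2) / (R ^ 2 - r ^ 2)),
    Real.smoothTransition.contDiff.comp hA, fun x => Real.smoothTransition.nonneg _,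
    fun x => Real.smoothTransition.le_one _, ?_, ?_, ?_⟩
  · intro x hx
    rw [mem_closedBall_iff_norm, not_le] at hx
    apply Real.smoothTransition.zero_of_nonpos
    apply div_nonpos_of_nonpos_of_nonneg _ hD.le
    nlinarith
  · intro x hx
    rw [mem_ball_iff_norm] at hx
    apply Real.smoothTransition.one_of_one_le
    rw [le_div_iff₀ hD]
    nlinarith [norm_nonneg (x - x0)]
  · intro k x
    have h1 : HasFDerivAt (fun x : Eu n => (R ^ 2 - ‖x - x0‖ ^ 2) / (R ^ 2 - r ^ 2))
        ((R ^ 2 - r ^ 2)⁻¹ • (- ((2:ℕ) • (innerSL ℝ (x - x0))) : Eu n →L[ℝ] ℝ)) x := by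
      have h2 : HasFDerivAt (fun x : Eu n => ‖x - x0‖ ^ 2) ((2:ℕ) • (innerSL ℝ (x - x0)) : Eu n →L[ℝ] ℝ) x := by
        have := ((hasFDerivAt_id x).sub_const x0).norm_sq
        simpa using this
      have h3 := (h2.const_sub (R^2)).const_mul ((R ^ 2 - r ^ 2)⁻¹)
      refine h3.congr_of_eventuallyEq (Filter.Eventually.of_forall fun z => ?_)
      simp only
      rw [div_eq_inv_mul]
    have h4 : HasDerivAt Real.smoothTransition (deriv Real.smoothTransition
        ((R ^ 2 - ‖x - x0‖ ^ 2) / (R ^ 2 - r ^ 2))) ((R ^ 2 - ‖x - x0‖ ^ 2) / (R ^ 2 - r ^ 2)) :=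
      ((Real.smoothTransition.contDiff (n := 1)).differentiable (by simp)).differentiableAt.hasDerivAt
    have h5 := h4.comp_hasFDerivAt x h1
    have h6 : pd k (fun x => Real.smoothTransition ((R ^ 2 - ‖x - x0‖ ^ 2) / (R ^ 2 - r ^ 2))) x =
        deriv Real.smoothTransition ((R ^ 2 - ‖x - x0‖ ^ 2) / (R ^ 2 - r ^ 2)) *
          ((R ^ 2 - r ^ 2)⁻¹ * (-(2 * (x k - x0 k)))) := by
      unfold pd
      rw [show (fun x => Real.smoothTransition ((R ^ 2 - ‖x - x0‖ ^ 2) / (R ^ 2 - r ^ 2))) =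
        Real.smoothTransition ∘ (fun x : Eu n => (R ^ 2 - ‖x - x0‖ ^ 2) / (R ^ 2 - r ^ 2)) from rfl,
        h5.fderiv]
      simp [EuclideanSpace.inner_single_right]
    rw [h6]
    by_cases hx : ‖x - x0‖ ≤ R
    · have h7 : |x k - x0 k| ≤ R := by
        have := PiLp.norm_apply_le (x - x0) k
        simp at this
        exact this.trans hx
      rw [abs_mul, abs_mul, abs_neg, abs_mul, abs_of_pos (inv_pos.2 hD), abs_two]
      calc _ ≤ S * ((R ^ 2 - r ^ 2)⁻¹ * (2 * R)) := by
            have := hS ((R ^ 2 - ‖x - x0‖ ^ 2) / (R ^ 2 - r ^ 2))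
            gcongr
        _ ≤ 2 * S / (R - r) := by
            have hq : 0 < R - r := by linarith
            rw [show R ^ 2 - r ^ 2 = (R - r) * (R + r) by ring]
            rw [show S * (((R - r) * (R + r))⁻¹ * (2 * R)) = 2 * S / (R - r) * (R / (R + r)) by
              field_simp]
            refine mul_le_of_le_one_right (by positivity) ?_
            rw [div_le_one (by linarith)]; linarith
    · push Not at hx
      rw [st_neg]
      · simp
        exact div_nonneg (by positivity) (by linarith)
      · exact div_neg_of_neg_of_pos (by nlinarith) hD

lemma Leg.mem {n : ℕ} {g : Eu n → ℝ} {Ω : Set (Eu n)} {φ : Eu n → Eu n} (h : Leg n g Ω φ)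
    {x : Eu n} (hx : x ∈ Metric.ball (0:Eu n) 1) : Gam g x ∈ Ω := by
  rw [← h.img]; exact Set.mem_image_of_mem _ hx

lemma Leg.open_img {n : ℕ} {g : Eu n → ℝ} {Ω : Set (Eu n)} {φ : Eu n → Eu n} (h : Leg n g Ω φ)
    {A : Set (Eu n)} (hA : IsOpen A) (hAB : A ⊆ Metric.ball (0:Eu n) 1) : IsOpen (Gam g '' A) := by
  have : Gam g '' A = Ω ∩ φ ⁻¹' A := by
    ext y
    constructor
    · rintro ⟨x, hx, rfl⟩
      exact ⟨h.mem (hAB hx), by simpa [h.inv x (hAB hx)] using hx⟩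
    · rintro ⟨h1, h2⟩
      rw [← h.img] at h1
      obtain ⟨x, hx, rfl⟩ := h1
      rw [Set.mem_preimage, h.inv x hx] at h2
      exact ⟨x, h2, rfl⟩
  rw [this]
  exact h.sm.continuousOn.isOpen_inter_preimage h.op hA

lemma leg_cut (n : ℕ) : ∃ S > 0, ∀ (g : Eu n → ℝ) (Ω : Set (Eu n)) (φ : Eu n → Eu n) (Λ : ℝ),
    Leg n g Ω φ → 0 ≤ Λ → (∀ y ∈ Ω, ∀ i j, |pd j (fun y => φ y i) y| ≤ Λ) →
    ∀ (x0 : Eu n) (r R : ℝ), 0 < r → r < R → Metric.closedBall x0 R ⊆ Metric.ball 0 1 →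
    ∃ η, Cut n (Gam g '' Metric.ball x0 R) (S * Λ / (R - r)) η ∧
      ∀ y ∈ Gam g '' Metric.ball x0 r, η y = 1 := by
  classical
  obtain ⟨S, hS0, hS⟩ := psi_exists n
  refine ⟨2 * n * n * S + 1, by positivity, ?_⟩
  intro g Ω φ Λ h hΛ hb x0 r R hr hrR hsub
  have hrR' : r < (r + R) / 2 := by linarith
  obtain ⟨ψ, hψ, hψ0, hψ1, hz, ho, hgr⟩ := hS x0 r ((r + R) / 2) hr hrR'
  have hcb : Metric.closedBall x0 ((r + R) / 2) ⊆ Metric.ball x0 R :=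
    Metric.closedBall_subset_ball (by linarith)
  have hbb : Metric.ball x0 R ⊆ Metric.ball 0 1 := Metric.ball_subset_closedBall.trans hsub
  set K := Gam g '' Metric.closedBall x0 ((r + R) / 2) with hK
  have hKc : IsCompact K := (isCompact_closedBall _ _).image_of_continuousOn
    (h.cont.mono (hcb.trans hbb))
  have hKΩ : K ⊆ Ω := by
    rintro _ ⟨x, hx, rfl⟩
    exact h.mem (hbb (hcb hx))
  set η : Eu n → ℝ := Ω.indicator (fun y => ψ (φ y)) with hη
  have hηΩ : ∀ y ∈ Ω, η y = ψ (φ y) := fun y hy => Set.indicator_of_mem hy _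
  have hηK : ∀ y, y ∉ K → η y = 0 := by
    intro y hy
    by_cases hyΩ : y ∈ Ω
    · rw [hηΩ y hyΩ]
      rw [← h.img] at hyΩ
      obtain ⟨x, hx, rfl⟩ := hyΩ
      rw [h.inv x hx]
      exact hz x fun hx' => hy ⟨x, hx', rfl⟩
    · exact Set.indicator_of_notMem hyΩ _
  have hsupp : tsupport η ⊆ K := by
    refine closure_minimal ?_ hKc.isClosed
    intro y hy
    by_contra hc
    exact hy (hηK y hc)
  refine ⟨η, ⟨?_, ?_, ?_, ?_, ?_, ?_⟩, ?_⟩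
  · rw [contDiff_iff_contDiffAt]
    intro y
    by_cases hy : y ∈ Ω
    · have h1 : ContDiffAt ℝ (⊤ : ℕ∞) (fun y => ψ (φ y)) y :=
        hψ.contDiffAt.comp y (h.sm.contDiffAt (h.op.mem_nhds hy))
      exact h1.congr_of_eventuallyEq (Filter.eventually_of_mem (h.op.mem_nhds hy) hηΩ)
    · have h2 : η =ᶠ[nhds y] fun _ => 0 :=
        Filter.eventually_of_mem (hKc.isClosed.isOpen_compl.mem_nhds fun hk => hy (hKΩ hk)) hηK
      exact contDiffAt_const.congr_of_eventuallyEq h2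
  · exact hKc.of_isClosed_subset (isClosed_tsupport _) hsupp
  · exact hsupp.trans (Set.image_mono hcb)
  · intro y
    exact Set.indicator_nonneg (fun y _ => hψ0 _) y
  · intro y
    by_cases hy : y ∈ Ω
    · rw [hηΩ y hy]; exact hψ1 _
    · rw [hη, Set.indicator_of_notMem hy]; exact zero_le_one
  · intro y
    have hR : 0 < R - r := by linarith
    by_cases hy : y ∈ Ω
    · have h1 : ∀ i, |pd i η y| ≤ ∑ k : Fin n, Λ * (S / ((r + R) / 2 - r)) := by
        intro i
        rw [pd_congr i h.op hηΩ hy, pd_comp i (hψ.differentiable (by simp)).differentiableAt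
          ((h.sm.contDiffAt (h.op.mem_nhds hy)).differentiableAt (by simp))]
        refine (Finset.abs_sum_le_sum_abs _ _).trans (Finset.sum_le_sum fun k _ => ?_)
        rw [abs_mul]
        exact mul_le_mul (hb y hy k i) (hgr k _) (abs_nonneg _) hΛ
      refine (Finset.sum_le_sum fun i _ => h1 i).trans ?_
      simp only [Finset.sum_const, Finset.card_univ, Fintype.card_fin, nsmul_eq_mul]
      rw [show (r + R) / 2 - r = (R - r) / 2 by ring]
      rw [show (n:ℝ) * (n * (Λ * (S / ((R - r) / 2)))) = (2 * n * n * S) * Λ / (R - r) by field_simp]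
      gcongr
      linarith
    · have h2 : η =ᶠ[nhds y] fun _ => 0 :=
        Filter.eventually_of_mem (hKc.isClosed.isOpen_compl.mem_nhds fun hk => hy (hKΩ hk)) hηK
      have : ∀ i, pd i η y = 0 := fun i => by
        unfold pd; rw [h2.fderiv_eq]; simp
      simp only [this, abs_zero, Finset.sum_const_zero]
      positivity
  · rintro _ ⟨x, hx, rfl⟩
    have hx1 := hbb (Metric.ball_subset_ball hrR.le hx)
    rw [hηΩ _ (h.mem hx1), h.inv x hx1]
    exact ho x hx

open MeasureTheory

lemma lint_affine {n : ℕ} {F : Eu n → ENNReal} (hF : Measurable F) {r : ℝ} (hr : 1 / 2 ≤ r)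
    (c : Eu n) : ∫⁻ y, F (r • y + c) ≤ ENNReal.ofReal (2 ^ n) * ∫⁻ y, F y := by
  have hr0 : r ≠ 0 := by linarith
  have hrp : 0 < r := by linarith
  have h1 : ∫⁻ y, F (r • y + c) = ∫⁻ y, F (y + c) ∂(Measure.map (r • ·) (volume : Measure (Eu n))) := by
    rw [lintegral_map (by fun_prop) (by fun_prop)]
  rw [h1, Measure.map_addHaar_smul _ hr0, lintegral_smul_measure, lintegral_add_right_eq_self]
  simp only [finrank_euclideanSpace, Fintype.card_fin, smul_eq_mul]
  gcongr
  rw [abs_of_pos (by positivity), ← inv_pow]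
  have : r⁻¹ ≤ 2 := by
    rw [inv_le_comm₀ hrp (by norm_num)]; linarith
  gcongr

lemma lint_triple {n : ℕ} {F : Eu n → ENNReal} (hF : Measurable F) (A : Set (Eu n)) :
    ∫⁻ y in A, ∫⁻ z in A, ∫⁻ s in Set.Icc (0:ℝ) 1, F ((1 - s) • y + s • z) ≤
      ENNReal.ofReal (2 ^ n) * volume A * ∫⁻ y, F y := by
  have e1 : ∀ y, ∫⁻ z in A, ∫⁻ s in Set.Icc (0:ℝ) 1, F ((1 - s) • y + s • z) =
      ∫⁻ s in Set.Icc (0:ℝ) 1, ∫⁻ z in A, F ((1 - s) • y + s • z) := by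
    intro y
    refine lintegral_lintegral_swap (Measurable.aemeasurable ?_)
    simp only [Function.uncurry_def]
    fun_prop
  simp_rw [e1]
  rw [lintegral_lintegral_swap]
  swap
  · refine Measurable.aemeasurable ?_
    simp only [Function.uncurry_def]
    refine Measurable.lintegral_prod_right' (f := fun p : (Eu n × ℝ) × Eu n =>
      F ((1 - p.1.2) • p.1.1 + p.1.2 • p.2)) ?_
    fun_prop
  have key : ∀ s ∈ Set.Icc (0:ℝ) 1, ∫⁻ y in A, ∫⁻ z in A, F ((1 - s) • y + s • z) ≤
      ENNReal.ofReal (2 ^ n) * volume A * ∫⁻ y, F y := by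
    intro s hs
    by_cases h : 1 / 2 ≤ s
    · calc _ ≤ ∫⁻ y in A, ENNReal.ofReal (2 ^ n) * ∫⁻ y, F y := by
            refine lintegral_mono fun y => ?_
            refine (setLIntegral_le_lintegral _ _).trans ?_
            simp_rw [add_comm ((1 - s) • y)]
            exact lint_affine hF h _
        _ = _ := by rw [setLIntegral_const]; ring
    · push Not at h
      rw [lintegral_lintegral_swap]
      · calc _ ≤ ∫⁻ y in A, ENNReal.ofReal (2 ^ n) * ∫⁻ y, F y := by
              refine lintegral_mono fun y => ?_
              refine (setLIntegral_le_lintegral _ _).trans ?_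
              exact lint_affine hF (by linarith) _
          _ = _ := by rw [setLIntegral_const]; ring
      · refine Measurable.aemeasurable ?_
        simp only [Function.uncurry_def]
        fun_prop
  calc _ ≤ ∫⁻ s in Set.Icc (0:ℝ) 1, ENNReal.ofReal (2 ^ n) * volume A * ∫⁻ y, F y :=
        setLIntegral_mono' measurableSet_Icc key
    _ = _ := by rw [setLIntegral_const]; simp

lemma seg_bound {n : ℕ} {Ω D A : Set (Eu n)} {u : Eu n → ℝ} {Y : ℝ} (hΩ : IsOpen Ω)
    (hu : ContDiffOn ℝ (⊤ : ℕ∞) u Ω) (hDΩ : D ⊆ Ω)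
    (hA : ∀ y ∈ A, ‖y‖ ≤ Y)
    (hseg : ∀ y ∈ A, ∀ z ∈ A, ∀ s ∈ Set.Icc (0:ℝ) 1, (1 - s) • y + s • z ∈ D)
    {y z : Eu n} (hy : y ∈ A) (hz : z ∈ A) :
    ENNReal.ofReal (u y) ≤ ENNReal.ofReal (u z) + ENNReal.ofReal (2 * Y) *
      ∫⁻ s in Set.Icc (0:ℝ) 1,
        D.indicator (fun y => ENNReal.ofReal (∑ j, |pd j u y|)) ((1 - s) • y + s • z) := by
  have hY : 0 ≤ Y := (norm_nonneg y).trans (hA y hy)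
  have hm : ∀ s ∈ Set.Icc (0:ℝ) 1, y + s • (z - y) ∈ D := by
    intro s hs
    have := hseg y hy z hz s hs
    have e : y + s • (z - y) = (1 - s) • y + s • z := by
      rw [smul_sub, sub_smul, one_smul]; abel
    rwa [e]
  have hd : ∀ s ∈ Set.uIcc (0:ℝ) 1, HasDerivAt (fun s : ℝ => u (y + s • (z - y)))
      (∑ i, (z - y) i * pd i u (y + s • (z - y))) s := by
    intro s hs
    rw [Set.uIcc_of_le zero_le_one] at hs
    exact hasDerivAt_line (smooth_diffAt hΩ hu (hDΩ (hm s hs)))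
  have hcl : Continuous (fun s : ℝ => y + s • (z - y)) := by fun_prop
  have hpc : ∀ i, ContinuousOn (fun s : ℝ => pd i u (y + s • (z - y))) (Set.Icc 0 1) := fun i =>
    (smooth_pd i hΩ hu).continuousOn.comp hcl.continuousOn fun s hs => hDΩ (hm s hs)
  have hdc : ContinuousOn (fun s : ℝ => ∑ i, (z - y) i * pd i u (y + s • (z - y))) (Set.Icc 0 1) :=
    continuousOn_finsetSum _ fun i _ => continuousOn_const.mul (hpc i)
  have hac : ContinuousOn (fun s : ℝ => 2 * Y * ∑ i, |pd i u (y + s • (z - y))|) (Set.Icc 0 1) :=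
    continuousOn_const.mul (continuousOn_finsetSum _ fun i _ => (hpc i).abs)
  have hftc := intervalIntegral.integral_eq_sub_of_hasDerivAt hd
    (hdc.intervalIntegrable_of_Icc zero_le_one)
  simp only [zero_smul, add_zero, one_smul, add_sub_cancel] at hftc
  have hzy : ∀ i, |(z - y) i| ≤ 2 * Y := by
    intro i
    have h1 := PiLp.norm_apply_le (z - y) i
    rw [Real.norm_eq_abs] at h1
    have h2 := norm_sub_le z y
    have := hA y hy
    have := hA z hz
    linarith
  have hle : u y - u z ≤ ∫ s in Set.Icc (0:ℝ) 1, 2 * Y * ∑ i, |pd i u (y + s • (z - y))| := by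
    rw [integral_Icc_eq_integral_Ioc, ← intervalIntegral.integral_of_le zero_le_one]
    have : u y - u z = -(u z - u y) := by ring
    rw [this, ← hftc, ← intervalIntegral.integral_neg]
    refine intervalIntegral.integral_mono_on zero_le_one
      (hdc.intervalIntegrable_of_Icc zero_le_one).neg (hac.intervalIntegrable_of_Icc zero_le_one) ?_
    intro s hs
    rw [← Finset.sum_neg_distrib, Finset.mul_sum]
    refine Finset.sum_le_sum fun i _ => ?_
    refine (neg_le_abs _).trans ?_
    rw [abs_mul]
    exact mul_le_mul_of_nonneg_right (hzy i) (abs_nonneg _)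
  have hhInt : IntegrableOn (fun s : ℝ => 2 * Y * ∑ i, |pd i u (y + s • (z - y))|) (Set.Icc 0 1) :=
    hac.integrableOn_compact isCompact_Icc
  calc ENNReal.ofReal (u y) ≤ ENNReal.ofReal (u z +
        ∫ s in Set.Icc (0:ℝ) 1, 2 * Y * ∑ i, |pd i u (y + s • (z - y))|) :=
        ENNReal.ofReal_le_ofReal (by linarith)
    _ ≤ ENNReal.ofReal (u z) + ENNReal.ofReal (∫ s in Set.Icc (0:ℝ) 1,
        2 * Y * ∑ i, |pd i u (y + s • (z - y))|) := ENNReal.ofReal_add_le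
    _ = _ := by
        congr 1
        rw [ofReal_integral_eq_lintegral_ofReal hhInt (Filter.Eventually.of_forall fun s => by
          simp only [Pi.zero_apply]; positivity), ← lintegral_const_mul' _ _ ENNReal.ofReal_ne_top]
        refine setLIntegral_congr_fun measurableSet_Icc fun s hs => ?_
        have e : (1 - s) • y + s • z = y + s • (z - y) := by
          rw [smul_sub, sub_smul, one_smul]; abel
        rw [e, Set.indicator_of_mem (hm s hs), ENNReal.ofReal_mul (by positivity)]

lemma exp_mul_le_one {x : ℝ} : Real.exp (-x) * x ≤ 1 := by
  have h := Real.add_one_le_exp x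
  have hp := Real.exp_pos x
  rw [Real.exp_neg, inv_mul_le_iff₀ hp]
  linarith

lemma start_lint {n : ℕ} {Ω D A : Set (Eu n)} {u : Eu n → ℝ} {Y : ℝ} (hΩ : IsOpen Ω)
    (hu : ContDiffOn ℝ (⊤ : ℕ∞) u Ω) (hDΩ : D ⊆ Ω) (hDm : MeasurableSet D) (hAm : MeasurableSet A)
    (hA : ∀ y ∈ A, ‖y‖ ≤ Y)
    (hu0 : ∀ y ∈ A, 0 ≤ u y)
    (hseg : ∀ y ∈ A, ∀ z ∈ A, ∀ s ∈ Set.Icc (0:ℝ) 1, (1 - s) • y + s • z ∈ D) :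
    (∫⁻ y in A, ENNReal.ofReal (Real.exp (-u y))) * ∫⁻ y in A, ENNReal.ofReal (u y) ≤
      volume A * volume A + ENNReal.ofReal (2 * Y) * (ENNReal.ofReal (2 ^ n) * volume A *
        ∫⁻ y in D, ENNReal.ofReal (∑ j, |pd j u y|)) := by
  set F : Eu n → ENNReal := D.indicator (fun y => ENNReal.ofReal (∑ j, |pd j u y|)) with hF
  have hFm : Measurable F := by
    refine Measurable.indicator ?_ hDm
    refine ENNReal.measurable_ofReal.comp (Finset.measurable_fun_sum _ fun j _ => ?_)
    have : Measurable (pd j u) := measurable_fderiv_apply_const ℝ u _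
    exact measurable_norm.comp this
  rw [← lintegral_indicator hDm]
  set P : Eu n → Eu n → ENNReal := fun y z =>
    ∫⁻ s in Set.Icc (0:ℝ) 1, F ((1 - s) • y + s • z) with hP
  calc _ ≤ ∫⁻ y in A, (∫⁻ z in A, ENNReal.ofReal (Real.exp (-u z))) * ENNReal.ofReal (u y) :=
        lintegral_const_mul_le _ _
    _ ≤ ∫⁻ y in A, ∫⁻ z in A, ENNReal.ofReal (Real.exp (-u z)) * ENNReal.ofReal (u y) :=
        lintegral_mono fun y => lintegral_mul_const_le _ _
    _ ≤ ∫⁻ y in A, ∫⁻ z in A, (1 + ENNReal.ofReal (2 * Y) * P y z) := by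
        refine setLIntegral_mono' hAm fun y hy => setLIntegral_mono' hAm fun z hz => ?_
        calc _ ≤ ENNReal.ofReal (Real.exp (-u z)) *
              (ENNReal.ofReal (u z) + ENNReal.ofReal (2 * Y) * P y z) := by
              gcongr
              exact seg_bound hΩ hu hDΩ hA hseg hy hz
          _ = ENNReal.ofReal (Real.exp (-u z) * u z) +
              ENNReal.ofReal (Real.exp (-u z)) * (ENNReal.ofReal (2 * Y) * P y z) := by
              rw [mul_add, ENNReal.ofReal_mul (Real.exp_pos _).le]
          _ ≤ 1 + 1 * (ENNReal.ofReal (2 * Y) * P y z) := by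
              gcongr
              · exact ENNReal.ofReal_le_one.2 exp_mul_le_one
              · refine ENNReal.ofReal_le_one.2 (Real.exp_le_one_iff.2 ?_)
                have := hu0 z hz
                linarith
          _ = _ := by rw [one_mul]
    _ = volume A * volume A + ENNReal.ofReal (2 * Y) * ∫⁻ y in A, ∫⁻ z in A, P y z := by
        have : ∀ y, ∫⁻ z in A, (1 + ENNReal.ofReal (2 * Y) * P y z) =
            volume A + ENNReal.ofReal (2 * Y) * ∫⁻ z in A, P y z := by
          intro y
          rw [lintegral_add_left measurable_const, lintegral_const_mul' _ _ ENNReal.ofReal_ne_top]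
          simp
        simp_rw [this]
        rw [lintegral_add_left measurable_const, lintegral_const_mul' _ _ ENNReal.ofReal_ne_top]
        simp
    _ ≤ _ := by
        gcongr
        exact lint_triple hFm A

open MeasureTheory

lemma inv_low {n : ℕ} (hn : 0 < n) {G : Matrix (Fin n) (Fin n) ℝ} (hG : G.PosDef) {Λ : ℝ}
    (hΛ : 0 < Λ) (hb : ∀ i j, |G⁻¹ i j| ≤ Λ) (v : Fin n → ℝ) :
    1 / (n * Λ) * ∑ i, v i ^ 2 ≤ v ⬝ᵥ (G.mulVec v) := by
  have hn' : (0:ℝ) < n := by exact_mod_cast hn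
  have hu : IsUnit G.det := hG.det_pos.ne'.isUnit
  set s : ℝ := 1 / (n * Λ) with hs
  set w := G⁻¹.mulVec v with hw
  have hGw : G.mulVec w = v := by
    rw [hw, Matrix.mulVec_mulVec, Matrix.mul_nonsing_inv _ hu, Matrix.one_mulVec]
  have hsym : G.transpose = G := by
    have := hG.isHermitian
    rwa [Matrix.IsHermitian, Matrix.conjTranspose_eq_transpose_of_trivial] at this
  have h1 : w ⬝ᵥ (G.mulVec v) = v ⬝ᵥ v := by
    rw [Matrix.dotProduct_mulVec, ← Matrix.mulVec_transpose, hsym, hGw]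
  have h2 := hG.posSemidef.dotProduct_mulVec_nonneg (v - s • w)
  simp only [star_trivial, Matrix.mulVec_sub, Matrix.mulVec_smul, hGw, dotProduct_sub,
    sub_dotProduct, smul_dotProduct, dotProduct_smul, smul_eq_mul, h1] at h2
  have h3 : w ⬝ᵥ v ≤ n * Λ * ∑ i, v i ^ 2 := by
    have e1 : w ⬝ᵥ v ≤ ∑ i, ∑ j, Λ * (|v i| * |v j|) := by
      simp only [dotProduct, hw, Matrix.mulVec]
      refine Finset.sum_le_sum fun i _ => ?_
      rw [Finset.sum_mul]
      refine Finset.sum_le_sum fun j _ => ?_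
      refine (le_abs_self _).trans ?_
      rw [abs_mul, abs_mul]
      have := mul_le_mul_of_nonneg_right (hb i j) (mul_nonneg (abs_nonneg (v i)) (abs_nonneg (v j)))
      linarith
    have e2 : ∑ i, ∑ j, Λ * (|v i| * |v j|) = Λ * (∑ i, |v i|) ^ 2 := by
      rw [sq, Finset.sum_mul_sum, Finset.mul_sum]
      simp_rw [Finset.mul_sum]
    have e3 := mul_le_mul_of_nonneg_left (cauchy_fin v) hΛ.le
    linarith
  have h4 : v ⬝ᵥ v = ∑ i, v i ^ 2 := by
    simp only [dotProduct]
    exact Finset.sum_congr rfl fun i _ => (sq _).symm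
  rw [h4] at h2
  have h5 : s * (s * (w ⬝ᵥ v)) ≤ s * ∑ i, v i ^ 2 := by
    have hs0 : 0 < s := by positivity
    refine mul_le_mul_of_nonneg_left ?_ hs0.le
    calc s * (w ⬝ᵥ v) ≤ s * (n * Λ * ∑ i, v i ^ 2) := by gcongr
      _ = ∑ i, v i ^ 2 := by rw [hs]; field_simp
  linarith

structure Hyp (n : ℕ) (N cbar dbar τ M : ℝ) (f g : Eu n → ℝ) (c d : ℝ) : Prop where
  smf : ContDiffOn ℝ (⊤ : ℕ∞) f (Metric.ball 0 1)
  smg : ContDiffOn ℝ (⊤ : ℕ∞) g (Metric.ball 0 1)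
  pos : ∀ x ∈ Metric.ball (0 : Eu n) 1, (Hess n g x).PosDef
  c1 : c ≤ cbar
  d0 : 0 ≤ d
  d1 : d ≤ dbar
  eq : ∀ x ∈ Metric.ball (0 : Eu n) 1, ((Hess n g x)⁻¹ * Hess n f x).trace +
          d * (Hess n f x).det / (Hess n g x).det = c
  g0 : ∀ x ∈ Metric.ball (0 : Eu n) 1, 0 ≤ g x
  gN : ∀ x ∈ Metric.ball (0 : Eu n) 1, g x ≤ N
  ft : ∀ x ∈ Metric.ball (0 : Eu n) 1,
        (Hess n f x - τ • (1 : Matrix (Fin n) (Fin n) ℝ)).PosDef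
  fM : ∀ x ∈ Metric.ball (0 : Eu n) 1, ∀ k ≤ 3, ‖iteratedFDeriv ℝ k f x‖ ≤ M

section
variable {n : ℕ} {N cbar dbar τ M : ℝ} {f g : Eu n → ℝ} {c d : ℝ}

lemma Hyp.fpos (h : Hyp n N cbar dbar τ M f g c d) (hτ : 0 < τ) {x : Eu n}
    (hx : x ∈ Metric.ball (0 : Eu n) 1) : (Hess n f x).PosDef := by
  have h1 : (τ • (1 : Matrix (Fin n) (Fin n) ℝ)).PosSemidef :=
    (Matrix.PosSemidef.one).smul hτ.le
  have := (h.ft x hx).add_posSemidef h1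
  simpa using this

lemma Hyp.Hbd (h : Hyp n N cbar dbar τ M f g c d) (hτ : 0 < τ) {x : Eu n}
    (hx : x ∈ Metric.ball (0 : Eu n) 1) (i j : Fin n) : |(Hess n g x)⁻¹ i j| ≤ cbar / τ := by
  have hH := (h.pos x hx).inv.posSemidef
  refine (psd_entry_le_trace hH i j).trans ?_
  have h1 := trace_mul_nonneg' hH (h.ft x hx).posSemidef
  rw [Matrix.mul_sub, Matrix.trace_sub, Matrix.mul_smul, Matrix.mul_one, Matrix.trace_smul,
    smul_eq_mul] at h1
  have h2 := h.eq x hx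
  have h3 : 0 ≤ d * (Hess n f x).det / (Hess n g x).det :=
    div_nonneg (mul_nonneg h.d0 (h.fpos hτ hx).det_pos.le) (h.pos x hx).det_pos.le
  rw [le_div_iff₀ hτ]
  have := h.c1
  linarith

lemma Hyp.sc (hn : 0 < n) (h : Hyp n N cbar dbar τ M f g c d) (hτ : 0 < τ) (hc : 0 < cbar) :
    SC n g (1 / (n * (cbar / τ))) := by
  refine ⟨h.smg, fun x hx v => ?_⟩
  have := inv_low hn (h.pos x hx) (div_pos hc hτ) (h.Hbd hτ hx) v
  rw [EuclideanSpace.norm_sq_eq]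
  simp only [Real.norm_eq_abs, sq_abs]
  refine this.trans (le_of_eq ?_)
  simp only [dotProduct, Matrix.mulVec]
  refine Finset.sum_congr rfl fun i _ => ?_
  congr 1
  refine Finset.sum_congr rfl fun j _ => ?_
  rw [hess_pd Metric.isOpen_ball h.smg hx, pd_comm i j Metric.isOpen_ball h.smg hx, mul_comm]

lemma hess_bd {x : Eu n} (hb : ‖iteratedFDeriv ℝ 2 f x‖ ≤ M) (i j : Fin n) :
    |Hess n f x i j| ≤ M := by
  have := (iteratedFDeriv ℝ 2 f x).le_opNorm ![EuclideanSpace.single i 1, EuclideanSpace.single j 1]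
  simp [Fin.prod_univ_two] at this
  simp only [Hess, Matrix.of_apply]
  exact this.trans hb

lemma hess_pd_bd {x : Eu n} {Ω : Set (Eu n)} (hΩ : IsOpen Ω) (hf : ContDiffOn ℝ (⊤ : ℕ∞) f Ω)
    (hx : x ∈ Ω) (hb : ‖iteratedFDeriv ℝ 3 f x‖ ≤ M) (i j k : Fin n) :
    |pd k (fun x => Hess n f x i j) x| ≤ M := by
  set m : Fin 2 → Eu n := ![EuclideanSpace.single i 1, EuclideanSpace.single j 1] with hm
  have hd : DifferentiableAt ℝ (iteratedFDeriv ℝ 2 f) x :=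
    (hf.contDiffAt (hΩ.mem_nhds hx)).differentiableAt_iteratedFDeriv
      (WithTop.coe_lt_coe.2 (ENat.coe_lt_top 2))
  have h1 : HasFDerivAt (fun x => Hess n f x i j)
      ((ContinuousMultilinearMap.apply ℝ (fun _ : Fin 2 => Eu n) ℝ m).comp
        (fderiv ℝ (iteratedFDeriv ℝ 2 f) x)) x :=
    (ContinuousMultilinearMap.apply ℝ (fun _ : Fin 2 => Eu n) ℝ m).hasFDerivAt.comp x hd.hasFDerivAt
  unfold pd
  rw [h1.fderiv]
  have h2 := ((fderiv ℝ (iteratedFDeriv ℝ 2 f) x) (EuclideanSpace.single k 1)).le_opNorm m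
  have h3 := (fderiv ℝ (iteratedFDeriv ℝ 2 f) x).le_opNorm (EuclideanSpace.single k 1)
  rw [norm_fderiv_iteratedFDeriv] at h3
  simp [Fin.prod_univ_two, hm] at h2 h3
  simp only [ContinuousLinearMap.comp_apply, ContinuousMultilinearMap.apply_apply]
  exact h2.trans (h3.trans hb)

lemma Hyp.ysys (h : Hyp n N cbar dbar τ M f g c d) (hτ : 0 < τ)
    {Ω : Set (Eu n)} {φ : Eu n → Eu n} (hL : Leg n g Ω φ) :
    YSys n Ω (fun i j => pd j (fun y => φ y i)) (fun i j y => Hess n f (φ y) i j)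
      (fun i j k y => pd k (fun x => Hess n f x i j) (φ y)) τ M (cbar / τ) c d := by
  have hB : IsOpen (Metric.ball (0:Eu n) 1) := Metric.isOpen_ball
  have hmap : ∀ y ∈ Ω, φ y ∈ Metric.ball (0:Eu n) 1 := by
    intro y hy
    rw [← hL.img] at hy
    obtain ⟨x, hx, rfl⟩ := hy
    rwa [hL.inv x hx]
  have hφi : ∀ i, ContDiffOn ℝ (⊤ : ℕ∞) (fun y => φ y i) Ω := contDiffOn_euclidean.1 hL.sm
  have hHf : ∀ i j, ContDiffOn ℝ (⊤ : ℕ∞) (fun x => Hess n f x i j) (Metric.ball 0 1) := fun i j =>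
    (smooth_pd i hB (smooth_pd j hB h.smf)).congr fun x hx => hess_pd hB h.smf hx i j
  have hHe : ∀ y ∈ Ω, ∀ i j, pd j (fun y => φ y i) y = (Hess n g (φ y))⁻¹ i j := by
    intro y hy i j
    rw [← hL.der y hy]; rfl
  refine ⟨hL.op, fun i j => smooth_pd j hL.op (hφi i), fun i j => (hHf i j).comp hL.sm hmap,
    ?_, ?_, ?_, ?_, ?_, ?_, ?_, ?_, ?_⟩
  · intro y hy
    rw [hL.der y hy]
    exact (h.pos _ (hmap y hy)).inv
  · intro y hy i j k
    exact pd_comm k j hL.op (hφi i) hy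
  · intro y hy
    exact (h.ft _ (hmap y hy)).posSemidef
  · intro y hy
    exact h.fpos hτ (hmap y hy)
  · intro y hy i j
    exact hess_bd (h.fM _ (hmap y hy) 2 (by norm_num)) i j
  · intro y hy i j k
    exact hess_pd_bd hB h.smf (hmap y hy) (h.fM _ (hmap y hy) 3 le_rfl) i j k
  · intro y hy l i j
    rw [pd_comp (F := fun x => Hess n f x i j) l (smooth_diffAt hB (hHf i j) (hmap y hy))
      ((hL.sm.contDiffAt (hL.op.mem_nhds hy)).differentiableAt (by simp))]
    exact Finset.sum_congr rfl fun k _ => mul_comm _ _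
  · intro y hy i j
    rw [hHe y hy]
    exact h.Hbd hτ (hmap y hy) i j
  · intro y hy
    have h1 := h.eq _ (hmap y hy)
    rw [hL.der y hy, ← h1]
    have hsym : ∀ i j, Hess n f (φ y) i j = Hess n f (φ y) j i := by
      intro i j
      have := (h.fpos hτ (hmap y hy)).isHermitian.apply i j
      simpa using this.symm
    congr 1
    · rw [Matrix.trace]
      simp only [Matrix.diag_apply, Matrix.mul_apply]
      refine Finset.sum_congr rfl fun i _ => Finset.sum_congr rfl fun j _ => ?_
      rw [hHe y hy, hsym i j, mul_comm]
    · rw [Matrix.det_nonsing_inv, Ring.inverse_eq_inv', mul_div_assoc, div_eq_mul_inv]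
      rfl
end

open MeasureTheory

lemma det_jac {n : ℕ} {φ : Eu n → Eu n} {y : Eu n} (hφ : DifferentiableAt ℝ φ y) :
    (fderiv ℝ φ y).det = (Matrix.of fun i j => pd j (fun y => φ y i) y).det := by
  rw [ContinuousLinearMap.det, ← LinearMap.det_toMatrix (EuclideanSpace.basisFun (Fin n) ℝ).toBasis]
  congr 1
  ext i j
  rw [LinearMap.toMatrix_apply]
  have h2 : HasFDerivAt (fun y => φ y i)
      ((EuclideanSpace.proj i : Eu n →L[ℝ] ℝ).comp (fderiv ℝ φ y)) y :=
    (EuclideanSpace.proj i : Eu n →L[ℝ] ℝ).hasFDerivAt.comp y hφ.hasFDerivAt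
  rw [Matrix.of_apply, pd, h2.fderiv]
  simp

lemma exp_lower {n : ℕ} {g : Eu n → ℝ} {Ω : Set (Eu n)} {φ : Eu n → Eu n} (hL : Leg n g Ω φ)
    (K : ℝ) (hpos : ∀ y ∈ Ω, 0 < (Matrix.of fun i j => pd j (fun y => φ y i) y).det)
    {x0 : Eu n} {ρ : ℝ} (hb : Metric.ball x0 ρ ⊆ Metric.ball 0 1) :
    ENNReal.ofReal (Real.exp (-K)) * volume (Metric.ball x0 ρ) ≤
      ∫⁻ y in Gam g '' Metric.ball x0 ρ,
        ENNReal.ofReal (Real.exp (-(nld (fun i j => pd j (fun y => φ y i)) y + K))) := by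
  set A := Gam g '' Metric.ball x0 ρ with hA
  have hAo : IsOpen A := hL.open_img Metric.isOpen_ball hb
  have hAΩ : A ⊆ Ω := by
    rintro _ ⟨x, hx, rfl⟩
    exact hL.mem (hb hx)
  have him : φ '' A = Metric.ball x0 ρ := by
    rw [hA, Set.image_image]
    ext x
    constructor
    · rintro ⟨z, hz, rfl⟩
      simpa only [hL.inv z (hb hz)] using hz
    · intro hx
      exact ⟨x, hx, hL.inv x (hb hx)⟩
  have hd : ∀ y ∈ Ω, DifferentiableAt ℝ φ y := fun y hy =>
    (hL.sm.contDiffAt (hL.op.mem_nhds hy)).differentiableAt (by simp)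
  have h1 := addHaar_image_le_lintegral_abs_det_fderiv (volume : Measure (Eu n)) hAo.measurableSet
    (f := φ) (f' := fderiv ℝ φ) fun y hy => (hd y (hAΩ hy)).hasFDerivAt.hasFDerivWithinAt
  rw [him] at h1
  calc _ ≤ ENNReal.ofReal (Real.exp (-K)) * ∫⁻ y in A, ENNReal.ofReal |(fderiv ℝ φ y).det| := by
        gcongr
    _ = ∫⁻ y in A, ENNReal.ofReal (Real.exp (-K)) * ENNReal.ofReal |(fderiv ℝ φ y).det| := by
        rw [lintegral_const_mul' _ _ ENNReal.ofReal_ne_top]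
    _ = _ := by
        refine setLIntegral_congr_fun hAo.measurableSet fun y hy => ?_
        have hp := hpos y (hAΩ hy)
        simp only
        rw [det_jac (hd y (hAΩ hy)), abs_of_pos hp, ← ENNReal.ofReal_mul (Real.exp_pos _).le]
        congr 1
        rw [nld, neg_add, neg_neg, Real.exp_add, Real.exp_log hp, mul_comm]

lemma grad_int {n : ℕ} {Ω : Set (Eu n)} {u : Eu n → ℝ} {V : Fin n → Eu n → ℝ} {θ C Λ β τ : ℝ}
    (S : USys n Ω u V θ C Λ β τ) {E L Y Vb : ℝ} (hE : 0 < E) {η : Eu n → ℝ} (hcut : Cut n Ω L η)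
    (hen : ∫ y, η y * (η y * (u y ^ (0:ℝ) * ∑ j, (pd j u y) ^ 2)) ≤
        E * (1 + 0) * ∫ y, (η y ^ 2 + (∑ i, |pd i η y|) ^ 2) * u y ^ (0:ℝ))
    {D : Set (Eu n)} (hDm : MeasurableSet D) (hDY : D ⊆ Metric.closedBall 0 Y)
    (hηY : tsupport η ⊆ Metric.closedBall 0 Y) (hη1 : ∀ y ∈ D, η y = 1)
    (hVb : Vb = (volume (Metric.closedBall (0:Eu n) Y)).toReal) :
    ∫⁻ y in D, ENNReal.ofReal (∑ j, |pd j u y|) ≤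
      ENNReal.ofReal (n * Vb + E * ((1 + L ^ 2) * Vb)) := by
  have hfin : volume (Metric.closedBall (0:Eu n) Y) ≠ ⊤ := measure_closedBall_lt_top.ne
  have hVe : volume (Metric.closedBall (0:Eu n) Y) = ENNReal.ofReal Vb := by
    rw [hVb, ENNReal.ofReal_toReal hfin]
  have hVb0 : 0 ≤ Vb := by rw [hVb]; exact ENNReal.toReal_nonneg
  set h : Eu n → ℝ := fun y => η y * (η y * (u y ^ (0:ℝ) * ∑ j, (pd j u y) ^ 2)) with hh
  have hh0 : ∀ y, 0 ≤ h y := by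
    intro y
    have := hcut.nn y
    simp only [hh, Real.rpow_zero]
    positivity
  have hpc : ∀ j, ContinuousOn (pd j u) Ω := fun j => (smooth_pd j S.op S.smu).continuousOn
  have hhi : Integrable h := by
    refine int_cut S.op hcut.sm.continuous hcut.cpt hcut.supp ?_
    simp only [Real.rpow_zero, one_mul]
    exact hcut.sm.continuous.continuousOn.mul (continuousOn_finsetSum _ fun j _ => (hpc j).pow 2)
  have hR : ∫ y, (η y ^ 2 + (∑ i, |pd i η y|) ^ 2) * u y ^ (0:ℝ) ≤ (1 + L ^ 2) * Vb := by
    have e : (1 + L ^ 2) * Vb = ∫ y, (Metric.closedBall (0:Eu n) Y).indicator (fun _ => 1 + L ^ 2) y := by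
      rw [integral_indicator Metric.isClosed_closedBall.measurableSet, setIntegral_const, hVb]
      simp [Measure.real, mul_comm]
    rw [e]
    refine integral_mono_of_nonneg (Filter.Eventually.of_forall fun y => ?_) ?_
      (Filter.Eventually.of_forall fun y => ?_)
    · simp only [Pi.zero_apply, Real.rpow_zero]; positivity
    · exact (integrable_indicator_iff Metric.isClosed_closedBall.measurableSet).2
        (integrableOn_const hfin)
    · simp only [Real.rpow_zero, mul_one]
      by_cases hy : y ∈ tsupport η
      · rw [Set.indicator_of_mem (hηY hy)]
        have h1 := hcut.nn y
        have h2 := hcut.le1 y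
        have h3 := hcut.grad y
        have h4 : 0 ≤ ∑ i, |pd i η y| := Finset.sum_nonneg fun i _ => abs_nonneg _
        have h5 : η y ^ 2 ≤ 1 := by nlinarith
        have h6 : (∑ i, |pd i η y|) ^ 2 ≤ L ^ 2 := by gcongr
        linarith
      · have h1 : η =ᶠ[nhds y] 0 := notMem_tsupport_iff_eventuallyEq.1 hy
        have h2 : ∀ i, pd i η y = 0 := fun i => by
          unfold pd; rw [h1.fderiv_eq]; simp
        have h3 : η y = 0 := h1.eq_of_nhds
        simp only [h2, h3]
        simp
        exact Set.indicator_nonneg (fun _ _ => by positivity) y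
  calc ∫⁻ y in D, ENNReal.ofReal (∑ j, |pd j u y|)
      ≤ ∫⁻ y in D, (ENNReal.ofReal n + ENNReal.ofReal (h y)) := by
        refine setLIntegral_mono' hDm fun y hy => ?_
        rw [← ENNReal.ofReal_add (by positivity) (hh0 y)]
        refine ENNReal.ofReal_le_ofReal ?_
        simp only [hh, hη1 y hy, Real.rpow_zero, one_mul]
        calc ∑ j, |pd j u y| ≤ ∑ j, (1 + pd j u y ^ 2) := by
              refine Finset.sum_le_sum fun j _ => ?_
              rw [← sq_abs]
              nlinarith [sq_nonneg (|pd j u y| - 1), abs_nonneg (pd j u y)]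
          _ = _ := by simp [Finset.sum_add_distrib]
    _ = ENNReal.ofReal n * volume D + ∫⁻ y in D, ENNReal.ofReal (h y) := by
        rw [lintegral_add_left measurable_const, setLIntegral_const]
    _ ≤ ENNReal.ofReal n * ENNReal.ofReal Vb + ENNReal.ofReal (∫ y, h y) := by
        rw [ofReal_integral_eq_lintegral_ofReal hhi (Filter.Eventually.of_forall hh0), ← hVe]
        gcongr
        exact Measure.restrict_le_self
    _ ≤ _ := by
        rw [← ENNReal.ofReal_mul (by positivity), ← ENNReal.ofReal_add (by positivity)
          (integral_nonneg hh0)]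
        refine ENNReal.ofReal_le_ofReal ?_
        have := mul_le_mul_of_nonneg_left hR hE.le
        have e : E * (1 + 0) = E := by ring
        rw [e] at hen
        linarith

open MeasureTheory

set_option maxHeartbeats 1000000 in
lemma main_two (n : ℕ) (hn : 2 ≤ n) (N cbar dbar τ M : ℝ) (hN : 0 < N) (hcbar : 0 < cbar)
    (hdbar : 0 < dbar) (hτ : 0 < τ) (hM : 0 < M) :
    ∃ C > 0, ∀ (f g : Eu n → ℝ) (c d : ℝ), Hyp n N cbar dbar τ M f g c d →
      ∀ x0 ∈ Metric.ball (0 : Eu n) (1 / 2), ∀ i j : Fin n, |Hess n g x0 i j| ≤ C := by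
  have hn0 : 0 < n := by omega
  have hn' : (0:ℝ) < n := by exact_mod_cast hn0
  set Λ := cbar / τ with hΛd
  have hΛ : 0 < Λ := div_pos hcbar hτ
  set κ : ℝ := 1 / (n * Λ) with hκd
  have hκ : 0 < κ := by positivity
  obtain ⟨θ, hθ, C, hC, Λ', hΛ', β, hβ, hout⟩ := ysys_out n hn0 τ M Λ cbar dbar hτ hM hΛ hcbar hdbar
  obtain ⟨Cd, hCd, hdet⟩ := det_adj_bound n Λ
  set K : ℝ := 1 + Real.log Cd with hK
  obtain ⟨Sc, hSc, hcutE⟩ := leg_cut n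
  obtain ⟨E, hE, hen⟩ := energy n hn0 θ C Λ' β τ hθ hC hΛ' hβ hτ
  set ρ : ℝ := min (1 / 16) (κ / (16384 * N)) with hρd
  have hρ : 0 < ρ := lt_min (by norm_num) (by positivity)
  have hρ1 : ρ ≤ 1 / 16 := min_le_left _ _
  have hρ2 : 16 * N * ρ < κ / 512 := by
    have : ρ ≤ κ / (16384 * N) := min_le_right _ _
    calc 16 * N * ρ ≤ 16 * N * (κ / (16384 * N)) := by gcongr
      _ = κ / 1024 := by field_simp; norm_num
      _ < κ / 512 := by linarith
  set Vb : ℝ := (volume (Metric.closedBall (0:Eu n) (8 * N))).toReal with hVb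
  have hVb0 : 0 ≤ Vb := ENNReal.toReal_nonneg
  set L1 : ℝ := Sc * Λ / (1 / 4 - 1 / 8) with hL1
  set P : ℝ := n * Vb + E * ((1 + L1 ^ 2) * Vb) with hP
  have hP0 : 0 ≤ P := by positivity
  set v : ℝ := (volume (Metric.ball (0:Eu n) ρ)).toReal with hv
  have hvpos : 0 < v := ENNReal.toReal_pos (Metric.measure_ball_pos _ _ hρ).ne' measure_ball_lt_top.ne
  set Q : ℝ := Vb * Vb + 2 * (8 * N) * (2 ^ n * Vb * P) with hQ
  have hQ0 : 0 ≤ Q := by positivity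
  set A0 : ℝ := Q / (Real.exp (-K) * v) + 1 with hA0
  have hA0p : 0 < A0 := by positivity
  set L0 : ℝ := 4 * (Sc * Λ) / ρ with hL0
  have hL0p : 0 ≤ L0 := by positivity
  obtain ⟨X, hX⟩ := moser_iter n hn θ C Λ' β τ L0 A0 hθ hC hΛ' hβ hτ hL0p hA0p
  refine ⟨Real.exp (X - K) * Cd, by positivity, ?_⟩
  intro f g c d hyp x0 hx0 i j
  have hx0n : ‖x0‖ < 1 / 2 := by simpa using hx0
  have hS : SC n g κ := hyp.sc hn0 hτ hcbar
  obtain ⟨Ω, φ, hL⟩ := hS.leg hκ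
  have hY := hyp.ysys hτ hL
  obtain ⟨V, hVs, hV⟩ := hout Ω _ _ _ c d hyp.c1 hyp.d0 hyp.d1 hY
  set H : Fin n → Fin n → Eu n → ℝ := fun i j => pd j (fun y => φ y i) with hH
  set u : Eu n → ℝ := fun y => nld H y + K with hu
  have hsn := hY.smooth_nld
  have hpdu : ∀ y ∈ Ω, ∀ k, pd k u y = pd k (nld H) y := by
    intro y hy k
    rw [hu, pd_add k (smooth_diffAt hL.op hsn hy) (differentiableAt_const K), pd_const, add_zero]
  have hdpos : ∀ y ∈ Ω, 0 < (Matrix.of fun i j => H i j y).det := fun y hy => (hY.pos y hy).det_pos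
  have hU : USys n Ω u V θ C Λ' β τ := by
    refine ⟨hL.op, hsn.add contDiffOn_const, hVs, ?_, ?_, ?_, ?_⟩
    · intro y hy
      have h1 := (le_abs_self _).trans (hdet (Matrix.of fun i j => H i j y) (hY.Hbd y hy)).1
      have h2 := Real.log_le_log (hdpos y hy) h1
      simp only [hu, nld, hK]
      linarith
    · intro y hy
      simp only [hpdu y hy]; exact (hV y hy).1
    · intro y hy
      simp only [hpdu y hy]; exact (hV y hy).2.1
    · intro y hy
      simp only [hpdu y hy]; exact (hV y hy).2.2
  -- balls
  have hball : ∀ r ≤ 1 / 4, Metric.closedBall x0 r ⊆ Metric.ball 0 1 := by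
    intro r hr x hx
    rw [mem_closedBall_iff_norm] at hx
    have := norm_add_le (x - x0) x0
    simp at this ⊢
    linarith
  have hball' : ∀ r ≤ 1 / 4, Metric.ball x0 r ⊆ Metric.ball 0 1 := fun r hr =>
    Metric.ball_subset_closedBall.trans (hball r hr)
  have hnb : ∀ r ≤ 1 / 4, Gam g '' Metric.ball x0 r ⊆ Metric.closedBall 0 (8 * N) := by
    rintro r hr _ ⟨x, hx, rfl⟩
    rw [mem_ball_iff_norm] at hx
    rw [mem_closedBall_zero_iff]
    refine hS.norm_le hκ hyp.g0 hyp.gN ?_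
    have := norm_add_le (x - x0) x0
    simp at this
    linarith
  have hsubΩ : ∀ r ≤ 1 / 4, Gam g '' Metric.ball x0 r ⊆ Ω := by
    rintro r hr _ ⟨x, hx, rfl⟩
    exact hL.mem (hball' r hr hx)
  have hopen : ∀ r ≤ 1 / 4, IsOpen (Gam g '' Metric.ball x0 r) := fun r hr =>
    hL.open_img Metric.isOpen_ball (hball' r hr)
  have hvol : ∀ r ≤ 1 / 4, volume (Gam g '' Metric.ball x0 r) ≤ ENNReal.ofReal Vb := by
    intro r hr
    rw [hVb, ENNReal.ofReal_toReal measure_closedBall_lt_top.ne]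
    exact measure_mono (hnb r hr)
  have hHb : ∀ y ∈ Ω, ∀ i j, |pd j (fun y => φ y i) y| ≤ Λ := hY.Hbd
  have hintg : ∀ r ≤ 1 / 4, ∀ p : ℝ, IntegrableOn (fun y => u y ^ p) (Gam g '' Metric.ball x0 r) := by
    intro r hr p
    have hsub : Gam g '' Metric.closedBall x0 r ⊆ Ω := by
      rintro _ ⟨x, hx, rfl⟩
      exact hL.mem (hball r hr hx)
    have hcpt : IsCompact (Gam g '' Metric.closedBall x0 r) :=
      (isCompact_closedBall _ _).image_of_continuousOn (hL.cont.mono (hball r hr))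
    have : ContinuousOn (fun y => u y ^ p) (Gam g '' Metric.closedBall x0 r) := by
      refine ContinuousOn.rpow_const (hU.smu.continuousOn.mono hsub) fun y hy => Or.inl ?_
      exact (zero_lt_one.trans_le (hU.one y (hsub hy))).ne'
    exact (this.integrableOn_compact hcpt).mono_set (Set.image_mono Metric.ball_subset_closedBall)
  -- gradient bound
  have hgrad : ∫⁻ y in Gam g '' Metric.ball x0 (1 / 8), ENNReal.ofReal (∑ j, |pd j u y|) ≤
      ENNReal.ofReal P := by
    obtain ⟨η, hη, hη1⟩ := hcutE g Ω φ Λ hL hΛ.le hHb x0 (1 / 8) (1 / 4) (by norm_num) (by norm_num)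
      (hball _ le_rfl)
    have hη' : Cut n Ω L1 η := ⟨hη.sm, hη.cpt, hη.supp.trans (hsubΩ _ le_rfl), hη.nn, hη.le1, hη.grad⟩
    exact grad_int hU hE hη' (hen Ω u V hU L1 η hη' 0 le_rfl)
      (hopen _ (by norm_num)).measurableSet (hnb _ (by norm_num)) (hη.supp.trans (hnb _ le_rfl)) hη1 rfl
  -- the starting integral
  have hρ4 : ρ ≤ 1 / 4 := by linarith
  set A := Gam g '' Metric.ball x0 ρ with hA
  have hstart : ∫ y in A, u y ≤ A0 := by
    have hu0 : ∀ y ∈ A, 0 ≤ u y := fun y hy => zero_le_one.trans (hU.one y (hsubΩ _ hρ4 hy))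
    have h1 := start_lint (D := Gam g '' Metric.ball x0 (1 / 8)) (A := A) (Y := 8 * N) hL.op hU.smu
      (hsubΩ _ (by norm_num)) (hopen _ (by norm_num)).measurableSet (hopen _ hρ4).measurableSet
      (fun y hy => mem_closedBall_zero_iff.1 (hnb _ hρ4 hy)) hu0 (by
        rintro _ ⟨x1, hx1, rfl⟩ _ ⟨x2, hx2, rfl⟩ s hs
        exact hS.hull hκ hyp.g0 hyp.gN hρ1 hρ2 hx0n.le hx1 hx2 hs)
    have h2 := exp_lower hL K hdpos (hball' _ hρ4)
    have h3 : volume (Metric.ball x0 ρ) = ENNReal.ofReal v := by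
      rw [hv, ENNReal.ofReal_toReal measure_ball_lt_top.ne, Measure.addHaar_ball_center]
    rw [h3, ← ENNReal.ofReal_mul (Real.exp_pos _).le] at h2
    have hint1 : IntegrableOn u A := by
      have := hintg ρ hρ4 1
      simpa using this
    have h4 : ENNReal.ofReal (∫ y in A, u y) = ∫⁻ y in A, ENNReal.ofReal (u y) :=
      ofReal_integral_eq_lintegral_ofReal hint1
        ((ae_restrict_iff' (hopen _ hρ4).measurableSet).2 (Filter.Eventually.of_forall hu0))
    rw [← h4] at h1
    have h5 : ENNReal.ofReal (Real.exp (-K) * v) * ENNReal.ofReal (∫ y in A, u y) ≤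
        ENNReal.ofReal Q := by
      refine (mul_le_mul_left h2 _).trans (h1.trans ?_)
      rw [hQ, ENNReal.ofReal_add (by positivity) (by positivity), ENNReal.ofReal_mul hVb0,
        ENNReal.ofReal_mul (p := 2 * (8 * N)) (by positivity),
        ENNReal.ofReal_mul (p := 2 ^ n * Vb) (by positivity),
        ENNReal.ofReal_mul (p := 2 ^ n) (by positivity)]
      have := hvol ρ hρ4
      exact add_le_add (mul_le_mul' this this)
        (mul_le_mul' le_rfl (mul_le_mul' (mul_le_mul' le_rfl this) hgrad))
    rw [← ENNReal.ofReal_mul (by positivity), ENNReal.ofReal_le_ofReal_iff hQ0] at h5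
    have h6 : ∫ y in A, u y ≤ Q / (Real.exp (-K) * v) := by
      rw [le_div_iff₀ (by positivity)]; linarith
    linarith
  -- iteration
  set r : ℕ → ℝ := fun k => ρ / 2 * (1 + (1 / 2) ^ k) with hr
  have hr4 : ∀ k, r k ≤ 1 / 4 := by
    intro k
    have : ((1:ℝ) / 2) ^ k ≤ 1 := pow_le_one₀ (by norm_num) (by norm_num)
    simp only [hr]
    nlinarith
  have hrdiff : ∀ k, r k - r (k + 1) = ρ / 4 * (1 / 2) ^ k := by
    intro k; simp only [hr]; ring
  have hrpos : ∀ k, ρ / 2 < r k := by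
    intro k
    have : (0:ℝ) < (1 / 2) ^ k := by positivity
    simp only [hr]; nlinarith
  have hcuts : ∀ k, ∃ η, Cut n (Gam g '' Metric.ball x0 (r k)) (L0 * 4 ^ k) η ∧
      ∀ y ∈ Gam g '' Metric.ball x0 (r (k + 1)), η y = 1 := by
    intro k
    have hlt : r (k + 1) < r k := by
      have h1 := hrdiff k
      have : (0:ℝ) < ρ / 4 * (1 / 2) ^ k := by positivity
      linarith
    obtain ⟨η, hη, hη1⟩ := hcutE g Ω φ Λ hL hΛ.le hHb x0 (r (k + 1)) (r k)
      (by have := hrpos (k + 1); linarith) hlt (hball _ (hr4 k))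
    refine ⟨η, ⟨hη.sm, hη.cpt, hη.supp, hη.nn, hη.le1, fun y => (hη.grad y).trans ?_⟩, hη1⟩
    rw [hrdiff, hL0]
    have e : Sc * Λ / (ρ / 4 * (1 / 2) ^ k) = 4 * (Sc * Λ) / ρ * 2 ^ k := by
      rw [one_div, inv_pow]; field_simp
    rw [e]
    gcongr
    norm_num
  choose η hη hη1 using hcuts
  have hr0 : r 0 = ρ := by simp only [hr]; norm_num
  have hfinal := hX Ω u V hU (fun k => Gam g '' Metric.ball x0 (r k)) η
    (Gam g '' Metric.ball x0 (ρ / 2)) (fun k => (hopen _ (hr4 k)).measurableSet)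
    (fun k => hsubΩ _ (hr4 k)) hη hη1 (fun k p => hintg _ (hr4 k) p)
    (hopen _ (by linarith)) (fun k => Set.image_mono (Metric.ball_subset_ball (hrpos k).le))
    (fun k => ne_top_of_le_ne_top ENNReal.ofReal_ne_top (hvol _ (hr4 k)))
    (by simp only [hr0]; exact hstart) (Gam g x0)
    ⟨x0, Metric.mem_ball_self (by linarith), rfl⟩
  -- conclusion
  have hx01 : x0 ∈ Metric.ball (0:Eu n) 1 := hball _ le_rfl (Metric.mem_closedBall_self (by norm_num))
  have hyΩ := hL.mem hx01
  have hdp := hdpos _ hyΩ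
  have hder := hL.der _ hyΩ
  rw [hL.inv x0 hx01] at hder
  set Hm := Matrix.of fun i j => H i j (Gam g x0) with hHm
  have hHm' : Hm = (Hess n g x0)⁻¹ := hder
  have hG : Hess n g x0 = Hm⁻¹ := by
    rw [hHm', Matrix.nonsing_inv_nonsing_inv _ (hyp.pos x0 hx01).det_pos.ne'.isUnit]
  have hadj := (hdet Hm (hY.Hbd _ hyΩ)).2 i j
  rw [hG, Matrix.inv_def, Matrix.smul_apply, Ring.inverse_eq_inv', smul_eq_mul, abs_mul,
    abs_of_pos (inv_pos.2 hdp)]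
  have hinv : Hm.det⁻¹ ≤ Real.exp (X - K) := by
    rw [← Real.exp_log (inv_pos.2 hdp), Real.exp_le_exp, Real.log_inv]
    have : nld H (Gam g x0) + K ≤ X := hfinal
    simp only [nld] at this
    linarith
  exact mul_le_mul hinv hadj (abs_nonneg _) (Real.exp_pos _).le

open MeasureTheory

lemma main_one (N cbar dbar τ M : ℝ) (hN : 0 < N) (hcbar : 0 < cbar) (hdbar : 0 < dbar)
    (hτ : 0 < τ) (hM : 0 < M) :
    ∃ C > 0, ∀ (f g : Eu 1 → ℝ) (c d : ℝ), Hyp 1 N cbar dbar τ M f g c d →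
      ∀ x0 ∈ Metric.ball (0 : Eu 1) (1 / 2), ∀ i j, |Hess 1 g x0 i j| ≤ C := by
  refine ⟨(1 + dbar) * M * (8 * N) / τ, by positivity, ?_⟩
  intro f g c d h x0 hx0 i j
  have hx0' : x0 ∈ Metric.ball (0 : Eu 1) 1 := Metric.ball_subset_ball (by norm_num) hx0
  have hG : 0 < Hess 1 g x0 0 0 := by
    have := (h.pos x0 hx0').det_pos
    rwa [Matrix.det_fin_one] at this
  have hA : 0 < Hess 1 f x0 0 0 := by
    have := (h.fpos hτ hx0').det_pos
    rwa [Matrix.det_fin_one] at this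
  have hd := h.d0
  have heq : (1 + d) * Hess 1 f x0 0 0 = c * Hess 1 g x0 0 0 := by
    have := h.eq x0 hx0'
    have hu : IsUnit (Hess 1 g x0).det := (h.pos x0 hx0').det_pos.ne'.isUnit
    have hinv : (Hess 1 g x0)⁻¹ 0 0 * Hess 1 g x0 0 0 = 1 := by
      have := congrFun (congrFun (Matrix.nonsing_inv_mul _ hu) 0) 0
      simpa [Matrix.mul_apply] using this
    simp only [Matrix.trace_fin_one, Matrix.mul_apply, Matrix.det_fin_one, Fin.sum_univ_one] at this
    rw [← this, add_mul (_ * _), div_mul_cancel₀ _ hG.ne', mul_right_comm, hinv]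
    ring
  have hc : 0 < c := by
    by_contra hc
    have h1 : 0 < (1 + d) * Hess 1 f x0 0 0 := by positivity
    nlinarith
  have h' : Hyp 1 N c dbar τ M f g c d :=
    ⟨h.smf, h.smg, h.pos, le_rfl, h.d0, h.d1, h.eq, h.g0, h.gN, h.ft, h.fM⟩
  have hS := Hyp.sc (by norm_num) h' hτ hc
  have hκ : 1 / (((1:ℕ):ℝ) * (c / τ)) = τ / c := by
    simp
  rw [hκ] at hS
  set e : Eu 1 := EuclideanSpace.single 0 (1 / 2) with he
  have hen : ‖e‖ = 1 / 2 := by rw [he, EuclideanSpace.norm_single]; norm_num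
  have hz : (0 : Eu 1) ∈ Metric.ball (0 : Eu 1) 1 := by simp
  have hp : e ∈ Metric.ball (0 : Eu 1) 1 := by rw [mem_ball_zero_iff, hen]; norm_num
  have hm : -e ∈ Metric.ball (0 : Eu 1) 1 := by rw [mem_ball_zero_iff, norm_neg, hen]; norm_num
  have h1 := hS.conv hp hz
  have h2 := hS.conv hm hz
  rw [sub_zero, hen] at h1
  rw [sub_zero, norm_neg, hen, inner_neg_left] at h2
  have h3 := h.g0 0 hz
  have h4 := h.gN e hp
  have h5 := h.gN (-e) hm
  have h6 : τ / c ≤ 8 * N := by linarith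
  rw [div_le_iff₀ hc] at h6
  have hA2 : Hess 1 f x0 0 0 ≤ M := (le_abs_self _).trans (hess_bd (h.fM x0 hx0' 2 (by norm_num)) 0 0)
  have hd1 := h.d1
  rw [Subsingleton.elim i 0, Subsingleton.elim j 0, abs_of_pos hG, le_div_iff₀ hτ]
  calc Hess 1 g x0 0 0 * τ ≤ Hess 1 g x0 0 0 * (8 * N * c) := by gcongr
    _ = (1 + d) * Hess 1 f x0 0 0 * (8 * N) := by rw [heq]; ring
    _ ≤ (1 + dbar) * M * (8 * N) := by gcongr

/-- Proposition 5.2: interior `C²` estimate. Let `B` be the open unit ball in `ℝⁿ`. For every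
`N, c̄, d̄, τ, M > 0` and `α ∈ (0,1)` there is `C > 0` such that: if `f, g : B → ℝ` are smooth
convex functions, `D²g > 0` on `B`, satisfying `tr((D²g)⁻¹ D²f) + d·det(D²f)/det(D²g) = c` on
`B` with constants `0 ≤ c ≤ c̄`, `0 ≤ d ≤ d̄`, if `inf_B g = g(0) = 0`, `sup_B |g| ≤ N`,
`D²f > τ·Id` on `B`, and `‖f‖_{C^{3,α}(B)} ≤ M`, then `sup_{(1/2)B} |∂_i∂_j g| ≤ C`. -/
theorem statement13 (n : ℕ) (N cbar dbar τ α M : ℝ)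
    (hN : 0 < N) (hcbar : 0 < cbar) (hdbar : 0 < dbar) (hτ : 0 < τ)
    (hα : α ∈ Set.Ioo (0 : ℝ) 1) (hM : 0 < M) :
    ∃ C > 0, ∀ (f g : EuclideanSpace ℝ (Fin n) → ℝ) (c d : ℝ),
      ContDiffOn ℝ (⊤ : ℕ∞) f (Metric.ball 0 1) →
      ContDiffOn ℝ (⊤ : ℕ∞) g (Metric.ball 0 1) →
      ConvexOn ℝ (Metric.ball 0 1) f →
      ConvexOn ℝ (Metric.ball 0 1) g →
      (∀ x ∈ Metric.ball (0 : EuclideanSpace ℝ (Fin n)) 1, (Hess n g x).PosDef) →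
      0 ≤ c → c ≤ cbar → 0 ≤ d → d ≤ dbar →
      (∀ x ∈ Metric.ball (0 : EuclideanSpace ℝ (Fin n)) 1,
        ((Hess n g x)⁻¹ * Hess n f x).trace +
          d * (Hess n f x).det / (Hess n g x).det = c) →
      g 0 = 0 →
      (∀ x ∈ Metric.ball (0 : EuclideanSpace ℝ (Fin n)) 1, 0 ≤ g x) →
      (∀ x ∈ Metric.ball (0 : EuclideanSpace ℝ (Fin n)) 1, |g x| ≤ N) →
      (∀ x ∈ Metric.ball (0 : EuclideanSpace ℝ (Fin n)) 1,
        (Hess n f x - τ • (1 : Matrix (Fin n) (Fin n) ℝ)).PosDef) →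
      (∀ x ∈ Metric.ball (0 : EuclideanSpace ℝ (Fin n)) 1, ∀ k ≤ 3,
        ‖iteratedFDeriv ℝ k f x‖ ≤ M) →
      (∀ x ∈ Metric.ball (0 : EuclideanSpace ℝ (Fin n)) 1,
        ∀ y ∈ Metric.ball (0 : EuclideanSpace ℝ (Fin n)) 1,
        ‖iteratedFDeriv ℝ 3 f x - iteratedFDeriv ℝ 3 f y‖ ≤ M * ‖x - y‖ ^ α) →
      ∀ x ∈ Metric.ball (0 : EuclideanSpace ℝ (Fin n)) (1 / 2), ∀ i j : Fin n,
        |Hess n g x i j| ≤ C := by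
  have key : ∃ C > 0, ∀ (f g : Eu n → ℝ) (c d : ℝ), Hyp n N cbar dbar τ M f g c d →
      ∀ x0 ∈ Metric.ball (0 : Eu n) (1 / 2), ∀ i j, |Hess n g x0 i j| ≤ C := by
    rcases n with _ | _ | n
    · exact ⟨1, one_pos, fun _ _ _ _ _ _ _ i => i.elim0⟩
    · exact main_one N cbar dbar τ M hN hcbar hdbar hτ hM
    · exact main_two (n + 2) (by omega) N cbar dbar τ M hN hcbar hdbar hτ hM
  obtain ⟨C, hC, hk⟩ := key
  refine ⟨C, hC, ?_⟩
  intro f g c d smf smg _ _ pos _ c1 d0 d1 heq _ g0 gN ft fM _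
  exact hk f g c d ⟨smf, smg, pos, c1, d0, d1, heq, g0,
    fun x hx => (le_abs_self _).trans (gN x hx), ft, fM⟩
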